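/- arXiv:2503.00685 — 2 statements merged into one kernel-verified Lean document; each statement's English description precedes it below -/
import Mathlib

section
/- For odd prime power q, the number of invertible symmetric k-by-k matrices over F_q equals q^{k(k+1)/2} * product over odd i with 1 <= i <= k of (1 - q^{-i}). -/
namespace SymCount

open Matrix

variable {F : Type*} [Field F]

/-- The bordered symmetric matrix. -/
def bord {n : Type} (a : F) (v : n → F) (B : Matrix n n F) : Matrix (Unit ⊕ n) (Unit ⊕ n) F :=
  fromBlocks (of fun _ _ => a) (replicateRow Unit v) (replicateCol Unit v) B

/-- Splitting a symmetric matrix into corner, border and remaining block. -/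
def splitEquiv {n : Type} (p : Matrix (Unit ⊕ n) (Unit ⊕ n) F → Prop) :
    {B : Matrix (Unit ⊕ n) (Unit ⊕ n) F // Bᵀ = B ∧ p B} ≃
      Σ x : F × (n → F), {D : Matrix n n F // Dᵀ = D ∧ p (bord x.1 x.2 D)} where
  toFun B := ⟨(B.1 (Sum.inl ()) (Sum.inl ()), fun i => B.1 (Sum.inl ()) (Sum.inr i)),
    B.1.toBlocks₂₂, by
      ext i j
      exact congrFun (congrFun B.2.1 (Sum.inr i)) (Sum.inr j), by
      have h : bord (B.1 (Sum.inl ()) (Sum.inl ())) (fun i => B.1 (Sum.inl ()) (Sum.inr i))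
          B.1.toBlocks₂₂ = B.1 := by
        ext i j
        rcases i with i | i <;> rcases j with j | j
        · rfl
        · rfl
        · exact congrFun (congrFun B.2.1 (Sum.inr i)) (Sum.inl j)
        · rfl
      simp only [h]
      exact B.2.2⟩
  invFun x := ⟨bord x.1.1 x.1.2 x.2.1, by
      ext i j
      rcases i with i | i <;> rcases j with j | j
      · rfl
      · rfl
      · rfl
      · exact congrFun (congrFun x.2.2.1 i) j, x.2.2.2⟩
  left_inv B := by
    apply Subtype.ext
    ext i j
    rcases i with i | i <;> rcases j with j | j
    · rfl
    · rfl
    · exact congrFun (congrFun B.2.1 (Sum.inr i)) (Sum.inl j)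
    · rfl
  right_inv x := by
    rcases x with ⟨⟨a, v⟩, D, h1, h2⟩
    rfl

/-- Number of invertible symmetric matrices. -/
noncomputable def N (F : Type*) [Field F] (n : Type) [Fintype n] [DecidableEq n] : ℕ :=
  Nat.card {M : Matrix n n F // Mᵀ = M ∧ IsUnit M}

/-- Number of invertible completions. -/
noncomputable def C {n : Type} [Fintype n] [DecidableEq n] (a : F) (v : n → F) : ℕ :=
  Nat.card {D : Matrix n n F // Dᵀ = D ∧ IsUnit (bord a v D)}

variable {n : Type} [Fintype n] [DecidableEq n]

lemma N_congr {m : Type} [Fintype m] [DecidableEq m] (e : n ≃ m) : N F n = N F m := by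
  refine Nat.card_congr (Equiv.subtypeEquiv (Matrix.reindex e e) fun M => ?_)
  rw [Matrix.reindex_apply, isUnit_submatrix_equiv, transpose_submatrix]
  refine and_congr_left fun _ => ⟨fun h => by rw [h], fun h => ?_⟩
  exact (Matrix.reindex e e).injective h

lemma N_split [Fintype F] : N F (Unit ⊕ n) = ∑ x : F × (n → F), C x.1 x.2 := by
  classical
  rw [N, Nat.card_congr (splitEquiv (fun M => IsUnit M)), Nat.card_sigma]
  rfl

lemma C_ne {a : F} (ha : a ≠ 0) (v : n → F) : C a v = N F n := by
  have hs : (a⁻¹ • vecMulVec v v)ᵀ = a⁻¹ • vecMulVec v v := by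
    ext i j
    simp [vecMulVec_apply, mul_comm]
  refine Nat.card_congr (Equiv.subtypeEquiv (Equiv.subRight (a⁻¹ • vecMulVec v v)) fun B => ?_)
  rw [Equiv.subRight_apply, transpose_sub, hs, sub_left_inj]
  refine and_congr_right fun _ => ?_
  letI : Invertible (of fun _ _ => a : Matrix Unit Unit F) :=
    ⟨of fun _ _ => a⁻¹, by ext; simp [mul_apply, ha], by ext; simp [mul_apply, ha]⟩
  rw [bord, isUnit_fromBlocks_iff_of_invertible₁₁]
  have : replicateCol Unit v * ⅟(of fun _ _ => a : Matrix Unit Unit F) * replicateRow Unit v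
      = a⁻¹ • vecMulVec v v := by
    change replicateCol Unit v * (of fun _ _ => a⁻¹ : Matrix Unit Unit F) * replicateRow Unit v = _
    ext i j
    simp [mul_apply, vecMulVec_apply]
    ring
  rw [this]

lemma C_zero : C (0 : F) (0 : n → F) = 0 := by
  rw [C, Nat.card_eq_zero]
  left
  refine ⟨fun ⟨D, _, h⟩ => ?_⟩
  rw [isUnit_iff_isUnit_det, det_eq_zero_of_row_eq_zero (Sum.inl ())] at h
  · simp at h
  · intro j
    rcases j with j | j <;> simp [bord]

lemma C_le [Finite F] (P : Matrix n n F) (hP : IsUnit P) (v : n → F) :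
    C 0 v ≤ C 0 (P *ᵥ v) := by
  have key : ∀ D : Matrix n n F, bord 0 (P *ᵥ v) (P * D * Pᵀ) =
      fromBlocks (1 : Matrix Unit Unit F) 0 0 P * bord 0 v D *
        (fromBlocks (1 : Matrix Unit Unit F) 0 0 P)ᵀ := by
    intro D
    simp only [bord, fromBlocks_multiply, fromBlocks_transpose]
    congr 1
    · ext; simp
    · ext; simp [mul_apply, mulVec, dotProduct, mul_comm]
    · ext; simp [mul_apply, mulVec, dotProduct]
    · simp
  have hQ : IsUnit (fromBlocks (1 : Matrix Unit Unit F) 0 0 P) := by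
    rw [isUnit_fromBlocks_zero₂₁]
    exact ⟨isUnit_one, hP⟩
  refine Nat.card_le_card_of_injective
    (fun D : {D : Matrix n n F // Dᵀ = D ∧ IsUnit (bord 0 v D)} =>
      (⟨P * D.1 * Pᵀ, by
        rw [transpose_mul, transpose_mul, transpose_transpose, D.2.1, Matrix.mul_assoc], by
        rw [key]
        exact (hQ.mul D.2.2).mul ((isUnit_transpose _).2 hQ)⟩ :
      {D : Matrix n n F // Dᵀ = D ∧ IsUnit (bord 0 (P *ᵥ v) D)})) ?_
  intro D E h
  have h := congrArg Subtype.val h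
  apply Subtype.ext
  exact hP.mul_left_cancel (((isUnit_transpose _).2 hP).mul_right_cancel h)

lemma exists_mat {v w : n → F} (hv : v ≠ 0) (hw : w ≠ 0) :
    ∃ P : Matrix n n F, IsUnit P ∧ P *ᵥ v = w := by
  obtain ⟨g, hg⟩ := Submodule.exists_linearEquiv_restrict_eq
    ((LinearEquiv.toSpanNonzeroSingleton F _ v hv).symm ≪≫ₗ
      LinearEquiv.toSpanNonzeroSingleton F _ w hw)
  have h := hg (LinearEquiv.toSpanNonzeroSingleton F _ v hv 1)
  rw [LinearEquiv.trans_apply, LinearEquiv.symm_apply_apply] at h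
  simp only [LinearEquiv.toSpanNonzeroSingleton_one] at h
  refine ⟨LinearMap.toMatrix' g.toLinearMap, ?_, ?_⟩
  · rw [← mulVec_injective_iff_isUnit]
    intro x y hxy
    simp only [LinearMap.toMatrix'_mulVec] at hxy
    exact g.injective hxy
  · rw [LinearMap.toMatrix'_mulVec]
    exact h.symm

lemma C_const [Finite F] {v w : n → F} (hv : v ≠ 0) (hw : w ≠ 0) : C 0 v = C 0 w := by
  apply le_antisymm
  · obtain ⟨P, hP, rfl⟩ := exists_mat hv hw
    exact C_le P hP v
  · obtain ⟨P, hP, rfl⟩ := exists_mat hw hv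
    exact C_le P hP w

/-- first basis vector -/
def e1 : Unit ⊕ n → F := Sum.elim 1 0

lemma bord_mulVec {n : Type} [Fintype n] (a : F) (v : n → F) (B : Matrix n n F) (x : F) (y : n → F) :
    bord a v B *ᵥ (Sum.elim (fun _ => x) y) =
      Sum.elim (fun _ => a * x + v ⬝ᵥ y) (x • v + B *ᵥ y) := by
  rw [bord, fromBlocks_mulVec]
  ext i
  rcases i with i | i
  · simp [mulVec, dotProduct]
  · simp [mulVec, dotProduct, mul_comm]

lemma unit_iff (b : F) (c : n → F) (D : Matrix n n F) :
    IsUnit (bord 0 e1 (bord b c D)) ↔ IsUnit D := by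
  have ker : ∀ (m : Type) [Fintype m] [DecidableEq m] (M : Matrix m m F),
      IsUnit M ↔ ∀ x, M *ᵥ x = 0 → x = 0 := by
    intro m _ _ M
    rw [← mulVec_injective_iff_isUnit]
    exact injective_iff_map_eq_zero M.mulVecLin
  have form : ∀ (x y : F) (z : n → F),
      bord 0 e1 (bord b c D) *ᵥ
        (Sum.elim (fun _ => x) (Sum.elim (fun _ => y) z) : Unit ⊕ (Unit ⊕ n) → F) =
      Sum.elim (fun _ => y) (Sum.elim (fun _ => x + (b * y + c ⬝ᵥ z)) (y • c + D *ᵥ z)) := by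
    intro x y z
    rw [bord_mulVec, bord_mulVec]
    ext i
    rcases i with i | i | i <;> simp [e1, dotProduct]
  rw [ker, ker]
  constructor
  · intro h z hz
    have := h (Sum.elim (fun _ => -(c ⬝ᵥ z)) (Sum.elim (fun _ => 0) z)) (by
      rw [form]
      ext i
      rcases i with i | i | i <;> simp [hz])
    ext i
    exact congrFun this (Sum.inr (Sum.inr i))
  · intro h u hu
    have hu' : u = Sum.elim (fun _ => u (Sum.inl ())) (Sum.elim (fun _ => u (Sum.inr (Sum.inl ())))
        (fun i => u (Sum.inr (Sum.inr i)))) := by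
      ext i
      rcases i with i | i | i <;> rfl
    rw [hu', form] at hu
    have h1 : u (Sum.inr (Sum.inl ())) = 0 := congrFun hu (Sum.inl ())
    have h2 : (fun i => u (Sum.inr (Sum.inr i))) = 0 := by
      apply h
      ext i
      have := congrFun hu (Sum.inr (Sum.inr i))
      simpa [h1] using this
    have h3 := congrFun hu (Sum.inr (Sum.inl ()))
    rw [h2] at h3
    simp [h1] at h3
    ext i
    rcases i with i | i | i
    · exact h3
    · exact h1
    · exact congrFun h2 i

lemma C_e1 [Fintype F] : C 0 (e1 : Unit ⊕ n → F) =
    Fintype.card F ^ (Fintype.card n + 1) * N F n := by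
  classical
  rw [C, Nat.card_congr (splitEquiv (fun M => IsUnit (bord 0 e1 M))), Nat.card_sigma]
  simp only [unit_iff]
  change ∑ x : F × (n → F), N F n = _
  simp [pow_succ']

lemma e1_ne : (e1 : Unit ⊕ n → F) ≠ 0 := fun h => by
  have := congrFun h (Sum.inl ())
  simp [e1] at this

lemma sum_split [Fintype F] (X : ℕ) (hX : ∀ v : n → F, v ≠ 0 → C 0 v = X) :
    N F (Unit ⊕ n) = (Fintype.card F - 1) * (Fintype.card F ^ Fintype.card n * N F n) +
      (Fintype.card F ^ Fintype.card n - 1) * X := by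
  classical
  rw [N_split, Fintype.sum_prod_type, ← Finset.add_sum_erase _ _ (Finset.mem_univ (0 : F)),
    ← Finset.add_sum_erase _ _ (Finset.mem_univ (0 : n → F)), C_zero, zero_add, add_comm]
  congr 1
  · rw [Finset.sum_congr rfl (g := fun _ => Fintype.card F ^ Fintype.card n * N F n)]
    · simp [Finset.card_erase_of_mem]
    · intro a ha
      rw [Finset.sum_congr rfl (fun v _ => C_ne (Finset.ne_of_mem_erase ha) v)]
      simp
  · rw [Finset.sum_congr rfl (fun v hv => hX v (Finset.ne_of_mem_erase hv))]
    simp [Finset.card_erase_of_mem]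

def finE (k : ℕ) : Fin (k + 1) ≃ Unit ⊕ Fin k :=
  (finSumFinEquiv.symm.trans (Equiv.sumComm _ _)).trans
    (Equiv.sumCongr (Equiv.ofUnique _ _) (Equiv.refl _))

lemma N_zero : N F (Fin 0) = 1 := by
  rw [N, Nat.card_eq_one_iff_unique]
  exact ⟨⟨fun a b => Subtype.ext (Subsingleton.elim _ _)⟩,
    ⟨1, by simp, isUnit_one⟩⟩

lemma N_one [Fintype F] : N F (Fin 1) = Fintype.card F - 1 := by
  rw [N_congr (finE 0), sum_split 0, N_zero]
  · simp
  · intro v hv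
    exact absurd (Subsingleton.elim _ _) hv

lemma N_rec [Fintype F] (k : ℕ) : N F (Fin (k + 2)) =
    (Fintype.card F - 1) * (Fintype.card F ^ (k + 1) * N F (Fin (k + 1))) +
      (Fintype.card F ^ (k + 1) - 1) * (Fintype.card F ^ (k + 1) * N F (Fin k)) := by
  rw [N_congr ((finE (k + 1)).trans (Equiv.sumCongr (Equiv.refl _) (finE k))),
    sum_split _ (fun v hv => (C_const hv e1_ne).trans C_e1), N_congr (finE k)]
  simp [add_comm]

/-- The right-hand side. -/
noncomputable def R (q : ℚ) (k : ℕ) : ℚ :=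
  q ^ (k * (k + 1) / 2) * ∏ i ∈ (Finset.Icc 1 k).filter (fun i => Odd i), (1 - 1 / q ^ i)

lemma R_succ (q : ℚ) (k : ℕ) :
    R q (k + 1) = q ^ (k + 1) * R q k * (if Odd (k + 1) then (1 - 1 / q ^ (k + 1)) else 1) := by
  have h : (k + 1) * (k + 1 + 1) / 2 = (k + 1) + k * (k + 1) / 2 := by
    rw [show (k + 1) * (k + 1 + 1) = k * (k + 1) + (k + 1) * 2 by ring,
      Nat.add_mul_div_right _ _ (by norm_num), add_comm]
  rw [R, R, h, Finset.prod_filter, Finset.prod_filter,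
    Finset.prod_Icc_succ_top (by omega), pow_add]
  ring

lemma R_rec (q : ℚ) (hq : q ≠ 0) (k : ℕ) : R q (k + 2) =
    (q - 1) * (q ^ (k + 1) * R q (k + 1)) + (q ^ (k + 1) - 1) * (q ^ (k + 1) * R q k) := by
  rw [R_succ q (k + 1), R_succ q k]
  rcases Nat.even_or_odd k with h | h
  · have h1 : Odd (k + 1) := h.add_one
    have h2 : ¬ Odd (k + 1 + 1) := by
      rw [Nat.not_odd_iff_even]; exact h1.add_one
    rw [if_pos h1, if_neg h2]
    field_simp
    ring
  · have h1 : ¬ Odd (k + 1) := by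
      rw [Nat.not_odd_iff_even]; exact h.add_one
    have h2 : Odd (k + 1 + 1) := (Nat.not_odd_iff_even.1 h1).add_one
    rw [if_neg h1, if_pos h2]
    field_simp
    ring

lemma main [Fintype F] (k : ℕ) : (N F (Fin k) : ℚ) = R (Fintype.card F) k := by
  have hpos : 1 ≤ Fintype.card F := Fintype.card_pos
  have hq : (Fintype.card F : ℚ) ≠ 0 := by positivity
  induction k using Nat.twoStepInduction with
  | zero => simp [N_zero, R]
  | one =>
    rw [N_one, R_succ, Nat.cast_sub hpos]
    simp [R]
    field_simp
  | more k h1 h2 =>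
    rw [N_rec, R_rec _ hq, ← h1, ← h2]
    push_cast [Nat.cast_sub hpos, Nat.cast_sub (Nat.one_le_pow (k + 1) _ hpos)]
    ring

end SymCount

/-- MacWilliams' count: for an odd prime power `q` (realized as the cardinality of a finite
field `F`), the number of invertible symmetric `k × k` matrices over `F` equals
`q^(k(k+1)/2) * ∏_{1 ≤ i ≤ k, i odd} (1 - q⁻ⁱ)`. -/
theorem card_invertible_symmetric_matrices (q k : ℕ) (F : Type*) [Field F] [Fintype F]
    (hF : Fintype.card F = q) (hq : Odd q) :
    (Nat.card {M : Matrix (Fin k) (Fin k) F // IsUnit M ∧ M.transpose = M} : ℚ) =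
      (q : ℚ) ^ (k * (k + 1) / 2) *
        ∏ i ∈ (Finset.Icc 1 k).filter (fun i => Odd i), (1 - 1 / (q : ℚ) ^ i) := by
  subst hF
  have h := SymCount.main (F := F) k
  rw [SymCount.N] at h
  simp only [and_comm (a := IsUnit _)]
  exact h
end

section
/- For q an odd prime power, the sum of the degrees of the irreducible complex characters of GL_k(F_q) equals the number of symmetric matrices in GL_k(F_q). -/
namespace GowAux
open Matrix

/-- upper unitriangular -/
def UT {F : Type} [Field F] {j : ℕ} (u : Matrix (Fin j) (Fin j) F) : Prop :=
  (∀ i, u i i = 1) ∧ ∀ i l, l < i → u i l = 0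

/-- sum of the superdiagonal entries -/
def sd {F : Type} [Field F] {j : ℕ} : Matrix (Fin j) (Fin j) F →ₗ[F] F where
  toFun u := ∑ i : Fin j, ∑ l : Fin j, if (i : ℕ) + 1 = l then u i l else 0
  map_add' x y := by
    simp only [← Finset.sum_add_distrib, Matrix.add_apply]
    refine Finset.sum_congr rfl fun i _ => Finset.sum_congr rfl fun l _ => ?_
    split_ifs <;> simp
  map_smul' c x := by
    simp [Finset.mul_sum]

/-- strictly upper part -/
def up {F : Type} [Field F] {j : ℕ} : Matrix (Fin j) (Fin j) F →ₗ[F] Matrix (Fin j) (Fin j) F where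
  toFun u := Matrix.of fun i l => if i < l then u i l else 0
  map_add' x y := by
    ext i l; simp only [Matrix.add_apply, Matrix.of_apply]; split_ifs <;> simp
  map_smul' c x := by
    ext i l; simp

section
variable {F : Type} [Field F] {j : ℕ}

lemma sd_apply (u : Matrix (Fin j) (Fin j) F) :
    sd u = ∑ i : Fin j, ∑ l : Fin j, if (i : ℕ) + 1 = l then u i l else 0 := rfl

lemma sd_one : sd (1 : Matrix (Fin j) (Fin j) F) = 0 := by
  rw [sd_apply]
  refine Finset.sum_eq_zero fun i _ => Finset.sum_eq_zero fun l _ => ?_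
  split_ifs with h
  · rw [Matrix.one_apply_ne]; rintro rfl; omega
  · rfl

lemma sd_up (u : Matrix (Fin j) (Fin j) F) : sd (up u) = sd u := by
  rw [sd_apply, sd_apply]
  refine Finset.sum_congr rfl fun i _ => Finset.sum_congr rfl fun l _ => ?_
  split_ifs with h
  · have : i < l := by rw [Fin.lt_def]; omega
    simp [up, this]
  · rfl

lemma UT_one_add_up (u : Matrix (Fin j) (Fin j) F) : UT (1 + up u) := by
  constructor
  · intro i; simp [up]
  · intro i l h
    simp [up, h.not_gt, Matrix.one_apply_ne h.ne']

lemma sd_single (i l : Fin j) : sd (Matrix.single i l (1 : F)) = if (i : ℕ) + 1 = l then 1 else 0 := by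
  rw [sd_apply, Finset.sum_eq_single i, Finset.sum_eq_single l]
  · simp
  · intro b _ hb; simp [Matrix.single_apply_of_ne, hb.symm]
  · simp
  · intro b _ hb
    refine Finset.sum_eq_zero fun c _ => ?_
    simp [Matrix.single_apply_of_ne, hb.symm]
  · simp

lemma up_single (i l : Fin j) (h : i < l) : up (Matrix.single i l (1 : F)) = Matrix.single i l 1 := by
  ext a b
  simp only [up, LinearMap.coe_mk, AddHom.coe_mk, Matrix.of_apply]
  split_ifs with hh
  · rfl
  · rw [Matrix.single_apply_of_ne]; rintro ⟨rfl, rfl⟩; exact hh h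

/-- Hessenberg -/
def Hess (H : Matrix (Fin j) (Fin j) F) : Prop :=
  ∀ i l : Fin j, i < l → H l i = if (i : ℕ) + 1 = l then 1 else 0

lemma Hess.pow_col [NeZero j] {H : Matrix (Fin j) (Fin j) F} (hH : Hess H) (a : ℕ) :
    (∀ i : Fin j, (i : ℕ) = a → (H ^ a) i 0 = 1) ∧ ∀ i : Fin j, a < i → (H ^ a) i 0 = 0 := by
  induction a with
  | zero =>
    constructor
    · intro i hi
      have : i = 0 := by ext; simpa using hi
      simp [this]
    · intro i hi
      rw [pow_zero, Matrix.one_apply_ne]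
      rintro rfl; simp at hi
  | succ a ih =>
    constructor
    · intro i hi
      rw [pow_succ', Matrix.mul_apply, Finset.sum_eq_single (⟨a, by omega⟩ : Fin j)]
      · rw [ih.1 _ rfl, hH _ _ (by rw [Fin.lt_def]; simp; omega)]
        simp [hi]
      · intro b _ hb
        rcases lt_trichotomy (b : ℕ) a with h | h | h
        · rw [hH _ _ (by rw [Fin.lt_def]; omega), if_neg (by omega), zero_mul]
        · exact absurd (Fin.ext h) hb
        · rw [ih.2 _ h, mul_zero]
      · simp
    · intro i hi
      rw [pow_succ', Matrix.mul_apply]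
      refine Finset.sum_eq_zero fun b _ => ?_
      rcases lt_or_ge a (b : ℕ) with h | h
      · rw [ih.2 _ h, mul_zero]
      · rw [hH _ _ (by rw [Fin.lt_def]; omega), if_neg (by omega), zero_mul]

lemma Hess.UT [NeZero j] {H : Matrix (Fin j) (Fin j) F} (hH : Hess H) :
    UT (Matrix.of fun i a : Fin j => (H ^ (a : ℕ)) i 0) :=
  ⟨fun i => (hH.pow_col i).1 i rfl, fun i l h => (hH.pow_col l).2 i h⟩

lemma exists_hess (g : Matrix (Fin j) (Fin j) F)
    (h : ∀ x y : Matrix (Fin j) (Fin j) F, (up y)ᵀ * g = g * up x → sd y = sd x) :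
    ∃ T1 T2 : Matrix (Fin j) (Fin j) F, Hess T1 ∧ Hess T2 ∧ g * T1 = T2ᵀ * g := by
  let L : (Matrix (Fin j) (Fin j) F × Matrix (Fin j) (Fin j) F) →ₗ[F] Matrix (Fin j) (Fin j) F :=
    { toFun := fun p => (up p.1)ᵀ * g - g * up p.2
      map_add' := by
        intro p p'
        simp only [Prod.fst_add, Prod.snd_add, map_add, Matrix.transpose_add, add_mul, mul_add]
        abel
      map_smul' := by
        intro c p
        simp [smul_sub] }
  let ℓ : (Matrix (Fin j) (Fin j) F × Matrix (Fin j) (Fin j) F) →ₗ[F] F :=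
    sd ∘ₗ LinearMap.fst F _ _ - sd ∘ₗ LinearMap.snd F _ _
  have hℓ : ℓ ∈ (LinearMap.ker L).dualAnnihilator := by
    rw [Submodule.mem_dualAnnihilator]
    rintro ⟨y, x⟩ hyx
    have : (up y)ᵀ * g - g * up x = 0 := hyx
    have := h x y (sub_eq_zero.1 this)
    simp [ℓ, this]
  rw [← LinearMap.range_dualMap_eq_dualAnnihilator_ker] at hℓ
  obtain ⟨φ, hφ⟩ := hℓ
  have hφ' : ∀ y x, φ ((up y)ᵀ * g - g * up x) = sd y - sd x := by
    intro y x
    have := LinearMap.congr_fun hφ (y, x)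
    simpa [ℓ, L] using this
  let Z : Matrix (Fin j) (Fin j) F := Matrix.of fun i l => φ (Matrix.single l i 1)
  have hZ : ∀ M, φ M = (Z * M).trace := by
    intro M
    conv_lhs => rw [Matrix.matrix_eq_sum_single M]
    simp only [map_sum, Matrix.trace, Matrix.diag, Matrix.mul_apply]
    rw [Finset.sum_comm]
    refine Finset.sum_congr rfl fun a _ => Finset.sum_congr rfl fun b _ => ?_
    have : Matrix.single b a (M b a) = M b a • Matrix.single b a (1 : F) := by simp
    rw [this, map_smul]; simp [Z, mul_comm]
  refine ⟨Z * g, (g * Z)ᵀ, ?_, ?_, ?_⟩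
  · intro i l hil
    have := hφ' 0 (Matrix.single i l 1)
    rw [up_single _ _ hil, sd_single, hZ, map_zero, map_zero] at this
    simp only [Matrix.transpose_zero, zero_mul, zero_sub, mul_neg, Matrix.trace_neg, neg_inj] at this
    rw [← this, ← mul_assoc, Matrix.trace_mul_single]; simp
  · intro i l hil
    have := hφ' (Matrix.single i l 1) 0
    rw [up_single _ _ hil, sd_single, hZ, map_zero, map_zero] at this
    simp only [mul_zero, sub_zero] at this
    rw [← this, ← mul_assoc, Matrix.trace_mul_comm, ← mul_assoc, Matrix.transpose_single,
      Matrix.trace_mul_single]; simp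
  · simp [mul_assoc]

theorem gk_aux {M : Type*} [AddCommGroup M] [Module ℂ M] (ψ : AddChar F ℂ) (hψ : ψ ≠ 1)
    (t : Matrix (Fin j) (Fin j) F → M)
    (h1 : ∀ u z, UT u → IsUnit z → t (uᵀ * z) = ψ (sd u) • t z)
    (h2 : ∀ u z, UT u → IsUnit z → t (z * u) = ψ (sd u) • t z)
    (g : Matrix (Fin j) (Fin j) F) (hg : IsUnit g) (h0 : t g ≠ 0) : t gᵀ = t g := by
  rcases Nat.eq_zero_or_pos j with hj | hj
  · subst hj
    congr 1
    exact Subsingleton.elim _ _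
  have : NeZero j := ⟨hj.ne'⟩
  have key : ∀ x y : Matrix (Fin j) (Fin j) F, (up y)ᵀ * g = g * up x → sd y = sd x := by
    intro x y hxy
    by_contra hne
    apply hψ
    ext c
    set d := sd y - sd x with hd
    have hd0 : d ≠ 0 := sub_ne_zero.2 hne
    have e : (1 + up ((c / d) • y))ᵀ * g = g * (1 + up ((c / d) • x)) := by
      simp only [map_smul, Matrix.transpose_add, Matrix.transpose_one, Matrix.transpose_smul,
        add_mul, mul_add, one_mul, mul_one, Matrix.smul_mul, Matrix.mul_smul, hxy]
    have e2 := congrArg t e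
    rw [h1 _ _ (UT_one_add_up _) hg, h2 _ _ (UT_one_add_up _) hg] at e2
    have e3 := smul_left_injective ℂ h0 e2
    simp only [map_add, sd_one, zero_add, sd_up, map_smul] at e3
    have e4 : c = (c / d) • sd y - (c / d) • sd x := by
      rw [← smul_sub, ← hd, smul_eq_mul, div_mul_cancel₀ _ hd0]
    rw [e4, AddChar.map_sub_eq_div, e3, div_self, AddChar.one_apply]
    exact (AddChar.val_isUnit ψ _).ne_zero
  obtain ⟨T1, T2, H1, H2, hT⟩ := exists_hess g key
  set u := (Matrix.of fun i a : Fin j => (T1 ^ (a : ℕ)) i 0) with hu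
  set v := (Matrix.of fun i a : Fin j => (T2 ^ (a : ℕ)) i 0) with hv
  have hpow : ∀ a : ℕ, g * T1 ^ a = (T2 ^ a)ᵀ * g := by
    intro a
    induction a with
    | zero => simp
    | succ a ih => rw [pow_succ, ← mul_assoc, ih, mul_assoc, hT, ← mul_assoc,
        ← Matrix.transpose_mul, ← pow_succ']
  have hent : ∀ a b : Fin j, (vᵀ * g * u) a b = (g * T1 ^ ((a : ℕ) + b)) 0 0 := by
    intro a b
    rw [pow_add, ← mul_assoc, hpow]
    simp [Matrix.mul_apply, hu, hv, -Matrix.transpose_pow]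
  have hsymm : (vᵀ * g * u)ᵀ = vᵀ * g * u := by
    ext a b
    rw [Matrix.transpose_apply, hent, hent, add_comm]
  have hUu : UT u := H1.UT
  have hUv : UT v := H2.UT
  have hdet : ∀ w : Matrix (Fin j) (Fin j) F, UT w → IsUnit w := by
    intro w hw
    rw [Matrix.isUnit_iff_isUnit_det, Matrix.det_of_isUpperTriangular]
    · simp [hw.1]
    · intro a b hab; exact hw.2 a b hab
  have huu := hdet u hUu
  have huv := hdet v hUv
  have ht : ∀ w : Matrix (Fin j) (Fin j) F, IsUnit w → IsUnit wᵀ := by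
    intro w hw; rwa [Matrix.isUnit_transpose]
  have e1 : t (vᵀ * g * u) = ψ (sd v) • ψ (sd u) • t g := by
    rw [mul_assoc, h1 _ _ hUv (hg.mul huu), h2 _ _ hUu hg]
  have e2 : t (vᵀ * g * u)ᵀ = ψ (sd v) • ψ (sd u) • t gᵀ := by
    rw [Matrix.transpose_mul, Matrix.transpose_mul, Matrix.transpose_transpose,
      ← mul_assoc, h2 _ _ hUv ((ht _ huu).mul (ht _ hg)), h1 _ _ hUu (ht _ hg)]
  rw [hsymm, e1] at e2
  have n1 := (AddChar.val_isUnit ψ (sd v)).ne_zero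
  have n2 := (AddChar.val_isUnit ψ (sd u)).ne_zero
  exact (smul_right_injective _ n2 (smul_right_injective _ n1 e2)).symm

theorem gk {M : Type*} [AddCommGroup M] [Module ℂ M] (ψ : AddChar F ℂ) (hψ : ψ ≠ 1)
    (t : Matrix (Fin j) (Fin j) F → M)
    (h1 : ∀ u z, UT u → IsUnit z → t (uᵀ * z) = ψ (sd u) • t z)
    (h2 : ∀ u z, UT u → IsUnit z → t (z * u) = ψ (sd u) • t z)
    (g : Matrix (Fin j) (Fin j) F) (hg : IsUnit g) : t gᵀ = t g := by
  by_cases h0 : t g = 0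
  · by_cases h0' : t gᵀ = 0
    · rw [h0, h0']
    · have := gk_aux ψ hψ t h1 h2 gᵀ (by rwa [Matrix.isUnit_transpose]) h0'
      rw [Matrix.transpose_transpose] at this
      exact this.symm
  · exact gk_aux ψ hψ t h1 h2 g hg h0

end
end GowAux


namespace GowAux
open Matrix Polynomial

lemma exists_pairing_quot {F : Type} [Field F] (f : F[X]) (hf : f ≠ 0) :
    ∃ β : (F[X] ⧸ Submodule.span F[X] {f}) → (F[X] ⧸ Submodule.span F[X] {f}) → F,
      (∀ x x' y, β (x + x') y = β x y + β x' y) ∧ (∀ x y y', β x (y + y') = β x y + β x y') ∧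
      (∀ (c : F) x y, β (C c • x) y = c * β x y) ∧ (∀ (p : F[X]) x y, β (p • x) y = β x (p • y)) ∧
      ∀ x, (∀ y, β x y = 0) → x = 0 := by
  let I : Ideal F[X] := Ideal.span {f}
  let n := f.natDegree
  let lam : F[X] → F := fun p => (p % f).coeff (n - 1)
  have lam_congr : ∀ p q : F[X], p - q ∈ I → lam p = lam q := by
    intro p q h
    have : f ∣ p - q := Ideal.mem_span_singleton.1 h
    have h2 : (p - q) % f = 0 := (EuclideanDomain.mod_eq_zero).2 this
    rw [Polynomial.sub_mod, sub_eq_zero] at h2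
    simp only [lam, h2]
  let Q := F[X] ⧸ I
  let ml : Q → F := Quotient.lift lam (fun a b h => lam_congr a b ((Submodule.quotientRel_def I).1 h))
  have ml_mk : ∀ p, ml (Ideal.Quotient.mk I p) = lam p := fun p => rfl
  have ml_add : ∀ x y : Q, ml (x + y) = ml x + ml y := by
    intro x y
    obtain ⟨p, rfl⟩ := Ideal.Quotient.mk_surjective x
    obtain ⟨r, rfl⟩ := Ideal.Quotient.mk_surjective y
    rw [← map_add, ml_mk, ml_mk, ml_mk]
    simp [lam, Polynomial.add_mod]
  have smul_mk : ∀ (p r : F[X]), (p • (Ideal.Quotient.mk I r) : Q) = Ideal.Quotient.mk I (p * r) :=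
    fun p r => rfl
  have ml_smul : ∀ (c : F) (x : Q), ml (C c • x) = c * ml x := by
    intro c x
    obtain ⟨p, rfl⟩ := Ideal.Quotient.mk_surjective x
    rw [smul_mk, ml_mk, ml_mk]
    have : (C c * p) % f = C c * (p % f) := by
      rw [Polynomial.mod_def, Polynomial.mod_def, ← Polynomial.smul_eq_C_mul,
        ← Polynomial.smul_eq_C_mul, Polynomial.smul_modByMonic]
    simp [lam, this]
  have sm : ∀ (p : F[X]) (x y : Q), (p • x) * y = p • (x * y) := fun p x y => smul_mul_assoc p x y
  have ms : ∀ (p : F[X]) (x y : Q), x * (p • y) = p • (x * y) := fun p x y => mul_smul_comm p x y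
  refine ⟨fun x y => ml ((x : Q) * (y : Q)), ?_, ?_, ?_, ?_, ?_⟩
  · intro x x' y
    exact (congrArg ml (add_mul (x : Q) x' y)).trans (ml_add _ _)
  · intro x x' y
    exact (congrArg ml (mul_add (x : Q) x' y)).trans (ml_add _ _)
  · intro c x y
    exact (congrArg ml (sm (C c) x y)).trans (ml_smul _ _)
  · intro p x y
    exact congrArg ml ((sm p x y).trans (ms p x y).symm)
  · intro x hx
    obtain ⟨p, rfl⟩ := Ideal.Quotient.mk_surjective (I := I) x
    by_contra hne
    have hr : p % f ≠ 0 := by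
      intro h0
      apply hne
      exact Ideal.Quotient.eq_zero_iff_mem.2 (Ideal.mem_span_singleton.2 (EuclideanDomain.mod_eq_zero.1 h0))
    have hdeg : (p % f).natDegree < n := by
      apply Polynomial.natDegree_lt_natDegree hr
      exact Polynomial.degree_mod_lt p hf
    have h1 := hx (Ideal.Quotient.mk I (X ^ (n - 1 - (p % f).natDegree)))
    have h2 : lam (p * X ^ (n - 1 - (p % f).natDegree)) = 0 := h1
    have h3 : lam (p * X ^ (n - 1 - (p % f).natDegree)) =
        lam ((p % f) * X ^ (n - 1 - (p % f).natDegree)) := by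
      apply lam_congr
      rw [← sub_mul]
      apply Ideal.mul_mem_right
      apply Ideal.mem_span_singleton.2
      exact ⟨p / f, by
        have := EuclideanDomain.div_add_mod p f
        rw [sub_eq_iff_eq_add]; exact this.symm⟩
    rw [h3] at h2
    have h4 : ((p % f) * X ^ (n - 1 - (p % f).natDegree)) % f =
        (p % f) * X ^ (n - 1 - (p % f).natDegree) := by
      rw [Polynomial.mod_eq_self_iff hf]
      apply Polynomial.degree_lt_degree
      rw [Polynomial.natDegree_mul hr (by simp), Polynomial.natDegree_X_pow]
      change _ < n
      omega
    simp only [lam, h4] at h2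
    have h5 : n - 1 = (p % f).natDegree + (n - 1 - (p % f).natDegree) := by omega
    rw [h5] at h2
    rw [show (p % f).natDegree + (n - 1 - (p % f).natDegree) - (p % f).natDegree =
      n - 1 - (p % f).natDegree by omega, Polynomial.coeff_mul_X_pow] at h2
    exact hr (Polynomial.leadingCoeff_eq_zero.1 h2)

theorem exists_similar_transpose {F : Type} [Field F] {ι : Type} [Fintype ι] [DecidableEq ι]
    (A : Matrix ι ι F) : ∃ S : Matrix ι ι F, IsUnit S ∧ S * A = Aᵀ * S := by
  classical
  let φ : Module.End F (ι → F) := Matrix.toLin' A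
  obtain ⟨J, _, p, hp, e, ⟨E⟩⟩ := Module.equiv_directSum_of_isTorsion
    (R := F[X]) (M := Module.AEval F (ι → F) φ)
    (Module.AEval.isTorsion_of_finiteDimensional F (ι → F) φ)
  choose β h1 h2 h3 h4 h5 using fun i => exists_pairing_quot (p i ^ e i) (pow_ne_zero _ (hp i).ne_zero)
  let E' : (ι → F) → ∀ i, (F[X] ⧸ Submodule.span F[X] {p i ^ e i}) :=
    fun v i => E (Module.AEval.of F (ι → F) φ v) i
  have Eadd : ∀ v w i, E' (v + w) i = E' v i + E' w i := by
    intro v w i; simp [E']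
  have Esmul : ∀ (c : F) v i, E' (c • v) i = C c • E' v i := by
    intro c v i
    simp only [E', map_smul, ← Module.AEval.C_smul]
    rfl
  have EX : ∀ v i, E' (A *ᵥ v) i = (X : F[X]) • E' v i := by
    intro v i
    have : (Module.AEval.of F (ι → F) φ (A *ᵥ v)) = (X : F[X]) • Module.AEval.of F (ι → F) φ v := by
      rw [Module.AEval.X_smul_of]; rfl
    simp only [E', this, map_smul]
    rfl
  let B : (ι → F) →ₗ[F] (ι → F) →ₗ[F] F := LinearMap.mk₂ F (fun v w => ∑ i, β i (E' v i) (E' w i))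
    (by intro v v' w; simp [Eadd, h1, Finset.sum_add_distrib])
    (by intro c v w; simp [Esmul, h3, Finset.mul_sum])
    (by intro v v' w; simp [Eadd, h2, Finset.sum_add_distrib])
    (by intro c v w; simp [Esmul, ← h4, h3, Finset.mul_sum])
  have Bdef : ∀ v w, B v w = ∑ i, β i (E' v i) (E' w i) := fun v w => rfl
  have hsep : B.SeparatingLeft := by
    intro v hv
    have : ∀ i, E' v i = 0 := by
      intro i
      apply h5
      intro y
      obtain ⟨w, hw⟩ := E.surjective (DirectSum.of (fun i => F[X] ⧸ Submodule.span F[X] {p i ^ e i}) i y)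
      have := hv ((Module.AEval.of F (ι → F) φ).symm w)
      rw [Bdef, Finset.sum_eq_single i] at this
      · simpa [E', hw] using this
      · intro l _ hl
        have hz : E' ((Module.AEval.of F (ι → F) φ).symm w) l = 0 := by
          simp only [E', LinearEquiv.apply_symm_apply, hw]
          exact DirectSum.of_eq_of_ne _ _ _ hl
        rw [hz]
        have := h2 l (E' v l) 0 0
        simpa using this
      · simp
    have h0 : E (Module.AEval.of F (ι → F) φ v) = 0 := DFinsupp.ext this
    simpa using h0
  have hadj : ∀ v w, B (A *ᵥ v) w = B v (A *ᵥ w) := by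
    intro v w; simp only [Bdef, EX, h4]
  have hB : Matrix.toLinearMap₂' F (LinearMap.toMatrix₂' F B) = B := by simp
  refine ⟨LinearMap.toMatrix₂' F B, ?_, ?_⟩
  · rw [Matrix.isUnit_iff_isUnit_det, isUnit_iff_ne_zero]
    rw [← LinearMap.separatingLeft_toLinearMap₂'_iff_det_ne_zero, hB]
    exact hsep
  · have := (isAdjointPair_toLinearMap₂' (LinearMap.toMatrix₂' F B) (LinearMap.toMatrix₂' F B) A A).1
      (by rw [hB]; intro v w; simpa using hadj v w)
    exact this.symm

end GowAux


namespace GowAux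
open Matrix

section geninv
variable {F : Type} [Field F] {m n p : Type} [Fintype m] [Fintype n] [Fintype p]
  [DecidableEq m] [DecidableEq n] [DecidableEq p]

lemma exists_geninv (P : Matrix m n F) : ∃ R : Matrix n m F, P * R * P = P := by
  obtain ⟨s, hs⟩ := LinearMap.exists_rightInverse_of_surjective (Matrix.toLin' P).rangeRestrict
    (LinearMap.range_rangeRestrict _)
  obtain ⟨r, hr⟩ := LinearMap.exists_extend s
  refine ⟨LinearMap.toMatrix' r, ?_⟩
  apply (Matrix.toLin' (R := F) (m := m) (n := n)).injective
  rw [Matrix.toLin'_mul, Matrix.toLin'_mul, Matrix.toLin'_toMatrix']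
  refine LinearMap.pi_ext' fun i => LinearMap.ext_ring ?_
  have h1 := LinearMap.congr_fun hr ((Matrix.toLin' P).rangeRestrict (Pi.single i 1))
  have h2 := LinearMap.congr_fun hs ((Matrix.toLin' P).rangeRestrict (Pi.single i 1))
  have h3 := congrArg Subtype.val h2
  simp only [LinearMap.comp_apply] at h1 h3 ⊢
  have h4 : r ((Matrix.toLin' P) (Pi.single i 1)) = s ((Matrix.toLin' P).rangeRestrict (Pi.single i 1)) := h1
  simp only [LinearMap.single_apply]
  rw [h4]
  exact h3

lemma mul_eq_zero_of_ker (P : Matrix m n F) {q : Type} [Fintype q] (Q : Matrix q n F)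
    (h : ∀ x, P *ᵥ x = 0 → Q *ᵥ x = 0) (W : Matrix n p F) (hW : P * W = 0) : Q * W = 0 := by
  apply Matrix.ext_of_mulVec_single
  intro i
  rw [← Matrix.mulVec_mulVec, h, Matrix.zero_mulVec]
  rw [Matrix.mulVec_mulVec, hW, Matrix.zero_mulVec]

lemma factor_left_geninv (P : Matrix m n F) {q : Type} [Fintype q] (Q : Matrix q n F)
    (h : ∀ x, P *ᵥ x = 0 → Q *ᵥ x = 0) (R : Matrix n m F) (hR : P * R * P = P) :
    Q * R * P = Q := by
  have := mul_eq_zero_of_ker P Q h (1 - R * P) (by rw [Matrix.mul_sub, Matrix.mul_one, ← Matrix.mul_assoc, hR, sub_self])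
  rw [Matrix.mul_sub, Matrix.mul_one, sub_eq_zero] at this
  rw [Matrix.mul_assoc, ← this]

lemma factor_left (P : Matrix m n F) {q : Type} [Fintype q] (Q : Matrix q n F)
    (h : ∀ x, P *ᵥ x = 0 → Q *ᵥ x = 0) : ∃ ν : Matrix q m F, ν * P = Q := by
  obtain ⟨R, hR⟩ := exists_geninv P
  exact ⟨Q * R, factor_left_geninv P Q h R hR⟩

lemma factor_right_geninv (P : Matrix m n F) (Q : Matrix m p F)
    (h : ∀ x, ∃ y, Q *ᵥ x = P *ᵥ y) (R : Matrix n m F) (hR : P * R * P = P) :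
    P * (R * Q) = Q := by
  apply Matrix.ext_of_mulVec_single
  intro i
  obtain ⟨y, hy⟩ := h (Pi.single i 1)
  rw [← Matrix.mul_assoc, ← Matrix.mulVec_mulVec, hy, Matrix.mulVec_mulVec, hR]

lemma isUnit_of_injective (A : Matrix n n F) (h : ∀ x, A *ᵥ x = 0 → x = 0) : IsUnit A := by
  rw [← Matrix.mulVec_injective_iff_isUnit]
  intro x y hxy
  have := h (x - y) (by rw [Matrix.mulVec_sub]; exact sub_eq_zero.2 hxy)
  exact sub_eq_zero.1 this

end geninv

structure OrbitHyp {F : Type} [Field F] {κ : Type} [Fintype κ] [DecidableEq κ] {j : ℕ}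
    {M : Type} [AddCommGroup M] [Module ℂ M] (ψ : AddChar F ℂ)
    (T : Matrix κ κ F → Matrix κ (Fin j) F → Matrix (Fin j) κ F → Matrix (Fin j) (Fin j) F → M) :
    Prop where
  b1 : ∀ A B C D (X : Matrix κ (Fin j) F), T A (B + A * X) C (D + C * X) = T A B C D
  a1 : ∀ A B C D (Y : Matrix (Fin j) κ F), T A B (C + Y * A) (D + Y * B) = T A B C D
  b2 : ∀ A B C D (u : Matrix (Fin j) (Fin j) F), UT u → T A (B * u) C (D * u) = ψ (sd u) • T A B C D
  a2 : ∀ A B C D (u : Matrix (Fin j) (Fin j) F), UT u → T A B (uᵀ * C) (uᵀ * D) = ψ (sd u) • T A B C D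
  c : ∀ A B C D (h h' : Matrix κ κ F), h * h' = 1 → h' * h = 1 → T (h * A * h') (h * B) (C * h') D = T A B C D
  d : ∀ A B C D (J : Submodule F (Fin j → F)), J ≠ ⊥ → J ≠ ⊤ →
    (∀ X : Matrix (Fin j) (Fin j) F, (∀ x, X *ᵥ x ∈ J) → (∀ x ∈ J, X *ᵥ x = 0) →
      T A (B + B * X) C (D + D * X) = T A B C D) → T A B C D = 0

section
variable {F : Type} [Field F] {κ : Type} [Fintype κ] [DecidableEq κ] {j : ℕ}
    {M : Type} [AddCommGroup M] [Module ℂ M] {ψ : AddChar F ℂ}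
    {T : Matrix κ κ F → Matrix κ (Fin j) F → Matrix (Fin j) κ F → Matrix (Fin j) (Fin j) F → M}

/-- `J_a` -/
def Jsub (A : Matrix κ κ F) (B : Matrix κ (Fin j) F) (a : ℕ) : Submodule F (Fin j → F) where
  carrier := {x | ∃ y, (A ^ a * B) *ᵥ x = A ^ (a + 1) *ᵥ y}
  add_mem' := by
    rintro x x' ⟨y, hy⟩ ⟨y', hy'⟩
    exact ⟨y + y', by rw [Matrix.mulVec_add, Matrix.mulVec_add, hy, hy']⟩
  zero_mem' := ⟨0, by simp⟩
  smul_mem' := by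
    rintro c x ⟨y, hy⟩
    exact ⟨c • y, by rw [Matrix.mulVec_smul, Matrix.mulVec_smul, hy]⟩

lemma mem_Jsub {A : Matrix κ κ F} {B : Matrix κ (Fin j) F} {a : ℕ} {x : Fin j → F} :
    x ∈ Jsub A B a ↔ ∃ y, (A ^ a * B) *ᵥ x = A ^ (a + 1) *ᵥ y := Iff.rfl

/-- maps on the cokernel -/
lemma exists_clear {q : Type} [Fintype q] (A : Matrix κ κ F) (B : Matrix κ (Fin j) F)
    (E : Matrix q (Fin j) F) (h : ∀ x y, B *ᵥ x = A *ᵥ y → E *ᵥ x = 0) :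
    ∃ Y : Matrix q κ F, Y * A = 0 ∧ Y * B = E := by
  obtain ⟨Y, hY⟩ := factor_left (Matrix.fromCols A B) (Matrix.fromCols (0 : Matrix q κ F) E) (by
    intro x hx
    rw [Matrix.fromCols_mulVec] at hx ⊢
    rw [Matrix.zero_mulVec, zero_add]
    refine h _ (-(x ∘ Sum.inl)) ?_
    rw [Matrix.mulVec_neg, eq_neg_iff_add_eq_zero, add_comm]; exact hx)
  rw [Matrix.mul_fromCols] at hY
  have := Matrix.fromCols_inj hY
  exact ⟨Y, this.1, this.2⟩


lemma OrbitHyp.clearD (hT : OrbitHyp ψ T) {A : Matrix κ κ F} {B : Matrix κ (Fin j) F}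
    (hJ : ∀ x y, B *ᵥ x = A *ᵥ y → x = 0) (C : Matrix (Fin j) κ F) (D D' : Matrix (Fin j) (Fin j) F) :
    T A B C D = T A B C D' := by
  obtain ⟨Y, h1, h2⟩ := exists_clear A B (D' - D) (by
    intro x y h; rw [hJ x y h, Matrix.mulVec_zero])
  have := hT.a1 A B C D Y
  rw [h1, h2, add_zero, add_sub_cancel] at this
  exact this.symm

lemma OrbitHyp.clear (hT : OrbitHyp ψ T) {A : Matrix κ κ F} {B : Matrix κ (Fin j) F}
    (hJ : ∀ x y, B *ᵥ x = A *ᵥ y → x = 0) (C : Matrix (Fin j) κ F) (D D' : Matrix (Fin j) (Fin j) F)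
    (W : Matrix κ (Fin j) F) (Y : Matrix (Fin j) κ F) :
    T A (B + A * W) (C + Y * A) D = T A B C D' := by
  have h1 := hT.b1 A B (C + Y * A) (D - (C + Y * A) * W) W
  rw [sub_add_cancel] at h1
  rw [h1]
  have h2 := hT.a1 A B C (D - (C + Y * A) * W - Y * B) Y
  rw [sub_add_cancel] at h2
  rw [h2]
  exact hT.clearD hJ _ _ _

/-- case `A` invertible -/
lemma OrbitHyp.case_unit (hT : OrbitHyp ψ T) (hψ : ψ ≠ 1) (A : Matrix κ κ F) (B : Matrix κ (Fin j) F)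
    (C : Matrix (Fin j) κ F) (D : Matrix (Fin j) (Fin j) F) (hg : IsUnit (fromBlocks A B C D))
    (hA : IsUnit A) : T Aᵀ Cᵀ Bᵀ Dᵀ = T A B C D := by
  have red : ∀ (A A' : Matrix κ κ F) (B : Matrix κ (Fin j) F)
    (C : Matrix (Fin j) κ F) (D : Matrix (Fin j) (Fin j) F), A * A' = 1 → A' * A = 1 →
      T A B C D = T A 0 0 (D - C * A' * B) := by
    intro A A' B C D h1 h2
    have e1 := hT.b1 A B C D (-(A' * B))
    have e2 := hT.a1 A 0 C (D - C * A' * B) (-(C * A'))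
    rw [Matrix.mul_neg, Matrix.mul_neg, ← Matrix.mul_assoc, h1, Matrix.one_mul, add_neg_cancel, ← Matrix.mul_assoc, ← sub_eq_add_neg] at e1
    rw [Matrix.neg_mul, Matrix.mul_assoc C, h2, Matrix.mul_one, add_neg_cancel, Matrix.mul_zero, add_zero] at e2
    rw [← e1, ← e2]
  obtain ⟨a, rfl⟩ := hA
  set A' : Matrix κ κ F := ((a⁻¹ : (Matrix κ κ F)ˣ) : Matrix κ κ F)
  set A : Matrix κ κ F := (a : Matrix κ κ F)
  have h1 : A * A' = 1 := a.mul_inv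
  have h2 : A' * A = 1 := a.inv_mul
  rw [red A A' B C D h1 h2, red Aᵀ A'ᵀ Cᵀ Bᵀ Dᵀ (by rw [← Matrix.transpose_mul, h2, Matrix.transpose_one])
    (by rw [← Matrix.transpose_mul, h1, Matrix.transpose_one])]
  have h3 : Dᵀ - Bᵀ * A'ᵀ * Cᵀ = (D - C * A' * B)ᵀ := by
    simp [Matrix.transpose_mul, Matrix.mul_assoc]
  rw [h3]
  have hD : IsUnit (D - C * A' * B) := by
    let _ : Invertible A := ⟨A', h2, h1⟩
    rw [Matrix.isUnit_iff_isUnit_det, Matrix.det_fromBlocks₁₁] at hg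
    have := isUnit_of_mul_isUnit_right hg
    rw [Matrix.isUnit_iff_isUnit_det]
    exact this
  obtain ⟨S, ⟨s, rfl⟩, hS⟩ := exists_similar_transpose A
  have e1 := hT.c A 0 0 (D - C * A' * B)ᵀ s (s⁻¹ : (Matrix κ κ F)ˣ) s.mul_inv s.inv_mul
  rw [hS, Matrix.mul_assoc, s.mul_inv, Matrix.mul_one, Matrix.mul_zero, Matrix.zero_mul] at e1
  rw [e1]
  refine gk ψ hψ (fun z => T A 0 0 z) ?_ ?_ _ hD
  · intro u z hu _
    have := hT.a2 A 0 0 z u hu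
    rwa [Matrix.mul_zero] at this
  · intro u z hu _
    have := hT.b2 A 0 0 z u hu
    rwa [Matrix.zero_mul] at this

/-- case `J_0 ≠ 0` -/
lemma OrbitHyp.case_J0 (hT : OrbitHyp ψ T) (A : Matrix κ κ F) (B : Matrix κ (Fin j) F)
    (C : Matrix (Fin j) κ F) (D : Matrix (Fin j) (Fin j) F)
    (h0 : Jsub A B 0 ≠ ⊥) (h1 : Jsub A B 0 ≠ ⊤) : T A B C D = 0 := by
  refine hT.d A B C D _ h0 h1 ?_
  intro X hX1 hX2
  obtain ⟨R, hR⟩ := exists_geninv A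
  have hJ : ∀ x, x ∈ Jsub A B 0 ↔ ∃ y, B *ᵥ x = A *ᵥ y := by
    intro x; rw [mem_Jsub]; simp
  have e1 : A * (R * (B * X)) = B * X := factor_right_geninv A (B * X) (by
    intro x
    rw [← Matrix.mulVec_mulVec]
    exact (hJ _).1 (hX1 x)) R hR
  obtain ⟨Y, hY1, hY2⟩ := exists_clear A B (D * X - C * (R * (B * X))) (by
    intro x y hxy
    have := hX2 x ((hJ x).2 ⟨y, hxy⟩)
    rw [Matrix.sub_mulVec, ← Matrix.mulVec_mulVec, ← Matrix.mul_assoc, ← Matrix.mul_assoc, ← Matrix.mulVec_mulVec, this]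
    simp)
  have e2 := hT.b1 A B C (D + (D * X - C * (R * (B * X)))) (R * (B * X))
  have e3 := hT.a1 A B C D Y
  rw [hY1, hY2, add_zero] at e3
  rw [← e3, ← e2, e1]
  congr 1
  abel

/-- some `J_a` proper nonzero -/
lemma OrbitHyp.case_Ja (hT : OrbitHyp ψ T) (A : Matrix κ κ F) (B : Matrix κ (Fin j) F)
    (C : Matrix (Fin j) κ F) (D : Matrix (Fin j) (Fin j) F)
    (hJ : ∀ x y, B *ᵥ x = A *ᵥ y → x = 0) (hs : ∀ v, ∃ p z, v = A *ᵥ p + B *ᵥ z) (a : ℕ)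
    (h0 : Jsub A B a ≠ ⊥) (h1 : Jsub A B a ≠ ⊤) : T A B C D = 0 := by
  refine hT.d A B C D _ h0 h1 ?_
  intro X hX1 hX2
  obtain ⟨R, hR⟩ := exists_geninv (A ^ (a + 1))
  set X1 := R * (A ^ a * B * X) with hX1d
  have e1 : A ^ (a + 1) * X1 = A ^ a * B * X := factor_right_geninv (A ^ (a + 1)) _ (by
    intro x
    rw [← Matrix.mulVec_mulVec]
    exact hX1 x) R hR
  set V0 := B * X - A * X1 with hV0
  have e2 : A ^ a * V0 = 0 := by
    rw [hV0, Matrix.mul_sub, ← Matrix.mul_assoc, ← Matrix.mul_assoc, ← pow_succ, e1, sub_self]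
  have e3 : ∀ x ∈ Jsub A B a, V0 *ᵥ x = 0 := by
    intro x hx
    rw [hV0, Matrix.sub_mulVec, ← Matrix.mulVec_mulVec, ← Matrix.mulVec_mulVec, hX1d,
      ← Matrix.mulVec_mulVec, ← Matrix.mulVec_mulVec, hX2 x hx]
    simp
  obtain ⟨l, hl1, hl2⟩ := exists_clear A B V0 (by
    intro x y h; rw [hJ x y h, Matrix.mulVec_zero])
  obtain ⟨s, hs'⟩ := exists_geninv (A ^ a)
  have hls : l * s * A ^ a = l := by
    refine factor_left_geninv (A ^ a) l ?_ s hs'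
    intro x hx
    obtain ⟨p, z, rfl⟩ := hs x
    rw [Matrix.mulVec_add, Matrix.mulVec_mulVec, Matrix.mulVec_mulVec, hl1, hl2, Matrix.zero_mulVec,
      zero_add]
    apply e3
    refine ⟨-p, ?_⟩
    rw [Matrix.mulVec_add, Matrix.mulVec_mulVec, Matrix.mulVec_mulVec, ← pow_succ] at hx
    rw [Matrix.mulVec_neg, eq_neg_iff_add_eq_zero, add_comm]; exact hx
  have hAl : A ^ a * l = 0 := by
    apply Matrix.ext_of_mulVec_single
    intro i
    obtain ⟨p, z, hpz⟩ := hs (Pi.single i 1)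
    rw [hpz, Matrix.mulVec_add, Matrix.mulVec_mulVec, Matrix.mulVec_mulVec, Matrix.mul_assoc, Matrix.mul_assoc,
      hl1, hl2, e2]
    simp
  set ν := l * s with hν
  have hAν : ∀ i, a ≤ i → A ^ i * ν = 0 := by
    intro i hi
    obtain ⟨b, rfl⟩ := Nat.exists_eq_add_of_le hi
    rw [hν, add_comm, pow_add, Matrix.mul_assoc, ← Matrix.mul_assoc (A ^ a), hAl, Matrix.zero_mul, Matrix.mul_zero]
  set Z' : Matrix κ κ F := ∑ i ∈ Finset.range a, A ^ i * ν * A ^ (a - 1 - i) with hZ'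
  set Z := Z' * A with hZ
  have hZsum : Z = ∑ i ∈ Finset.range a, A ^ i * ν * A ^ (a - i) := by
    rw [hZ, hZ', Matrix.sum_mul]
    refine Finset.sum_congr rfl fun i hi => ?_
    have := Finset.mem_range.1 hi
    rw [Matrix.mul_assoc, ← pow_succ]; congr 2; omega
  have hsum' : Z + A ^ a * ν = ν * A ^ a + A * Z' := by
    have h1 : ∑ i ∈ Finset.range (a + 1), A ^ i * ν * A ^ (a - i) = Z + A ^ a * ν := by
      rw [Finset.sum_range_succ, ← hZsum]; simp
    have h2 : ∑ i ∈ Finset.range (a + 1), A ^ i * ν * A ^ (a - i) = ν * A ^ a + A * Z' := by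
      rw [Finset.sum_range_succ', add_comm, hZ', Matrix.mul_sum]
      congr 1
      · simp
      · refine Finset.sum_congr rfl fun i hi => ?_
        rw [pow_succ', show a - 1 - i = a - (i + 1) by omega]
        simp only [Matrix.mul_assoc]
    rw [← h1, h2]
  rw [hAν a le_rfl, add_zero, hls] at hsum'
  -- Z = l + A * Z'
  have hcomm : A * Z = Z * A := by
    conv_rhs => rw [hsum', Matrix.add_mul, hl1, zero_add, Matrix.mul_assoc]
  have hAZ : A ^ a * Z = 0 := by
    rw [hZsum, Matrix.mul_sum]
    refine Finset.sum_eq_zero fun i _ => ?_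
    rw [← Matrix.mul_assoc, ← Matrix.mul_assoc, ← pow_add, hAν _ (by omega), Matrix.zero_mul]
  have hZB : Z * B = B * X + A * (Z' * B - X1) := by
    rw [hsum', Matrix.add_mul, hl2, hV0, Matrix.mul_sub, Matrix.mul_assoc]; abel
  have hcomm' : ∀ i, A ^ i * (1 + Z) = (1 + Z) * A ^ i := by
    intro i
    have : Commute A (1 + Z) := (Commute.one_right A).add_right hcomm
    exact (this.pow_left i).eq
  have hunit : IsUnit (1 + Z) := by
    apply isUnit_of_injective
    intro x hx
    have key : ∀ i, i ≤ a → A ^ (a - i) *ᵥ x = 0 := by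
      intro i
      induction i with
      | zero =>
        intro _
        have : A ^ a * (1 + Z) = A ^ a := by rw [Matrix.mul_add, hAZ, Matrix.mul_one, add_zero]
        rw [Nat.sub_zero, ← this, ← Matrix.mulVec_mulVec, hx, Matrix.mulVec_zero]
      | succ i ih =>
        intro hi
        have h3 := ih (by omega)
        have h4 : (1 + Z) *ᵥ (A ^ (a - (i + 1)) *ᵥ x) = 0 := by
          rw [Matrix.mulVec_mulVec, ← hcomm', ← Matrix.mulVec_mulVec, hx, Matrix.mulVec_zero]
        rw [Matrix.add_mulVec, Matrix.one_mulVec, hZ, ← Matrix.mulVec_mulVec, Matrix.mulVec_mulVec x A,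
          ← pow_succ', show a - (i + 1) + 1 = a - i by omega, h3, Matrix.mulVec_zero, add_zero] at h4
        exact h4
    have := key a le_rfl
    simpa using this
  obtain ⟨h, hh⟩ := hunit
  set h' : Matrix κ κ F := ((h⁻¹ : (Matrix κ κ F)ˣ) : Matrix κ κ F) with hh'
  have hm1 : (h : Matrix κ κ F) * h' = 1 := h.mul_inv
  have hm2 : h' * (h : Matrix κ κ F) = 1 := h.inv_mul
  have e5 : C * h' = C + (-(C * h' * Z')) * A := by
    have : h' + h' * Z = 1 := by rw [hh, Matrix.mul_add, Matrix.mul_one] at hm2; exact hm2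
    have h6 : h' = 1 - h' * Z := eq_sub_of_add_eq this
    conv_lhs => rw [h6]
    rw [hZ, Matrix.mul_sub, Matrix.mul_one, Matrix.neg_mul, ← sub_eq_add_neg]
    simp only [Matrix.mul_assoc]
  have e6 : (h : Matrix κ κ F) * A * h' = A := by
    have := hcomm' 1
    rw [pow_one] at this
    rw [hh, ← this, Matrix.mul_assoc, ← hh, hm1, Matrix.mul_one]
  have e7 : (h : Matrix κ κ F) * B = (B + B * X) + A * (Z' * B - X1) := by
    rw [hh, Matrix.add_mul, Matrix.one_mul, hZB]; abel
  have e8 := hT.c A B C D h h' hm1 hm2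
  rw [e6, e7, e5] at e8
  rw [← e8]
  symm
  refine hT.clear ?_ C _ _ _ _
  intro x y hxy
  have hXX : X *ᵥ (X *ᵥ x) = 0 := hX2 _ (hX1 x)
  have h9 : x + X *ᵥ x = 0 := by
    apply hJ _ y
    rw [← hxy, Matrix.mulVec_add, Matrix.add_mulVec, Matrix.mulVec_mulVec]
  have h10 : X *ᵥ x = 0 := by
    have := congrArg (fun w => X *ᵥ w) h9
    simpa [Matrix.mulVec_add, hXX] using this
  simpa [h10] using h9

lemma normalized_J0 {A : Matrix κ κ F} {B : Matrix κ (Fin j) F}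
    {C : Matrix (Fin j) κ F} {m : ℕ} (h2 : C * A ^ (m + 1) = 0) (hy : IsUnit (C * A ^ m * B)) :
    ∀ x y, B *ᵥ x = A *ᵥ y → x = 0 := by
  intro x y h
  have h3 : (C * A ^ m * B) *ᵥ x = 0 := by
    rw [← Matrix.mulVec_mulVec, h, Matrix.mulVec_mulVec, Matrix.mul_assoc, ← pow_succ, h2, Matrix.zero_mulVec]
  rw [← Matrix.mulVec_injective_iff_isUnit] at hy
  exact hy (by rw [h3, Matrix.mulVec_zero])

lemma exists_dual {A : Matrix κ κ F} {B : Matrix κ (Fin j) F}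
    {C : Matrix (Fin j) κ F} {m : ℕ} (h2 : C * A ^ (m + 1) = 0) (hy : C * A ^ m * B = 1) (r : ℕ) :
    r ≤ m → ∃ C' : Matrix (Fin j) κ F, C' * A ^ (m + 1) = 0 ∧ C' * A ^ m * B = 1 ∧
      ∀ s, m - r ≤ s → s < m → C' * A ^ s * B = 0 := by
  induction r with
  | zero => intro _; exact ⟨C, h2, hy, fun s h h' => by omega⟩
  | succ r ih =>
    intro hr
    obtain ⟨C', k1, k2, k3⟩ := ih (by omega)
    have hz : ∀ s, m + 1 ≤ s → C' * A ^ s = 0 := by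
      intro s hs
      obtain ⟨b, rfl⟩ := Nat.exists_eq_add_of_le hs
      rw [pow_add, ← Matrix.mul_assoc, k1, Matrix.zero_mul]
    have hform : ∀ s, (C' - C' * A ^ (m - (r + 1)) * B * (C' * A ^ (r + 1))) * A ^ s * B =
        C' * A ^ s * B - C' * A ^ (m - (r + 1)) * B * (C' * A ^ (r + 1 + s) * B) := by
      intro s
      rw [pow_add A (r + 1) s, Matrix.sub_mul, Matrix.sub_mul]
      simp only [Matrix.mul_assoc]
    refine ⟨C' - C' * A ^ (m - (r + 1)) * B * (C' * A ^ (r + 1)), ?_, ?_, ?_⟩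
    · rw [Matrix.sub_mul, k1, Matrix.mul_assoc _ (C' * A ^ (r + 1)), Matrix.mul_assoc C' (A ^ (r + 1)), ← pow_add,
        hz (r + 1 + (m + 1)) (by omega), Matrix.mul_zero, sub_zero]
    · rw [hform, k2, hz (r + 1 + m) (by omega)]; simp
    · intro s hs hs'
      rw [hform]
      by_cases h : s = m - (r + 1)
      · subst h
        rw [show r + 1 + (m - (r + 1)) = m by omega, k2, Matrix.mul_one, sub_self]
      · rw [hz (r + 1 + s) (by omega), k3 s (by omega) hs']; simp

lemma OrbitHyp.unique (hT : OrbitHyp ψ T) {A : Matrix κ κ F} {B B' : Matrix κ (Fin j) F}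
    {C C' : Matrix (Fin j) κ F} {m : ℕ} (hB : A ^ (m + 1) * B = 0) (hB' : A ^ (m + 1) * B' = 0)
    (hC : C * A ^ (m + 1) = 0) (hC' : C' * A ^ (m + 1) = 0)
    (hy : IsUnit (C * A ^ m * B)) (hyy : C' * A ^ m * B' = C * A ^ m * B)
    (hker : ∀ x, A *ᵥ x = 0 → ∃ z, x = (A ^ m * B) *ᵥ z) :
    T A B C 0 = T A B' C' 0 := by
  obtain ⟨y, hyd⟩ := hy
  have hy' : IsUnit (C' * A ^ m * B') := by rw [hyy, ← hyd]; exact y.isUnit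
  obtain ⟨E, k1, k2, k3⟩ := exists_dual (A := A) (B := B)
    (C := ((y⁻¹ : (Matrix (Fin j) (Fin j) F)ˣ) : Matrix (Fin j) (Fin j) F) * C) (m := m)
    (by rw [Matrix.mul_assoc, hC, Matrix.mul_zero])
    (by rw [Matrix.mul_assoc, Matrix.mul_assoc, ← Matrix.mul_assoc C, ← hyd, y.inv_mul]) m le_rfl
  set N : Matrix κ κ F := ∑ i ∈ Finset.range (m + 1), A ^ i * ((B' - B) * E) * A ^ (m - i) with hN
  have hAB : ∀ i, m + 1 ≤ i → A ^ i * (B' - B) = 0 := by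
    intro i hi
    obtain ⟨b, rfl⟩ := Nat.exists_eq_add_of_le hi
    rw [add_comm, pow_add, Matrix.mul_assoc, Matrix.mul_sub, hB, hB', sub_zero, Matrix.mul_zero]
  have hcomm : A * N = N * A := by
    have h1 : ∑ i ∈ Finset.range (m + 2), A ^ i * ((B' - B) * E) * A ^ (m + 1 - i) = N * A := by
      rw [Finset.sum_range_succ, ← Matrix.mul_assoc (A ^ (m + 1)), hAB _ le_rfl, Matrix.zero_mul, Matrix.zero_mul, add_zero,
        hN, Matrix.sum_mul]
      refine Finset.sum_congr rfl fun i hi => ?_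
      have := Finset.mem_range.1 hi
      rw [show m + 1 - i = m - i + 1 by omega, pow_succ]; simp only [Matrix.mul_assoc]
    have h2 : ∑ i ∈ Finset.range (m + 2), A ^ i * ((B' - B) * E) * A ^ (m + 1 - i) = A * N := by
      rw [Finset.sum_range_succ', hN, Matrix.mul_sum, Nat.sub_zero, Matrix.mul_assoc (A ^ 0), Matrix.mul_assoc (B' - B),
        k1, Matrix.mul_zero, Matrix.mul_zero, add_zero]
      refine Finset.sum_congr rfl fun i hi => ?_
      rw [show m + 1 - (i + 1) = m - i by omega, pow_succ']; simp only [Matrix.mul_assoc]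
    rw [← h1, h2]
  have hAN : A ^ (m + 1) * N = 0 := by
    rw [hN, Matrix.mul_sum]
    refine Finset.sum_eq_zero fun i _ => ?_
    rw [← Matrix.mul_assoc, ← Matrix.mul_assoc, ← Matrix.mul_assoc, ← pow_add, hAB _ (by omega), Matrix.zero_mul, Matrix.zero_mul]
  have hNB : N * B = B' - B := by
    rw [hN, Matrix.sum_mul, Finset.sum_eq_single 0]
    · rw [pow_zero, Matrix.one_mul, Nat.sub_zero, Matrix.mul_assoc, Matrix.mul_assoc, ← Matrix.mul_assoc E, k2, Matrix.mul_one]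
    · intro i hi hi0
      have := Finset.mem_range.1 hi
      rw [Matrix.mul_assoc, Matrix.mul_assoc, Matrix.mul_assoc, ← Matrix.mul_assoc E, k3 _ (by omega) (by omega)]; simp
    · simp
  have hcomm' : ∀ i, A ^ i * (1 + N) = (1 + N) * A ^ i := by
    intro i
    have : Commute A (1 + N) := (Commute.one_right A).add_right hcomm
    exact (this.pow_left i).eq
  have hhB : (1 + N) * B = B' := by rw [Matrix.add_mul, Matrix.one_mul, hNB, add_sub_cancel]
  have hhAB : (1 + N) * (A ^ m * B) = A ^ m * B' := by
    rw [← Matrix.mul_assoc, ← hcomm', Matrix.mul_assoc, hhB]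
  have hunit : IsUnit (1 + N) := by
    apply isUnit_of_injective
    intro x hx
    have key : ∀ i, i ≤ m + 1 → A ^ (m + 1 - i) *ᵥ x = 0 := by
      intro i
      induction i with
      | zero =>
        intro _
        have : A ^ (m + 1) * (1 + N) = A ^ (m + 1) := by rw [Matrix.mul_add, hAN, Matrix.mul_one, add_zero]
        rw [Nat.sub_zero, ← this, ← Matrix.mulVec_mulVec, hx, Matrix.mulVec_zero]
      | succ i ih =>
        intro hi
        have h3 := ih (by omega)
        have h4 : (1 + N) *ᵥ (A ^ (m + 1 - (i + 1)) *ᵥ x) = 0 := by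
          rw [Matrix.mulVec_mulVec, ← hcomm', ← Matrix.mulVec_mulVec, hx, Matrix.mulVec_zero]
        obtain ⟨z, hz⟩ := hker (A ^ (m + 1 - (i + 1)) *ᵥ x) (by
          rw [Matrix.mulVec_mulVec, ← pow_succ', show m + 1 - (i + 1) + 1 = m + 1 - i by omega, h3])
        rw [hz, Matrix.mulVec_mulVec, hhAB] at h4
        have h5 : (C' * A ^ m * B') *ᵥ z = 0 := by
          rw [Matrix.mul_assoc, ← Matrix.mulVec_mulVec, h4, Matrix.mulVec_zero]
        rw [← Matrix.mulVec_injective_iff_isUnit] at hy'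
        have h6 : z = 0 := hy' (by rw [h5, Matrix.mulVec_zero])
        rw [hz, h6, Matrix.mulVec_zero]
    have := key (m + 1) le_rfl
    simpa using this
  obtain ⟨h, hh⟩ := hunit
  set h' : Matrix κ κ F := ((h⁻¹ : (Matrix κ κ F)ˣ) : Matrix κ κ F) with hh'
  have hm1 : (h : Matrix κ κ F) * h' = 1 := h.mul_inv
  have hm2 : h' * (h : Matrix κ κ F) = 1 := h.inv_mul
  have hA1 : A * (h : Matrix κ κ F) = h * A := by
    have := hcomm' 1
    rw [pow_one] at this
    rw [hh, this]
  have hA2 : A * h' = h' * A := by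
    calc A * h' = h' * (h * A) * h' := by rw [← Matrix.mul_assoc, hm2, Matrix.one_mul]
      _ = h' * A := by rw [← hA1, Matrix.mul_assoc, Matrix.mul_assoc, hm1, Matrix.mul_one]
  have e6 : (h : Matrix κ κ F) * A * h' = A := by
    rw [← hA1, Matrix.mul_assoc, hm1, Matrix.mul_one]
  have e8 := hT.c A B C 0 h h' hm1 hm2
  rw [e6, hh, hhB] at e8
  rw [← e8]
  obtain ⟨Y, hY⟩ := factor_left A (C * h' - C') (by
    intro x hx
    obtain ⟨z, hz⟩ := hker (h' *ᵥ x) (by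
      rw [Matrix.mulVec_mulVec, hA2, ← Matrix.mulVec_mulVec, hx, Matrix.mulVec_zero])
    have hx2 : x = (A ^ m * B') *ᵥ z := by
      rw [← hhAB, ← Matrix.mulVec_mulVec, ← hz, Matrix.mulVec_mulVec, ← hh, hm1, Matrix.one_mulVec]
    rw [Matrix.sub_mulVec, ← Matrix.mulVec_mulVec, hz, hx2, Matrix.mulVec_mulVec, Matrix.mulVec_mulVec,
      ← Matrix.mul_assoc, ← Matrix.mul_assoc, hyy, sub_self])
  have := hT.clear (normalized_J0 hC' hy') C' 0 0 0 Y
  rw [Matrix.mul_zero, add_zero, hY, add_sub_cancel] at this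
  exact this

/-- normalized case -/
lemma OrbitHyp.case_normal (hT : OrbitHyp ψ T) (hψ : ψ ≠ 1) {A : Matrix κ κ F} {B : Matrix κ (Fin j) F}
    {C : Matrix (Fin j) κ F} {m : ℕ} (hB : A ^ (m + 1) * B = 0)
    (hC : C * A ^ (m + 1) = 0) (hy : IsUnit (C * A ^ m * B))
    (hinj : ∀ x, A *ᵥ x = 0 → C *ᵥ x = 0 → x = 0) : T Aᵀ Cᵀ Bᵀ 0 = T A B C 0 := by
  have hyc := hy
  obtain ⟨y, hyd⟩ := hy
  set y' : Matrix (Fin j) (Fin j) F := ((y⁻¹ : (Matrix (Fin j) (Fin j) F)ˣ) : Matrix (Fin j) (Fin j) F)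
  have hyy' : (y : Matrix (Fin j) (Fin j) F) * y' = 1 := y.mul_inv
  have hy'y : y' * (y : Matrix (Fin j) (Fin j) F) = 1 := y.inv_mul
  have hker : ∀ x, A *ᵥ x = 0 → ∃ z, x = (A ^ m * B) *ᵥ z := by
    intro x hx
    refine ⟨y' *ᵥ (C *ᵥ x), ?_⟩
    rw [← sub_eq_zero]
    apply hinj
    · rw [Matrix.mulVec_sub, hx, Matrix.mulVec_mulVec, ← Matrix.mul_assoc, ← pow_succ', hB, Matrix.zero_mulVec,
        sub_zero]
    · rw [Matrix.mulVec_sub, Matrix.mulVec_mulVec _ C, ← Matrix.mul_assoc, ← hyd, Matrix.mulVec_mulVec _ (y : Matrix (Fin j) (Fin j) F),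
        hyy', Matrix.one_mulVec, sub_self]
  set C1 := y' * C with hC1
  have c1 : C1 * A ^ (m + 1) = 0 := by rw [hC1, Matrix.mul_assoc, hC, Matrix.mul_zero]
  have c2 : C1 * A ^ m * B = 1 := by rw [hC1, Matrix.mul_assoc, Matrix.mul_assoc, ← Matrix.mul_assoc C, ← hyd, hy'y]
  have c3 : ∀ z : Matrix (Fin j) (Fin j) F, z * C1 * A ^ m * B = z := by
    intro z; rw [Matrix.mul_assoc, Matrix.mul_assoc, ← Matrix.mul_assoc C1, c2, Matrix.mul_one]
  have c4 : ∀ z : Matrix (Fin j) (Fin j) F, z * C1 * A ^ (m + 1) = 0 := by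
    intro z; rw [Matrix.mul_assoc, c1, Matrix.mul_zero]
  have g : T A B ((y : Matrix (Fin j) (Fin j) F)ᵀ * C1) 0 = T A B ((y : Matrix (Fin j) (Fin j) F) * C1) 0 :=
    gk ψ hψ (fun z : Matrix (Fin j) (Fin j) F => T A B (z * C1) 0) (by
      intro u z hu _
      have := hT.a2 A B (z * C1) 0 u hu
      rwa [Matrix.mul_zero, ← Matrix.mul_assoc] at this) (by
      intro u z hu hz
      have huu : IsUnit u := by
        rw [Matrix.isUnit_iff_isUnit_det, Matrix.det_of_isUpperTriangular]
        · simp [hu.1]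
        · intro a b hab; exact hu.2 a b hab
      have := hT.b2 A B (z * C1) 0 u hu
      rw [Matrix.zero_mul] at this
      refine Eq.trans ?_ this
      refine hT.unique hB (by rw [← Matrix.mul_assoc, hB, Matrix.zero_mul]) (c4 _) (c4 _) ?_ ?_ hker
      · rw [c3]; exact hz.mul huu
      · rw [c3, ← Matrix.mul_assoc, c3]) y y.isUnit
  have e1 : (y : Matrix (Fin j) (Fin j) F) * C1 = C := by rw [hC1, ← Matrix.mul_assoc, hyy', Matrix.one_mul]
  rw [e1] at g
  rw [← g]
  obtain ⟨S, ⟨s, rfl⟩, hS⟩ := exists_similar_transpose A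
  set S : Matrix κ κ F := (s : Matrix κ κ F)
  set S' : Matrix κ κ F := ((s⁻¹ : (Matrix κ κ F)ˣ) : Matrix κ κ F)
  have s1 : S * S' = 1 := s.mul_inv
  have s2 : S' * S = 1 := s.inv_mul
  have e2 := hT.c Aᵀ Cᵀ Bᵀ 0 S' S s2 s1
  have hSA : S' * Aᵀ * S = A := by rw [Matrix.mul_assoc, ← hS, ← Matrix.mul_assoc, s2, Matrix.one_mul]
  have hSp : ∀ i, S * A ^ i = Aᵀ ^ i * S := by
    intro i
    induction i with
    | zero => simp
    | succ i ih => rw [pow_succ, ← Matrix.mul_assoc, ih, Matrix.mul_assoc, hS, ← Matrix.mul_assoc, ← pow_succ]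
  have hSp' : ∀ i, A ^ i * S' = S' * Aᵀ ^ i := by
    intro i
    calc A ^ i * S' = S' * (S * A ^ i) * S' := by rw [← Matrix.mul_assoc, s2, Matrix.one_mul]
      _ = S' * Aᵀ ^ i := by rw [hSp, Matrix.mul_assoc, Matrix.mul_assoc, s1, Matrix.mul_one]
  rw [hSA] at e2
  rw [← e2]
  symm
  refine hT.unique hB ?_ (c4 _) ?_ ?_ ?_ hker
  · rw [← Matrix.mul_assoc, hSp', Matrix.mul_assoc, ← Matrix.transpose_pow, ← Matrix.transpose_mul, hC,
      Matrix.transpose_zero, Matrix.mul_zero]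
  · rw [Matrix.mul_assoc, hSp, ← Matrix.mul_assoc, ← Matrix.transpose_pow, ← Matrix.transpose_mul, hB,
      Matrix.transpose_zero, Matrix.zero_mul]
  · rw [c3, Matrix.isUnit_transpose]; exact y.isUnit
  · rw [c3, Matrix.mul_assoc Bᵀ, hSp, Matrix.mul_assoc, Matrix.mul_assoc, ← Matrix.mul_assoc S, s1, Matrix.one_mul, ← Matrix.transpose_pow,
      ← Matrix.transpose_mul, ← Matrix.transpose_mul, hyd]

lemma OrbitHyp.main_aux (hT : OrbitHyp ψ T) (hψ : ψ ≠ 1) (A : Matrix κ κ F) (B : Matrix κ (Fin j) F)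
    (C : Matrix (Fin j) κ F) (D : Matrix (Fin j) (Fin j) F) (hg : IsUnit (fromBlocks A B C D)) :
    T A B C D = 0 ∨ T Aᵀ Cᵀ Bᵀ Dᵀ = T A B C D := by
  by_cases hA : IsUnit A
  · exact Or.inr (hT.case_unit hψ A B C D hg hA)
  have hs : ∀ v, ∃ p z, v = A *ᵥ p + B *ᵥ z := by
    intro v
    obtain ⟨w, hw⟩ := (Matrix.mulVec_surjective_iff_isUnit.2 hg) (Sum.elim v 0)
    rw [Matrix.fromBlocks_mulVec] at hw
    refine ⟨w ∘ Sum.inl, w ∘ Sum.inr, ?_⟩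
    ext i
    have := congrFun hw (Sum.inl i)
    simpa using this.symm
  have hinj : ∀ x, A *ᵥ x = 0 → C *ᵥ x = 0 → x = 0 := by
    intro x h1 h2
    have h3 : (Sum.elim x 0 : κ ⊕ Fin j → F) = 0 := by
      apply Matrix.mulVec_injective_iff_isUnit.2 hg
      rw [Matrix.fromBlocks_mulVec, Matrix.mulVec_zero]
      ext i
      rcases i with i | i <;> simp [h1, h2]
    ext i
    exact congrFun h3 (Sum.inl i)
  have hJ0 : ∀ x, x ∈ Jsub A B 0 ↔ ∃ y, B *ᵥ x = A *ᵥ y := by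
    intro x; rw [mem_Jsub]; simp
  have hJt : Jsub A B 0 ≠ ⊤ := by
    intro h
    apply hA
    rw [← Matrix.mulVec_surjective_iff_isUnit]
    intro v
    obtain ⟨p, z, rfl⟩ := hs v
    obtain ⟨y, hy⟩ := (hJ0 z).1 (h ▸ Submodule.mem_top)
    exact ⟨p + y, by simp only [Matrix.mulVec_add, hy]⟩
  by_cases hJb : Jsub A B 0 = ⊥
  swap
  · exact Or.inl (hT.case_J0 A B C D hJb hJt)
  have hJ : ∀ x y, B *ᵥ x = A *ᵥ y → x = 0 := by
    intro x y h
    have := (hJ0 x).2 ⟨y, h⟩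
    rw [hJb] at this
    exact this
  by_cases hex : ∃ a, Jsub A B a ≠ ⊥ ∧ Jsub A B a ≠ ⊤
  · obtain ⟨a, h1, h2⟩ := hex
    exact Or.inl (hT.case_Ja A B C D hJ hs a h1 h2)
  right
  push Not at hex
  have htop : ∃ a, Jsub A B a = ⊤ := by
    obtain ⟨n, hn⟩ := IsArtinian.monotone_stabilizes (LinearMap.iterateRange (Matrix.toLin' A))
    refine ⟨n, ?_⟩
    rw [eq_top_iff]
    intro x _
    have h1 := hn (n + 1) (by omega)
    have h2 : (A ^ n * B) *ᵥ x ∈ LinearMap.range (Matrix.toLin' A ^ n) := by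
      rw [← Matrix.toLin'_pow]
      exact ⟨B *ᵥ x, by rw [Matrix.toLin'_apply, Matrix.mulVec_mulVec]⟩
    have h3 : (A ^ n * B) *ᵥ x ∈ LinearMap.range (Matrix.toLin' A ^ (n + 1)) := by
      have h4 : LinearMap.range (Matrix.toLin' A ^ n) = LinearMap.range (Matrix.toLin' A ^ (n + 1)) := h1
      rw [← h4]; exact h2
    rw [← Matrix.toLin'_pow] at h3
    obtain ⟨y, hy⟩ := h3
    exact ⟨y, by rw [← hy, Matrix.toLin'_apply]⟩
  classical
  obtain ⟨m, hm⟩ : ∃ m, Nat.find htop = m + 1 := by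
    apply Nat.exists_eq_succ_of_ne_zero
    intro h
    have := Nat.find_spec htop
    rw [h] at this
    exact hJt this
  have hJm1 : Jsub A B (m + 1) = ⊤ := by rw [← hm]; exact Nat.find_spec htop
  have hJm : Jsub A B m = ⊥ := by
    by_contra h
    exact Nat.find_min htop (by omega) (hex m h)
  obtain ⟨R, hR⟩ := exists_geninv (A ^ (m + 2))
  obtain ⟨X0, hX0⟩ : ∃ X0, A ^ (m + 2) * X0 = A ^ (m + 1) * B :=
    ⟨_, factor_right_geninv (A ^ (m + 2)) (A ^ (m + 1) * B) (by
      intro x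
      have : x ∈ Jsub A B (m + 1) := hJm1 ▸ Submodule.mem_top
      exact this) R hR⟩
  have hrange : LinearMap.range (Matrix.toLin' (A ^ (m + 2))) = LinearMap.range (Matrix.toLin' (A ^ (m + 1))) := by
    apply le_antisymm
    · rintro _ ⟨y, rfl⟩
      exact ⟨A *ᵥ y, by rw [Matrix.toLin'_apply, Matrix.toLin'_apply, Matrix.mulVec_mulVec, ← pow_succ]⟩
    · rintro _ ⟨y, rfl⟩
      obtain ⟨p, z, rfl⟩ := hs y
      refine ⟨p + X0 *ᵥ z, ?_⟩
      rw [Matrix.toLin'_apply, Matrix.toLin'_apply, Matrix.mulVec_add, Matrix.mulVec_add, Matrix.mulVec_mulVec,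
        Matrix.mulVec_mulVec, Matrix.mulVec_mulVec, hX0, ← pow_succ]
  have hker : ∀ x, A ^ (m + 2) *ᵥ x = 0 → (C * A ^ (m + 1)) *ᵥ x = 0 := by
    have h1 : LinearMap.ker (Matrix.toLin' (A ^ (m + 1))) = LinearMap.ker (Matrix.toLin' (A ^ (m + 2))) := by
      apply Submodule.eq_of_le_of_finrank_eq
      · intro x hx
        rw [LinearMap.mem_ker, Matrix.toLin'_apply] at hx ⊢
        rw [pow_succ', ← Matrix.mulVec_mulVec, hx, Matrix.mulVec_zero]
      · have e1 := LinearMap.finrank_range_add_finrank_ker (Matrix.toLin' (A ^ (m + 1)))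
        have e2 := LinearMap.finrank_range_add_finrank_ker (Matrix.toLin' (A ^ (m + 2)))
        rw [hrange] at e2
        omega
    intro x hx
    have : x ∈ LinearMap.ker (Matrix.toLin' (A ^ (m + 1))) := by
      rw [h1, LinearMap.mem_ker, Matrix.toLin'_apply, hx]
    rw [LinearMap.mem_ker, Matrix.toLin'_apply] at this
    rw [← Matrix.mulVec_mulVec, this, Matrix.mulVec_zero]
  obtain ⟨Y0, hY0⟩ := factor_left (A ^ (m + 2)) (C * A ^ (m + 1)) hker
  obtain ⟨B', hB'⟩ : ∃ B', B' = B + A * (-X0) := ⟨_, rfl⟩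
  obtain ⟨C', hC'⟩ : ∃ C', C' = C + (-Y0) * A := ⟨_, rfl⟩
  have n1 : A ^ (m + 1) * B' = 0 := by
    rw [hB', Matrix.mul_neg, ← sub_eq_add_neg, Matrix.mul_sub, ← Matrix.mul_assoc, ← pow_succ, hX0, sub_self]
  have n2 : C' * A ^ (m + 1) = 0 := by
    rw [hC', Matrix.neg_mul, ← sub_eq_add_neg, Matrix.sub_mul, Matrix.mul_assoc, ← pow_succ', hY0, sub_self]
  have hBB : B = B' + A * X0 := by rw [hB', Matrix.mul_neg]; abel
  have hCC : C = C' + Y0 * A := by rw [hC', Matrix.neg_mul]; abel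
  have hinj' : ∀ x, A *ᵥ x = 0 → C' *ᵥ x = 0 → x = 0 := by
    intro x h1 h2
    apply hinj x h1
    rw [hCC, Matrix.add_mulVec, h2, ← Matrix.mulVec_mulVec, h1, Matrix.mulVec_zero, zero_add]
  have n3 : IsUnit (C' * A ^ m * B') := by
    apply isUnit_of_injective
    intro x hx
    have h1 : (A ^ m * B') *ᵥ x = 0 := by
      apply hinj'
      · rw [Matrix.mulVec_mulVec, ← Matrix.mul_assoc, ← pow_succ', n1, Matrix.zero_mulVec]
      · rw [Matrix.mulVec_mulVec, ← Matrix.mul_assoc, hx]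
    have h2 : x ∈ Jsub A B m := by
      refine ⟨X0 *ᵥ x, ?_⟩
      rw [hBB, Matrix.mul_add, Matrix.add_mulVec, h1, zero_add, ← Matrix.mul_assoc, ← pow_succ,
        Matrix.mulVec_mulVec]
    rw [hJm] at h2
    exact h2
  have e1 := hT.clear hJ C 0 D (-X0) (-Y0)
  rw [← hB', ← hC'] at e1
  have n2' : B'ᵀ * Aᵀ ^ (m + 1) = 0 := by
    rw [← Matrix.transpose_pow, ← Matrix.transpose_mul, n1, Matrix.transpose_zero]
  have n3' : IsUnit (B'ᵀ * Aᵀ ^ m * C'ᵀ) := by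
    rw [← Matrix.transpose_pow, Matrix.mul_assoc, ← Matrix.transpose_mul, ← Matrix.transpose_mul,
      Matrix.isUnit_transpose]
    exact n3
  have e2 := hT.clear (normalized_J0 n2' n3') B'ᵀ Dᵀ 0 Y0ᵀ X0ᵀ
  rw [← Matrix.transpose_mul, ← Matrix.transpose_mul, ← Matrix.transpose_add, ← Matrix.transpose_add,
    ← hBB, ← hCC] at e2
  rw [e2, ← e1]
  exact hT.case_normal hψ n1 n2 n3 hinj'

theorem OrbitHyp.main (hT : OrbitHyp ψ T) (hψ : ψ ≠ 1) (A : Matrix κ κ F) (B : Matrix κ (Fin j) F)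
    (C : Matrix (Fin j) κ F) (D : Matrix (Fin j) (Fin j) F) (hg : IsUnit (fromBlocks A B C D)) :
    T Aᵀ Cᵀ Bᵀ Dᵀ = T A B C D := by
  rcases hT.main_aux hψ A B C D hg with h | h
  · rcases hT.main_aux hψ Aᵀ Cᵀ Bᵀ Dᵀ (by
      rw [← Matrix.fromBlocks_transpose, Matrix.isUnit_transpose]; exact hg) with h' | h'
    · rw [h, h']
    · simpa using h'.symm
  · exact h

end
end GowAux


namespace GowAux
open Matrix

section
variable {G : Type} [Group G] {V : Type} [AddCommGroup V] [Module ℂ V]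

/-- irreducibility, unbundled -/
def Irr (ρ : Representation ℂ G V) : Prop :=
  Nontrivial V ∧ ∀ W : Submodule ℂ V, (∀ g, ∀ w ∈ W, ρ g w ∈ W) → W = ⊥ ∨ W = ⊤

lemma Irr.isIrreducible {ρ : Representation ℂ G V} (h : Irr ρ) : ρ.IsIrreducible := by
  have := h.1
  refine { exists_pair_ne := ⟨⊥, ⊤, ?_⟩, eq_bot_or_eq_top := ?_ }
  · intro h
    have h2 : (⊥ : Submodule ℂ V) = ⊤ := congrArg Subrepresentation.toSubmodule h
    exact bot_ne_top h2
  · intro a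
    rcases h.2 a.toSubmodule (fun g w hw => a.apply_mem_toSubmodule g hw) with h1 | h1
    · exact Or.inl (Subrepresentation.toSubmodule_injective h1)
    · exact Or.inr (Subrepresentation.toSubmodule_injective h1)

lemma exists_quot [FiniteDimensional ℂ V] [Nontrivial V] (ρ : Representation ℂ G V) :
    ∃ (Q : Type) (_ : AddCommGroup Q) (_ : Module ℂ Q) (_ : FiniteDimensional ℂ Q)
      (τ : Representation ℂ G Q) (f : V →ₗ[ℂ] Q), Irr τ ∧ Function.Surjective f ∧
        ∀ g v, f (ρ g v) = τ g (f v) := by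
  let S : Set (Submodule ℂ V) := {W | W ≠ ⊤ ∧ ∀ g, ∀ w ∈ W, ρ g w ∈ W}
  have hS : S.Nonempty := ⟨⊥, bot_ne_top, by simp⟩
  obtain ⟨M, ⟨hM1, hM2⟩, hmax⟩ := WellFounded.has_min (wellFounded_gt (α := Submodule ℂ V)) S hS
  let τ : Representation ℂ G (V ⧸ M) :=
    { toFun := fun g => M.mapQ M (ρ g) (fun w hw => hM2 g w hw)
      map_one' := by
        apply LinearMap.ext; intro x
        obtain ⟨x, rfl⟩ := M.mkQ_surjective x
        simp
      map_mul' := by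
        intro g h
        apply LinearMap.ext; intro x
        obtain ⟨x, rfl⟩ := M.mkQ_surjective x
        simp }
  have hτ : ∀ g v, M.mkQ (ρ g v) = τ g (M.mkQ v) := fun g v => by simp [τ]
  refine ⟨V ⧸ M, inferInstance, inferInstance, inferInstance, τ, M.mkQ, ⟨?_, ?_⟩, M.mkQ_surjective, hτ⟩
  · exact Submodule.Quotient.nontrivial_iff.2 hM1
  · intro W hW
    by_cases h : W.comap M.mkQ = ⊤
    · right
      rw [eq_top_iff]
      intro x _
      obtain ⟨x, rfl⟩ := M.mkQ_surjective x
      have : x ∈ W.comap M.mkQ := h ▸ Submodule.mem_top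
      exact this
    · left
      have h1 : W.comap M.mkQ ∈ S := by
        refine ⟨h, fun g w hw => ?_⟩
        rw [Submodule.mem_comap, hτ]
        exact hW g _ hw
      have h2 : M ≤ W.comap M.mkQ := by
        intro x hx
        rw [Submodule.mem_comap, Submodule.mkQ_apply, (Submodule.Quotient.mk_eq_zero M).2 hx]
        exact W.zero_mem
      have h3 : ¬ M < W.comap M.mkQ := hmax _ h1
      have h4 : W.comap M.mkQ ≤ M := by
        by_contra h5
        exact h3 (lt_of_le_not_ge h2 h5)
      rw [eq_bot_iff]
      intro x hx
      obtain ⟨x, rfl⟩ := M.mkQ_surjective x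
      rw [Submodule.mem_bot, Submodule.mkQ_apply, Submodule.Quotient.mk_eq_zero]
      exact h4 hx

lemma asAlgebraHom_eq_sum [Fintype G] (ρ : Representation ℂ G V) (r : MonoidAlgebra ℂ G) :
    ∃ c : G → ℂ, ρ.asAlgebraHom r = ∑ g, c g • ρ g := by
  classical
  induction r using MonoidAlgebra.induction_on with
  | of g =>
    refine ⟨Pi.single g 1, ?_⟩
    rw [Finset.sum_eq_single g]
    · simp
    · intro b _ hb; simp [hb]
    · simp
  | add a b ha hb =>
    obtain ⟨c, hc⟩ := ha
    obtain ⟨d, hd⟩ := hb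
    exact ⟨c + d, by simp [hc, hd, add_smul, Finset.sum_add_distrib]⟩
  | smul t a ha =>
    obtain ⟨c, hc⟩ := ha
    exact ⟨t • c, by simp [hc, mul_smul, Finset.smul_sum]⟩

lemma Irr.burnside [Fintype G] [FiniteDimensional ℂ V] {ρ : Representation ℂ G V} (h : Irr ρ)
    (x : V →ₗ[ℂ] V) : ∃ c : G → ℂ, x = ∑ g, c g • ρ g := by
  classical
  have := h.isIrreducible
  have hb : Function.Bijective (algebraMap ℂ (Module.End (MonoidAlgebra ℂ G) ρ.asModule)) :=
    IsSimpleModule.algebraMap_end_bijective_of_isAlgClosed ℂ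
  let f : Module.End (Module.End (MonoidAlgebra ℂ G) ρ.asModule) ρ.asModule :=
    { toFun := fun m => ρ.asModuleEquiv.symm (x (ρ.asModuleEquiv m))
      map_add' := by intro a b; simp
      map_smul' := by
        intro φ m
        obtain ⟨c, rfl⟩ := hb.2 φ
        simp [Module.algebraMap_end_apply] }
  let b := Module.finBasis ℂ V
  obtain ⟨r, hr⟩ := jacobson_density f (Finset.univ.image fun i => ρ.asModuleEquiv.symm (b i))
  obtain ⟨c, hc⟩ := asAlgebraHom_eq_sum ρ r
  refine ⟨c, ?_⟩
  apply b.ext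
  intro i
  have := hr (ρ.asModuleEquiv.symm (b i)) (by simp)
  have h2 := congrArg ρ.asModuleEquiv this
  rw [ρ.asModuleEquiv_map_smul] at h2
  simp only [f, LinearMap.coe_mk, AddHom.coe_mk, LinearEquiv.apply_symm_apply] at h2
  rw [h2, hc]

/-- contravariant form with respect to `s` -/
def IsForm (ρ : Representation ℂ G V) (s : G → G) (B : V →ₗ[ℂ] V →ₗ[ℂ] ℂ) : Prop :=
  ∀ g v u, B (ρ g v) u = B v (ρ (s g) u)

lemma exists_form [Fintype G] [FiniteDimensional ℂ V] [Nontrivial V] (ρ : Representation ℂ G V)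
    (s : G → G) (s1 : s 1 = 1) (hs : ∀ g h, s (g * h) = s h * s g)
    (hχ : ∀ g, LinearMap.trace ℂ V (ρ (s g)) = LinearMap.trace ℂ V (ρ g)) :
    ∃ B : V →ₗ[ℂ] V →ₗ[ℂ] ℂ, B ≠ 0 ∧ IsForm ρ s B := by
  let ρ' : Representation ℂ G (Module.Dual ℂ V) :=
    { toFun := fun g => Module.Dual.transpose (ρ (s g))
      map_one' := by rw [s1, map_one]; rfl
      map_mul' := by intro g h; rw [hs, map_mul]; rfl }
  have hc : ρ'.character = ρ.character := by
    ext g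
    exact (LinearMap.trace_transpose' _).trans (hχ g)
  have : Invertible (Nat.card G : ℂ) := invertibleOfNonzero (by
    rw [Nat.card_eq_fintype_card]; exact_mod_cast Fintype.card_ne_zero)
  have e1 := Representation.card_inv_mul_sum_char_mul_char_eq_finrank ρ ρ'
  have e2 := Representation.card_inv_mul_sum_char_mul_char_eq_finrank ρ ρ
  rw [hc, e2] at e1
  have e3 : Module.finrank ℂ (ρ.IntertwiningMap ρ) = Module.finrank ℂ (ρ.IntertwiningMap ρ') := by
    exact_mod_cast e1
  have hfd : FiniteDimensional ℂ (ρ.IntertwiningMap ρ) :=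
    Module.Finite.equiv (Representation.invariantsEquivIntertwiningMap ρ ρ)
  have e4 : 0 < Module.finrank ℂ (ρ.IntertwiningMap ρ) := by
    rw [Module.finrank_pos_iff_exists_ne_zero]
    refine ⟨⟨LinearMap.id, fun g => by ext; simp⟩, ?_⟩
    intro h
    obtain ⟨v, hv⟩ := exists_ne (0 : V)
    apply hv
    have := congrArg (fun f : ρ.IntertwiningMap ρ => f.toLinearMap v) h
    simpa using this
  rw [e3] at e4
  have : Nontrivial (ρ.IntertwiningMap ρ') := Module.nontrivial_of_finrank_pos e4
  obtain ⟨B, hB⟩ := exists_ne (0 : ρ.IntertwiningMap ρ')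
  refine ⟨B.toLinearMap, ?_, ?_⟩
  · intro h
    apply hB
    apply Representation.IntertwiningMap.toLinearMap_injective
    exact h
  · intro g v u
    have := LinearMap.congr_fun (LinearMap.congr_fun (B.isIntertwining' g) v) u
    exact this

lemma Irr.form_inj {ρ : Representation ℂ G V} (h : Irr ρ) {s : G → G}
    {B : V →ₗ[ℂ] V →ₗ[ℂ] ℂ} (hB : IsForm ρ s B) (h0 : B ≠ 0) : Function.Injective B := by
  rw [← LinearMap.ker_eq_bot]
  rcases h.2 (LinearMap.ker B) (by
    intro g w hw
    rw [LinearMap.mem_ker] at hw ⊢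
    ext u
    rw [hB, hw]; rfl) with h1 | h1
  · exact h1
  · exact absurd (LinearMap.ker_eq_top.1 h1) h0

lemma IsForm.flip {ρ : Representation ℂ G V} {s : G → G} (hss : ∀ g, s (s g) = g)
    {B : V →ₗ[ℂ] V →ₗ[ℂ] ℂ} (hB : IsForm ρ s B) : IsForm ρ s B.flip := by
  intro g v u
  rw [LinearMap.flip_apply, LinearMap.flip_apply, hB, hss]

end

/-- no nonzero skew forms on irreducible representations -/
def NoSkew (G : Type) [Group G] (s : G → G) : Prop :=
  ∀ (V : Type) [AddCommGroup V] [Module ℂ V] [FiniteDimensional ℂ V] (ρ : Representation ℂ G V),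
    Irr ρ → ∀ B : V →ₗ[ℂ] V →ₗ[ℂ] ℂ, IsForm ρ s B → (∀ v u, B v u = - B u v) → B = 0

/-- existence of symmetric forms -/
def HasSym (G : Type) [Group G] (s : G → G) : Prop :=
  ∀ (V : Type) [AddCommGroup V] [Module ℂ V] [FiniteDimensional ℂ V] [Nontrivial V]
    (ρ : Representation ℂ G V),
    ∃ B : V →ₗ[ℂ] V →ₗ[ℂ] ℂ, B ≠ 0 ∧ IsForm ρ s B ∧ ∀ v u, B v u = B u v

lemma NoSkew.hasSym {G : Type} [Group G] [Fintype G] {s : G → G} (h : NoSkew G s) (s1 : s 1 = 1)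
    (hs : ∀ g h, s (g * h) = s h * s g) (hss : ∀ g, s (s g) = g)
    (hconj : ∀ g, ∃ x, x * g = s g * x) : HasSym G s := by
  intro V _ _ _ _ ρ
  obtain ⟨Q, _, _, _, τ, f, hτ, hf, hfg⟩ := exists_quot ρ
  have := hτ.1
  obtain ⟨B, hB0, hB⟩ := exists_form τ s s1 hs (by
    intro g
    obtain ⟨x, hx⟩ := hconj g
    have : s g = x * g * x⁻¹ := by rw [hx]; group
    rw [this]
    exact Representation.char_conj τ g x)
  have hsk := h Q τ hτ (B - B.flip) (by
    intro g v u
    have h1 := hB g v u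
    have h2 := hB.flip hss g v u
    rw [LinearMap.sub_apply, LinearMap.sub_apply, LinearMap.sub_apply, LinearMap.sub_apply, h1, h2]) (by
    intro v u
    simp)
  have hsym : ∀ v u, B v u = B u v := by
    intro v u
    have := LinearMap.congr_fun (LinearMap.congr_fun hsk v) u
    simpa [sub_eq_zero] using this
  refine ⟨B.compl₁₂ f f, ?_, ?_, ?_⟩
  · intro h0
    apply hB0
    ext v u
    obtain ⟨v, rfl⟩ := hf v
    obtain ⟨u, rfl⟩ := hf u
    exact LinearMap.congr_fun (LinearMap.congr_fun h0 v) u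
  · intro g v u
    simp only [LinearMap.compl₁₂_apply]
    rw [hfg, hfg, hB]
  · intro v u
    simp only [LinearMap.compl₁₂_apply]
    exact hsym _ _

end GowAux


namespace GowAux
open Matrix

section
variable {F : Type} [Field F] {j : ℕ}

lemma UT.mul {u v : Matrix (Fin j) (Fin j) F} (hu : UT u) (hv : UT v) : UT (u * v) := by
  constructor
  · intro i
    rw [Matrix.mul_apply, Finset.sum_eq_single i]
    · rw [hu.1, hv.1, one_mul]
    · intro b _ hb
      rcases lt_or_gt_of_ne hb with h | h
      · rw [hu.2 _ _ h, zero_mul]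
      · rw [hv.2 _ _ h, mul_zero]
    · simp
  · intro i l h
    rw [Matrix.mul_apply]
    refine Finset.sum_eq_zero fun b _ => ?_
    rcases lt_or_ge b i with h1 | h1
    · rw [hu.2 _ _ h1, zero_mul]
    · rw [hv.2 _ _ (lt_of_lt_of_le h h1), mul_zero]

lemma UT_one : UT (1 : Matrix (Fin j) (Fin j) F) :=
  ⟨fun i => Matrix.one_apply_eq i, fun i l h => Matrix.one_apply_ne h.ne'⟩

lemma sd_mul {u v : Matrix (Fin j) (Fin j) F} (hu : UT u) (hv : UT v) :
    sd (u * v) = sd u + sd v := by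
  rw [sd_apply, sd_apply, sd_apply, ← Finset.sum_add_distrib]
  refine Finset.sum_congr rfl fun i _ => ?_
  rw [← Finset.sum_add_distrib]
  refine Finset.sum_congr rfl fun l _ => ?_
  split_ifs with h
  · have hil : i < l := by rw [Fin.lt_def]; omega
    rw [Matrix.mul_apply, Finset.sum_eq_add i l hil.ne]
    · rw [hu.1, hv.1]; ring
    · intro b _ ⟨h1, h2⟩
      rcases lt_or_gt_of_ne h1 with h3 | h3
      · rw [hu.2 _ _ h3, zero_mul]
      · have : l < b := by
          rw [Fin.lt_def] at *
          have : (b : ℕ) ≠ l := fun h => h2 (Fin.ext h)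
          omega
        rw [hv.2 _ _ this, mul_zero]
    · simp
    · simp
  · simp

/-- supported on the coordinates `< c` -/
def Supp (c : ℕ) (x : Fin j → F) : Prop := ∀ i : Fin j, c ≤ (i : ℕ) → x i = 0

/-- acting trivially on the first `c` coordinates -/
def Triv (c : ℕ) (u : Matrix (Fin j) (Fin j) F) : Prop := ∀ x, Supp c x → u *ᵥ x = x

lemma Supp.mono {c d : ℕ} (h : c ≤ d) {x : Fin j → F} (hx : Supp c x) : Supp d x :=
  fun i hi => hx i (h.trans hi)

lemma Supp.add {c : ℕ} {x y : Fin j → F} (hx : Supp c x) (hy : Supp c y) : Supp c (x + y) :=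
  fun i hi => by rw [Pi.add_apply, hx i hi, hy i hi, add_zero]

lemma Supp.smul {c : ℕ} {x : Fin j → F} (t : F) (hx : Supp c x) : Supp c (t • x) :=
  fun i hi => by rw [Pi.smul_apply, hx i hi, smul_zero]

lemma Supp.neg {c : ℕ} {x : Fin j → F} (hx : Supp c x) : Supp c (-x) :=
  fun i hi => by rw [Pi.neg_apply, hx i hi, neg_zero]

lemma Supp.single {c : ℕ} {l : Fin j} (h : (l : ℕ) < c) (t : F) : Supp c (Pi.single l t) := by
  intro i hi
  rw [Pi.single_eq_of_ne]
  rintro rfl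
  omega

lemma Triv.apply {c : ℕ} {u : Matrix (Fin j) (Fin j) F} (hu : Triv c u) (i : Fin j) {l : Fin j}
    (hl : (l : ℕ) < c) : u i l = (1 : Matrix (Fin j) (Fin j) F) i l := by
  have := congrFun (hu (Pi.single l 1) (Supp.single hl 1)) i
  rw [Matrix.mulVec_single_one] at this
  rw [Matrix.one_apply, Matrix.col_apply, Pi.single_apply] at *
  exact this

/-- column elements -/
def cw (q : Fin j) (x : Fin j → F) : Matrix (Fin j) (Fin j) F := 1 + vecMulVec x (Pi.single q 1)

lemma cw_mulVec (q : Fin j) (x y : Fin j → F) : cw q x *ᵥ y = y + y q • x := by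
  rw [cw, Matrix.add_mulVec, Matrix.one_mulVec, Matrix.vecMulVec_mulVec]
  simp

lemma matrix_ext_mulVec {n : Type} [Fintype n] [DecidableEq n] {M N : Matrix n n F}
    (h : ∀ x, M *ᵥ x = N *ᵥ x) : M = N := by
  exact Matrix.toLin'.injective (LinearMap.ext h)

lemma cw_mul (q : Fin j) {x y : Fin j → F} (hy : y q = 0) : cw q x * cw q y = cw q (x + y) := by
  apply matrix_ext_mulVec
  intro z
  rw [← Matrix.mulVec_mulVec, cw_mulVec, cw_mulVec, cw_mulVec]
  simp [hy]
  abel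

lemma cw_zero (q : Fin j) : cw q (0 : Fin j → F) = 1 := by
  simp [cw]

lemma cw_apply (q : Fin j) (x : Fin j → F) (i l : Fin j) :
    cw q x i l = (1 : Matrix (Fin j) (Fin j) F) i l + if l = q then x i else 0 := by
  rw [cw, Matrix.add_apply, Matrix.vecMulVec_apply, Pi.single_apply]
  simp

lemma cw_UT (q : Fin j) {x : Fin j → F} (hx : Supp q x) : UT (cw q x) := by
  constructor
  · intro i
    rw [cw_apply, Matrix.one_apply_eq]
    split_ifs with h
    · rw [hx i (by rw [h]), add_zero]
    · rw [add_zero]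
  · intro i l h
    rw [cw_apply, Matrix.one_apply_ne h.ne', zero_add]
    split_ifs with h2
    · rw [hx i (by rw [← h2]; exact h.le)]
    · rfl

lemma sd_cw {p q : Fin j} (hpq : (p : ℕ) + 1 = q) (x : Fin j → F) : sd (cw q x) = x p := by
  rw [cw, map_add, sd_one, zero_add, sd_apply, Finset.sum_eq_single p, Finset.sum_eq_single q]
  · simp [hpq, Matrix.vecMulVec_apply]
  · intro b _ hb; simp [Matrix.vecMulVec_apply, hb]
  · simp
  · intro b _ hb
    refine Finset.sum_eq_zero fun l _ => ?_
    split_ifs with h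
    · have : l ≠ q := by
        rintro rfl
        apply hb
        ext
        omega
      simp [Matrix.vecMulVec_apply, this]
    · rfl
  · simp

lemma triv_conj {q : Fin j} {u : Matrix (Fin j) (Fin j) F} (hu : Triv (q + 1) u) {x : Fin j → F}
    (hx : Supp q x) : Triv (q + 1) (cw q (-x) * u * cw q x) := by
  intro y hy
  rw [← Matrix.mulVec_mulVec, ← Matrix.mulVec_mulVec, cw_mulVec q x,
    hu _ (hy.add ((hx.mono (Nat.le_succ _)).smul _)), cw_mulVec]
  simp [hx q le_rfl]

lemma triv_fac {q : Fin j} {u : Matrix (Fin j) (Fin j) F} (hu : Triv q u) (h : UT u) :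
    ∃ x u', Supp q x ∧ UT u' ∧ Triv (q + 1) u' ∧ u = cw q x * u' ∧
      x = u *ᵥ Pi.single q 1 - Pi.single q 1 := by
  obtain ⟨x, hx⟩ : ∃ x, x = u *ᵥ Pi.single q 1 - Pi.single q 1 := ⟨_, rfl⟩
  have hxs : Supp q x := by
    intro i hi
    rw [hx, Pi.sub_apply, Matrix.mulVec_single_one, Matrix.col_apply]
    by_cases hiq : i = q
    · subst hiq; rw [h.1]; simp
    · rw [h.2 _ _ (lt_of_le_of_ne (Fin.le_def.2 hi) (Ne.symm hiq))]; simp [hiq]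
  refine ⟨x, cw q (-x) * u, hxs, (cw_UT q hxs.neg).mul h, ?_, ?_, hx⟩
  · intro y hy
    have h1 : u *ᵥ y = y + y q • x := by
      have e : y = (y - y q • Pi.single q 1) + y q • Pi.single q 1 := by simp
      have hs : Supp q (y - y q • Pi.single q 1) := by
        intro i hi
        by_cases hiq : i = q
        · subst hiq; simp
        · have : (i : ℕ) ≠ q := fun h => hiq (Fin.ext h)
          rw [Pi.sub_apply, hy i (by omega)]; simp [hiq]
      conv_lhs => rw [e]
      rw [Matrix.mulVec_add, hu _ hs, Matrix.mulVec_smul, hx]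
      rw [smul_sub]; abel
    rw [← Matrix.mulVec_mulVec, h1, cw_mulVec]
    simp [hxs q le_rfl]
  · rw [← Matrix.mul_assoc, cw_mul q (by rw [Pi.neg_apply, hxs q le_rfl, neg_zero]), add_neg_cancel, cw_zero,
      Matrix.one_mul]

end

section
variable {F : Type} [Field F] {j : ℕ} {V : Type} [AddCommGroup V] [Module ℂ V]
  (ψ : AddChar F ℂ) (D : Matrix (Fin j) (Fin j) F →* (V →ₗ[ℂ] V)) (E0 : Submodule ℂ V)

/-- vectors equivariant for the last columns -/
def EE (c : ℕ) : Submodule ℂ V where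
  carrier := {v | v ∈ E0 ∧ ∀ u, UT u → Triv c u → D u v = ψ (sd u) • v}
  zero_mem' := ⟨E0.zero_mem, by simp⟩
  add_mem' := by
    rintro a b ⟨ha, ha'⟩ ⟨hb, hb'⟩
    exact ⟨E0.add_mem ha hb, fun u h1 h2 => by rw [map_add, ha' u h1 h2, hb' u h1 h2, smul_add]⟩
  smul_mem' := by
    rintro t a ⟨ha, ha'⟩
    exact ⟨E0.smul_mem t ha, fun u h1 h2 => by rw [map_smul, ha' u h1 h2, smul_comm]⟩

variable {ψ D E0}

lemma cw_mem_EE (hE : ∀ u, ∀ v ∈ E0, D u v ∈ E0) {p q : Fin j} (hpq : (p : ℕ) + 1 = q)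
    {v : V} (hv : v ∈ EE ψ D E0 (q + 1)) {x : Fin j → F} (hx : Supp q x) :
    D (cw q x) v ∈ EE ψ D E0 (q + 1) := by
  refine ⟨hE _ _ hv.1, fun u hu ht => ?_⟩
  have hq : cw q x * cw q (-x) = 1 := by
    rw [cw_mul q (by rw [Pi.neg_apply, hx q le_rfl, neg_zero]), add_neg_cancel, cw_zero]
  have e : u * cw q x = cw q x * (cw q (-x) * u * cw q x) := by
    rw [← Matrix.mul_assoc, ← Matrix.mul_assoc, hq, Matrix.one_mul]
  have hU1 := (cw_UT q hx.neg).mul hu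
  rw [← Module.End.mul_apply, ← map_mul, e, map_mul, Module.End.mul_apply,
    hv.2 _ (hU1.mul (cw_UT q hx)) (triv_conj ht hx), map_smul,
    sd_mul hU1 (cw_UT q hx), sd_mul (cw_UT q hx.neg) hu, sd_cw hpq, sd_cw hpq]
  congr 2
  simp

/-- equivariance for the column group -/
def WW (D : Matrix (Fin j) (Fin j) F →* (V →ₗ[ℂ] V)) (ψ : AddChar F ℂ) (q : Fin j) (η : Fin j → F) (v : V) : Prop :=
  ∀ x, Supp q x → D (cw q x) v = ψ (η ⬝ᵥ x) • v

lemma WW.descend {p q : Fin j} (hpq : (p : ℕ) + 1 = q) {v : V} (hv : v ∈ EE ψ D E0 (q + 1))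
    (hW : WW D ψ q (Pi.single p 1) v) : v ∈ EE ψ D E0 q := by
  refine ⟨hv.1, fun u hu ht => ?_⟩
  obtain ⟨x, u', h1, h2, h3, h4, -⟩ := triv_fac ht hu
  rw [h4, map_mul, Module.End.mul_apply, hv.2 u' h2 h3, map_smul, hW x h1, sd_mul (cw_UT q h1) h2,
    sd_cw hpq, AddChar.map_add_eq_mul, smul_smul, mul_comm]
  simp


lemma WW.move (hE : ∀ u, ∀ v ∈ E0, D u v ∈ E0) {q : Fin j} {v : V}
    (hv : v ∈ EE ψ D E0 (q + 1)) {η : Fin j → F} (hW : WW D ψ q η v) (hv0 : v ≠ 0)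
    {a b : Fin j → F} (ha : Supp q a) (hb : Supp q b) (hab : 1 + b ⬝ᵥ a ≠ 0) :
    ∃ v' ∈ EE ψ D E0 (q + 1), v' ≠ 0 ∧ WW D ψ q (η - ((1 + b ⬝ᵥ a)⁻¹ * (η ⬝ᵥ a)) • b) v' := by
  set t := 1 + b ⬝ᵥ a with ht
  obtain ⟨m, hm⟩ : ∃ m : Matrix (Fin j) (Fin j) F, m = 1 + vecMulVec a b := ⟨_, rfl⟩
  obtain ⟨m', hm'⟩ : ∃ m' : Matrix (Fin j) (Fin j) F, m' = 1 - t⁻¹ • vecMulVec a b := ⟨_, rfl⟩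
  have mv : ∀ y, m *ᵥ y = y + (b ⬝ᵥ y) • a := by
    intro y; rw [hm, Matrix.add_mulVec, Matrix.one_mulVec, Matrix.vecMulVec_mulVec]; simp
  have mv' : ∀ y, m' *ᵥ y = y - (t⁻¹ * (b ⬝ᵥ y)) • a := by
    intro y
    rw [hm', Matrix.sub_mulVec, Matrix.one_mulVec, Matrix.smul_mulVec, Matrix.vecMulVec_mulVec, mul_smul]; simp
  have h1 : m' * m = 1 := by
    apply matrix_ext_mulVec
    intro y
    rw [← Matrix.mulVec_mulVec, mv, mv', dotProduct_add, dotProduct_smul, Matrix.one_mulVec, smul_eq_mul,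
      add_sub_assoc, ← sub_smul]
    have : b ⬝ᵥ y - t⁻¹ * (b ⬝ᵥ y + b ⬝ᵥ y * b ⬝ᵥ a) = 0 := by
      have : b ⬝ᵥ y + b ⬝ᵥ y * b ⬝ᵥ a = t * (b ⬝ᵥ y) := by rw [ht]; ring
      rw [this, ← mul_assoc, inv_mul_cancel₀ hab, one_mul, sub_self]
    rw [this, zero_smul, add_zero]
  have h2 : m * m' = 1 := mul_eq_one_comm.1 h1
  have aq : a q = 0 := ha q le_rfl
  refine ⟨D m v, ⟨hE _ _ hv.1, ?_⟩, ?_, ?_⟩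
  · intro u hu htr
    have hT : Triv (q + 1) (m' * u * m) := by
      intro y hy
      rw [← Matrix.mulVec_mulVec, ← Matrix.mulVec_mulVec, htr (m *ᵥ y) (by
        rw [mv]; exact hy.add ((ha.mono (Nat.le_succ _)).smul _)), Matrix.mulVec_mulVec, h1, Matrix.one_mulVec]
    have hent : ∀ i l : Fin j, (q : ℕ) ≤ i → (m' * u * m) i l = u i l := by
      intro i l hi
      have e : ∀ M : Matrix (Fin j) (Fin j) F, M i l = (M *ᵥ Pi.single l 1) i := by
        intro M; rw [Matrix.mulVec_single_one]; rfl
      rw [e (m' * u * m), e u, ← Matrix.mulVec_mulVec, ← Matrix.mulVec_mulVec, mv', mv, Matrix.mulVec_add,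
        Matrix.mulVec_smul, htr a (ha.mono (Nat.le_succ _))]
      simp [ha i hi]
    have hU : UT (m' * u * m) := by
      constructor
      · intro i
        rcases le_or_gt (q : ℕ) i with h | h
        · rw [hent i i h, hu.1]
        · rw [hT.apply i (by omega), Matrix.one_apply_eq]
      · intro i l hl
        rcases le_or_gt (q : ℕ) i with h | h
        · rw [hent i l h, hu.2 _ _ hl]
        · rw [hT.apply i (by rw [Fin.lt_def] at hl; omega), Matrix.one_apply_ne hl.ne']
    have hsd : sd (m' * u * m) = sd u := by
      rw [sd_apply, sd_apply]
      refine Finset.sum_congr rfl fun i _ => Finset.sum_congr rfl fun l _ => ?_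
      split_ifs with h
      · rcases le_or_gt (q : ℕ) i with h' | h'
        · rw [hent i l h']
        · rw [hT.apply i (by omega), htr.apply i (by omega)]
      · rfl
    have e : u * m = m * (m' * u * m) := by
      rw [← Matrix.mul_assoc, ← Matrix.mul_assoc, h2, Matrix.one_mul]
    rw [← Module.End.mul_apply, ← map_mul, e, map_mul, Module.End.mul_apply, hv.2 _ hU hT, map_smul, hsd]
  · intro h
    apply hv0
    have : D m' (D m v) = 0 := by rw [h, map_zero]
    rwa [← Module.End.mul_apply, ← map_mul, h1, map_one, Module.End.one_apply] at this
  · intro x hx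
    have e : cw q x * m = m * cw q (m' *ᵥ x) := by
      apply matrix_ext_mulVec
      intro y
      rw [← Matrix.mulVec_mulVec, ← Matrix.mulVec_mulVec, cw_mulVec, cw_mulVec, Matrix.mulVec_add,
        Matrix.mulVec_smul, Matrix.mulVec_mulVec x m m', h2, Matrix.one_mulVec]
      congr 2
      rw [mv]; simp [aq]
    rw [← Module.End.mul_apply, ← map_mul, e, map_mul, Module.End.mul_apply, hW _ (by
      rw [mv']; rw [sub_eq_add_neg]; exact hx.add (ha.smul _).neg), map_smul]
    congr 2
    rw [mv', dotProduct_sub, sub_dotProduct, dotProduct_smul, smul_dotProduct]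
    simp only [smul_eq_mul]
    ring

/-- truncation -/
def tr (c : ℕ) (x : Fin j → F) : Fin j → F := fun i => if (i : ℕ) < c then x i else 0

lemma tr_supp (c : ℕ) (x : Fin j → F) : Supp c (tr c x) := by
  intro i hi; simp [tr, not_lt.2 hi]

lemma tr_add (c : ℕ) (x y : Fin j → F) : tr c (x + y) = tr c x + tr c y := by
  ext i; simp only [tr, Pi.add_apply]; split_ifs <;> simp

lemma tr_of_supp {c : ℕ} {x : Fin j → F} (h : Supp c x) : tr c x = x := by
  ext i; simp only [tr]; split_ifs with h1
  · rfl
  · rw [h i (not_lt.1 h1)]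

lemma sum_psi [Fintype F] [DecidableEq F] (hψ : ψ ≠ 1) (x : Fin j → F) (hx : x ≠ 0) :
    ∑ η : Fin j → F, ψ (-(η ⬝ᵥ x)) = 0 := by
  obtain ⟨i, hi⟩ := Function.ne_iff.1 hx
  obtain ⟨a, ha⟩ := DFunLike.ne_iff.1 hψ
  have e : ∑ η : Fin j → F, ψ (-(η ⬝ᵥ x)) = ψ a * ∑ η : Fin j → F, ψ (-(η ⬝ᵥ x)) := by
    rw [Finset.mul_sum, ← Equiv.sum_comp (Equiv.addRight (Pi.single i (-(a / x i))))]
    refine Finset.sum_congr rfl fun η _ => ?_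
    rw [Equiv.coe_addRight, ← AddChar.map_add_eq_mul]
    congr 1
    rw [add_dotProduct, single_dotProduct]
    have : a / x i * x i = a := div_mul_cancel₀ a hi
    rw [neg_mul, this]; ring
  have h3 : (ψ a - 1) * ∑ η : Fin j → F, ψ (-(η ⬝ᵥ x)) = 0 := by
    rw [sub_mul, ← e, one_mul, sub_self]
  rcases mul_eq_zero.1 h3 with h | h
  · exact absurd (sub_eq_zero.1 h) ha
  · exact h

lemma exists_WW [Fintype F] [DecidableEq F] (hψ : ψ ≠ 1) (hE : ∀ u, ∀ v ∈ E0, D u v ∈ E0) {p q : Fin j}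
    (hpq : (p : ℕ) + 1 = q) {v : V} (hv : v ∈ EE ψ D E0 (q + 1)) (hv0 : v ≠ 0) :
    ∃ v' ∈ EE ψ D E0 (q + 1), v' ≠ 0 ∧ ∃ η, WW D ψ q η v' := by
  let f : (Fin j → F) → V := fun η => ∑ x : Fin j → F, ψ (-(η ⬝ᵥ x)) • D (cw q (tr q x)) v
  have hsum : ∑ η, f η = (Fintype.card (Fin j → F) : ℂ) • v := by
    simp only [f]
    rw [Finset.sum_comm, Finset.sum_eq_single 0]
    · have : tr (q : ℕ) (0 : Fin j → F) = 0 := tr_of_supp (fun i _ => rfl)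
      simp [this, cw_zero]
      rw [← Nat.cast_pow, Nat.cast_smul_eq_nsmul]
    · intro x _ hx
      rw [← Finset.sum_smul, sum_psi hψ x hx, zero_smul]
    · simp
  obtain ⟨η, hη⟩ : ∃ η, f η ≠ 0 := by
    by_contra! h
    rw [Finset.sum_eq_zero (fun η _ => h η)] at hsum
    rcases smul_eq_zero.1 hsum.symm with h | h
    · exact Fintype.card_ne_zero (α := Fin j → F) (by exact_mod_cast h)
    · exact hv0 h
  refine ⟨f η, ?_, hη, η, ?_⟩
  · exact Submodule.sum_mem _ fun x _ => Submodule.smul_mem _ _ (cw_mem_EE hE hpq hv (tr_supp _ x))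
  · intro y hy
    simp only [f]
    conv_rhs => rw [← Equiv.sum_comp (Equiv.addRight y)]
    rw [map_sum, Finset.smul_sum]
    refine Finset.sum_congr rfl fun x _ => ?_
    rw [map_smul, smul_smul, ← AddChar.map_add_eq_mul, ← Module.End.mul_apply, ← map_mul,
      cw_mul q (tr_supp _ _ q le_rfl), Equiv.coe_addRight, tr_add, tr_of_supp hy, add_comm y, dotProduct_add]
    congr 2
    ring

lemma EE_descend [Fintype F] [DecidableEq F] (hψ : ψ ≠ 1) (hE : ∀ u, ∀ v ∈ E0, D u v ∈ E0)
    (hmax : ∀ J : Submodule F (Fin j → F), J ≠ ⊥ → J ≠ ⊤ → ∀ v ∈ E0,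
      (∀ X : Matrix (Fin j) (Fin j) F, (∀ x, X *ᵥ x ∈ J) → (∀ x ∈ J, X *ᵥ x = 0) → D (1 + X) v = v) → v = 0)
    {p q : Fin j}
    (hpq : (p : ℕ) + 1 = q) {v : V} (hv : v ∈ EE ψ D E0 (q + 1)) (hv0 : v ≠ 0) :
    ∃ v' ∈ EE ψ D E0 q, v' ≠ 0 := by
  obtain ⟨v, hv, hv0, η, hW⟩ := exists_WW hψ hE hpq hv hv0
  have hpq' : (p : ℕ) < q := by omega
  have key : ∀ v ∈ EE ψ D E0 (q + 1), v ≠ 0 → ∀ η, WW D ψ q η v → η p ≠ 0 → ∃ v' ∈ EE ψ D E0 q, v' ≠ 0 := by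
    intro v hv hv0 η hW hη
    have hdot : (tr q η - Pi.single p 1) ⬝ᵥ Pi.single p 1 = η p - 1 := by
      rw [dotProduct_single]; simp [tr, hpq']
    obtain ⟨v', h1, h2, h3⟩ := hW.move hE hv hv0 (Supp.single hpq' 1)
      (b := tr q η - Pi.single p 1) (by
        rw [sub_eq_add_neg]; exact (tr_supp _ _).add (Supp.single hpq' 1).neg) (by
        rw [hdot]; simpa using hη)
    refine ⟨v', WW.descend hpq h1 ?_, h2⟩
    intro x hx
    rw [h3 x hx, hdot]
    congr 2
    have e1 : (1 + (η p - 1))⁻¹ * η ⬝ᵥ Pi.single p 1 = 1 := by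
      rw [dotProduct_single, mul_one, add_sub_cancel, inv_mul_cancel₀ hη]
    have e2 : tr q η ⬝ᵥ x = η ⬝ᵥ x := by
      refine Finset.sum_congr rfl fun i _ => ?_
      simp only [tr]
      split_ifs with h
      · rfl
      · rw [hx i (not_lt.1 h)]; simp
    rw [e1, one_smul, sub_dotProduct, sub_dotProduct, e2]
    ring
  by_cases hp : η p ≠ 0
  · exact key v hv hv0 η hW hp
  push Not at hp
  by_cases hi : ∃ i : Fin j, (i : ℕ) < q ∧ η i ≠ 0
  · obtain ⟨i, hi, hη⟩ := hi
    have hip : i ≠ p := by rintro rfl; exact hη hp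
    have hdot : (Pi.single p 1 : Fin j → F) ⬝ᵥ Pi.single i 1 = 0 := by
      rw [dotProduct_single]; simp [hip]
    obtain ⟨v', h1, h2, h3⟩ := hW.move hE hv hv0 (Supp.single hi 1) (Supp.single hpq' 1) (by rw [hdot]; simp)
    refine key v' h1 h2 _ h3 ?_
    rw [hdot]
    simp [hp, hη]
  · exfalso
    push Not at hi
    have hηx : ∀ x, Supp q x → η ⬝ᵥ x = 0 := by
      intro x hx
      refine Finset.sum_eq_zero fun i _ => ?_
      rcases lt_or_ge (i : ℕ) q with h | h
      · rw [hi i h, zero_mul]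
      · rw [hx i h, mul_zero]
    let J : Submodule F (Fin j → F) :=
      { carrier := {x | Supp q x}
        zero_mem' := fun i _ => rfl
        add_mem' := fun ha hb => ha.add hb
        smul_mem' := fun t x hx => hx.smul t }
    refine hv0 (hmax J ?_ ?_ v hv.1 ?_)
    · intro h
      have : (Pi.single p 1 : Fin j → F) ∈ J := Supp.single hpq' 1
      rw [h, Submodule.mem_bot] at this
      simpa using congrFun this p
    · intro h
      have : (Pi.single q 1 : Fin j → F) ∈ J := h ▸ Submodule.mem_top
      simpa using this q le_rfl
    · intro X hX1 hX2
      have hX3 : ∀ i l : Fin j, (q : ℕ) ≤ i → X i l = 0 := by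
        intro i l h
        have := hX1 (Pi.single l 1) i h
        rwa [Matrix.mulVec_single_one, Matrix.col_apply] at this
      have hX4 : ∀ i l : Fin j, (l : ℕ) < q → X i l = 0 := by
        intro i l h
        have := congrFun (hX2 (Pi.single l 1) (Supp.single h 1)) i
        rwa [Matrix.mulVec_single_one, Matrix.col_apply] at this
      have hU : UT (1 + X) := by
        constructor
        · intro i
          rw [Matrix.add_apply, Matrix.one_apply_eq]
          rcases lt_or_ge (i : ℕ) q with h | h
          · rw [hX4 i i h, add_zero]
          · rw [hX3 i i h, add_zero]
        · intro i l hl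
          rw [Matrix.add_apply, Matrix.one_apply_ne hl.ne', zero_add]
          rcases lt_or_ge (l : ℕ) q with h | h
          · rw [hX4 i l h]
          · rw [hX3 i l (by rw [Fin.lt_def] at hl; omega)]
      have hT : Triv q (1 + X) := by
        intro x hx
        rw [Matrix.add_mulVec, Matrix.one_mulVec, hX2 x hx, add_zero]
      obtain ⟨x, u', k1, k2, k3, k4, k5⟩ := triv_fac hT hU
      have hsd : sd (1 + X) = X p q := by
        rw [map_add, sd_one, zero_add, sd_apply, Finset.sum_eq_single p, Finset.sum_eq_single q]
        · simp [hpq]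
        · intro b _ hb
          rw [if_neg]
          intro h; apply hb; ext; omega
        · simp
        · intro b _ hb
          refine Finset.sum_eq_zero fun l _ => ?_
          split_ifs with h
          · rcases lt_or_ge (l : ℕ) q with h' | h'
            · rw [hX4 b l h']
            · rw [hX3 b l]
              have : (b : ℕ) ≠ p := fun h => hb (Fin.ext h)
              omega
          · rfl
        · simp
      have hxp : x p = X p q := by
        rw [k5, Matrix.add_mulVec, Matrix.one_mulVec, add_sub_cancel_left, Matrix.mulVec_single_one,
          Matrix.col_apply]
      have hsu : sd u' = 0 := by
        rw [k4, sd_mul (cw_UT q k1) k2, sd_cw hpq, hxp] at hsd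
        simpa using hsd
      rw [k4, map_mul, Module.End.mul_apply, hv.2 u' k2 k3, hsu, map_smul, hW x k1, hηx x k1]
      simp

theorem whittaker [Fintype F] [DecidableEq F] (hψ : ψ ≠ 1) (hE : ∀ u, ∀ v ∈ E0, D u v ∈ E0)
    (hmax : ∀ J : Submodule F (Fin j → F), J ≠ ⊥ → J ≠ ⊤ → ∀ v ∈ E0,
      (∀ X : Matrix (Fin j) (Fin j) F, (∀ x, X *ᵥ x ∈ J) → (∀ x ∈ J, X *ᵥ x = 0) → D (1 + X) v = v) → v = 0)
    (hj : 0 < j) (hE0 : ∃ v ∈ E0, v ≠ 0) :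
    ∃ v ∈ E0, v ≠ 0 ∧ ∀ u, UT u → D u v = ψ (sd u) • v := by
  have main : ∀ d, d < j → ∃ v ∈ EE ψ D E0 (j - d), v ≠ 0 := by
    intro d
    induction d with
    | zero =>
      intro _
      obtain ⟨v, h1, h2⟩ := hE0
      refine ⟨v, ⟨h1, fun u _ ht => ?_⟩, h2⟩
      have : u = 1 := by
        apply matrix_ext_mulVec
        intro x
        rw [ht x (fun i hi => by have := i.2; omega), Matrix.one_mulVec]
      rw [this, sd_one]; simp
    | succ d ih =>
      intro hd
      obtain ⟨v, h1, h2⟩ := ih (by omega)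
      have := EE_descend hψ hE hmax (p := ⟨j - (d + 1) - 1, by omega⟩) (q := ⟨j - (d + 1), by omega⟩)
        (by simp only; omega) (v := v) (by
          have e : j - (d + 1) + 1 = j - d := by omega
          simp only [e]; exact h1) h2
      exact this
  obtain ⟨v, h1, h2⟩ := main (j - 1) (by omega)
  refine ⟨v, h1.1, h2, fun u hu => h1.2 u hu ?_⟩
  intro x hx
  have hx' : x = x ⟨0, hj⟩ • Pi.single ⟨0, hj⟩ 1 := by
    ext i
    by_cases hi : i = ⟨0, hj⟩
    · subst hi; simp
    · have : (i : ℕ) ≠ 0 := fun h => hi (Fin.ext h)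
      rw [hx i (by omega)]; simp [hi]
  rw [hx', Matrix.mulVec_smul, Matrix.mulVec_single_one]
  congr 1
  ext i
  rw [Matrix.col_apply]
  by_cases hi : i = ⟨0, hj⟩
  · subst hi; rw [hu.1]; simp
  · have : (i : ℕ) ≠ 0 := fun h => hi (Fin.ext h)
    rw [hu.2 _ _ (by rw [Fin.lt_def]; simp only; omega)]; simp [hi]

end
end GowAux


namespace GowAux
open Matrix

/-- transpose on units -/
def gt {F : Type} [Field F] {ι : Type} [Fintype ι] [DecidableEq ι] (g : (Matrix ι ι F)ˣ) :
    (Matrix ι ι F)ˣ where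
  val := (g : Matrix ι ι F)ᵀ
  inv := ((g⁻¹ : (Matrix ι ι F)ˣ) : Matrix ι ι F)ᵀ
  val_inv := by rw [← Matrix.transpose_mul, Units.inv_mul, Matrix.transpose_one]
  inv_val := by rw [← Matrix.transpose_mul, Units.mul_inv, Matrix.transpose_one]

section
variable {F : Type} [Field F] {ι : Type} [Fintype ι] [DecidableEq ι]

lemma gt_val (g : (Matrix ι ι F)ˣ) : ((gt g : (Matrix ι ι F)ˣ) : Matrix ι ι F) = (g : Matrix ι ι F)ᵀ := rfl

lemma gt_one : gt (1 : (Matrix ι ι F)ˣ) = 1 := by ext1; rw [gt_val]; simp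

lemma gt_mul (g h : (Matrix ι ι F)ˣ) : gt (g * h) = gt h * gt g := by
  ext1; simp [gt_val, Matrix.transpose_mul]

lemma gt_gt (g : (Matrix ι ι F)ˣ) : gt (gt g) = g := by ext1; simp [gt_val]

lemma gt_inv (g : (Matrix ι ι F)ˣ) : gt g⁻¹ = (gt g)⁻¹ := by
  apply eq_inv_of_mul_eq_one_left
  rw [← gt_mul, mul_inv_cancel, gt_one]

lemma UT.isUnit {j : ℕ} {u : Matrix (Fin j) (Fin j) F} (hu : UT u) : IsUnit u := by
  rw [Matrix.isUnit_iff_isUnit_det, Matrix.det_of_isUpperTriangular]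
  · simp [hu.1]
  · intro a b hab; exact hu.2 a b hab

end

section
variable {F : Type} [Field F] {κ : Type} [Fintype κ] [DecidableEq κ] {j : ℕ}

/-- unipotent radical -/
def nn (X : Matrix κ (Fin j) F) : Matrix (κ ⊕ Fin j) (κ ⊕ Fin j) F := fromBlocks 1 X 0 1
/-- lower block -/
def dd (u : Matrix (Fin j) (Fin j) F) : Matrix (κ ⊕ Fin j) (κ ⊕ Fin j) F := fromBlocks 1 0 0 u
/-- upper block -/
def ll (h : Matrix κ κ F) : Matrix (κ ⊕ Fin j) (κ ⊕ Fin j) F := fromBlocks h 0 0 1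

lemma nn_mul (X Y : Matrix κ (Fin j) F) : nn X * nn Y = nn (X + Y) := by
  simp [nn, fromBlocks_multiply, add_comm]
lemma dd_mul (u v : Matrix (Fin j) (Fin j) F) : (dd u : Matrix (κ ⊕ Fin j) (κ ⊕ Fin j) F) * dd v = dd (u * v) := by
  simp [dd, fromBlocks_multiply]
lemma ll_mul (u v : Matrix κ κ F) : (ll u : Matrix (κ ⊕ Fin j) (κ ⊕ Fin j) F) * ll v = ll (u * v) := by
  simp [ll, fromBlocks_multiply]
lemma dd_one : (dd 1 : Matrix (κ ⊕ Fin j) (κ ⊕ Fin j) F) = 1 := by simp [dd]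
lemma ll_one : (ll 1 : Matrix (κ ⊕ Fin j) (κ ⊕ Fin j) F) = 1 := by simp [ll]
lemma nn_zero : (nn 0 : Matrix (κ ⊕ Fin j) (κ ⊕ Fin j) F) = 1 := by simp [nn]
lemma nn_dd (X : Matrix κ (Fin j) F) (u : Matrix (Fin j) (Fin j) F) : nn X * dd u = dd u * nn (X * u) := by
  simp [nn, dd, fromBlocks_multiply]
lemma ll_nn (X : Matrix κ (Fin j) F) (h : Matrix κ κ F) : ll h * nn X = nn (h * X) * ll h := by
  simp [nn, ll, fromBlocks_multiply]
lemma ll_dd (u : Matrix (Fin j) (Fin j) F) (h : Matrix κ κ F) : ll h * dd u = dd u * ll h := by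
  simp [dd, ll, fromBlocks_multiply]
lemma ll_t (h : Matrix κ κ F) : (ll h : Matrix (κ ⊕ Fin j) (κ ⊕ Fin j) F)ᵀ = ll hᵀ := by
  simp [ll, fromBlocks_transpose]

variable {V : Type} [AddCommGroup V] [Module ℂ V]
  (R : Matrix (κ ⊕ Fin j) (κ ⊕ Fin j) F →* (V →ₗ[ℂ] V)) (ψ : AddChar F ℂ)

/-- action of lower block -/
def DD : Matrix (Fin j) (Fin j) F →* (V →ₗ[ℂ] V) where
  toFun u := R (dd u)
  map_one' := by rw [dd_one, map_one]
  map_mul' u v := by rw [← dd_mul, map_mul]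

/-- vectors fixed by the unipotent radical -/
def E0 : Submodule ℂ V where
  carrier := {v | ∀ X, R (nn X) v = v}
  zero_mem' := by simp
  add_mem' := by intro a b ha hb X; rw [map_add, ha, hb]
  smul_mem' := by intro t a ha X; rw [map_smul, ha]

lemma E0_stable (u : Matrix (Fin j) (Fin j) F) (v : V) (hv : v ∈ E0 R) : DD R u v ∈ E0 R := by
  intro X
  change R (nn X) (R (dd u) v) = R (dd u) v
  rw [← Module.End.mul_apply, ← map_mul, nn_dd, map_mul, Module.End.mul_apply, hv]

/-- Whittaker vectors -/
def EW : Submodule ℂ V where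
  carrier := {v | v ∈ E0 R ∧ ∀ u, UT u → R (dd u) v = ψ (sd u) • v}
  zero_mem' := ⟨(E0 R).zero_mem, by simp⟩
  add_mem' := by
    rintro a b ⟨ha, ha'⟩ ⟨hb, hb'⟩
    exact ⟨(E0 R).add_mem ha hb, fun u h1 => by rw [map_add, ha' u h1, hb' u h1, smul_add]⟩
  smul_mem' := by
    rintro t a ⟨ha, ha'⟩
    exact ⟨(E0 R).smul_mem t ha, fun u h1 => by rw [map_smul, ha' u h1, smul_comm]⟩

lemma EW_stable (h : (Matrix κ κ F)ˣ) (v : V) (hv : v ∈ EW R ψ) : R (ll (h : Matrix κ κ F)) v ∈ EW R ψ := by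
  refine ⟨fun X => ?_, fun u hu => ?_⟩
  · have : nn X * ll (h : Matrix κ κ F) = ll (h : Matrix κ κ F) * nn (((h⁻¹ : (Matrix κ κ F)ˣ) : Matrix κ κ F) * X) := by
      rw [ll_nn, ← Matrix.mul_assoc, Units.mul_inv, Matrix.one_mul]
    rw [← Module.End.mul_apply, ← map_mul, this, map_mul, Module.End.mul_apply, hv.1]
  · rw [← Module.End.mul_apply, ← map_mul, ← ll_dd, map_mul, Module.End.mul_apply, hv.2 u hu, map_smul]

/-- action on Whittaker vectors -/
def rhoE : Representation ℂ (Matrix κ κ F)ˣ (EW R ψ) where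
  toFun h := (R (ll (h : Matrix κ κ F))).restrict (EW_stable R ψ h)
  map_one' := by ext; simp [ll_one]
  map_mul' g h := by ext; simp [← ll_mul]

variable [Fintype F] [DecidableEq F]

/-- averaging over N -/
noncomputable def PN : V →ₗ[ℂ] V := ∑ X, R (nn X)

open Classical in
/-- averaging over U -/
noncomputable def PU : V →ₗ[ℂ] V := ∑ u : {u : Matrix (Fin j) (Fin j) F // UT u}, ψ (-(sd u.1)) • R (dd u.1)

lemma nn_PN (X : Matrix κ (Fin j) F) : R (nn X) * PN R = PN R := by
  rw [PN, Finset.mul_sum]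
  conv_rhs => rw [← Equiv.sum_comp (Equiv.addLeft X)]
  refine Finset.sum_congr rfl fun Y _ => ?_
  rw [← map_mul, nn_mul]; rfl

lemma PN_nn (X : Matrix κ (Fin j) F) : PN R * R (nn X) = PN R := by
  rw [PN, Finset.sum_mul]
  conv_rhs => rw [← Equiv.sum_comp (Equiv.addRight X)]
  refine Finset.sum_congr rfl fun Y _ => ?_
  rw [← map_mul, nn_mul]; rfl

lemma PN_dd {u : Matrix (Fin j) (Fin j) F} (hu : IsUnit u) : PN R * R (dd u) = R (dd u) * PN R := by
  rw [PN, Finset.sum_mul, Finset.mul_sum]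
  obtain ⟨u, rfl⟩ := hu
  let e : Matrix κ (Fin j) F ≃ Matrix κ (Fin j) F :=
    { toFun := fun X => X * (u : Matrix (Fin j) (Fin j) F)
      invFun := fun X => X * ((u⁻¹ : (Matrix (Fin j) (Fin j) F)ˣ) : Matrix (Fin j) (Fin j) F)
      left_inv := fun X => by simp only; rw [Matrix.mul_assoc, Units.mul_inv, Matrix.mul_one]
      right_inv := fun X => by simp only; rw [Matrix.mul_assoc, Units.inv_mul, Matrix.mul_one] }
  conv_rhs => rw [← Equiv.sum_comp e]
  refine Finset.sum_congr rfl fun Y _ => ?_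
  rw [← map_mul, nn_dd, map_mul]; rfl

lemma PN_ll (h : (Matrix κ κ F)ˣ) : PN R * R (ll (h : Matrix κ κ F)) = R (ll (h : Matrix κ κ F)) * PN R := by
  rw [PN, Finset.sum_mul, Finset.mul_sum]
  let e : Matrix κ (Fin j) F ≃ Matrix κ (Fin j) F :=
    { toFun := fun X => (h : Matrix κ κ F) * X
      invFun := fun X => ((h⁻¹ : (Matrix κ κ F)ˣ) : Matrix κ κ F) * X
      left_inv := fun X => by simp only; rw [← Matrix.mul_assoc, Units.inv_mul, Matrix.one_mul]
      right_inv := fun X => by simp only; rw [← Matrix.mul_assoc, Units.mul_inv, Matrix.one_mul] }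
  conv_lhs => rw [← Equiv.sum_comp e]
  refine Finset.sum_congr rfl fun Y _ => ?_
  rw [← map_mul, ← map_mul, ll_nn]; rfl

lemma UT_bij_left {u : Matrix (Fin j) (Fin j) F} (hu : UT u) :
    Function.Bijective (fun w : {u : Matrix (Fin j) (Fin j) F // UT u} =>
      (⟨u * w.1, hu.mul w.2⟩ : {u : Matrix (Fin j) (Fin j) F // UT u})) := by
  rw [← Finite.injective_iff_bijective]
  intro a b hab
  have : u * a.1 = u * b.1 := congrArg Subtype.val hab
  exact Subtype.ext (hu.isUnit.mul_left_cancel this)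

lemma UT_bij_right {u : Matrix (Fin j) (Fin j) F} (hu : UT u) :
    Function.Bijective (fun w : {u : Matrix (Fin j) (Fin j) F // UT u} =>
      (⟨w.1 * u, w.2.mul hu⟩ : {u : Matrix (Fin j) (Fin j) F // UT u})) := by
  rw [← Finite.injective_iff_bijective]
  intro a b hab
  have : a.1 * u = b.1 * u := congrArg Subtype.val hab
  exact Subtype.ext (hu.isUnit.mul_right_cancel this)

lemma dd_PU {u : Matrix (Fin j) (Fin j) F} (hu : UT u) : R (dd u) * PU R ψ = ψ (sd u) • PU R ψ := by
  classical
  rw [PU, Finset.mul_sum, Finset.smul_sum]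
  conv_rhs => rw [← Function.Bijective.sum_comp (UT_bij_left hu)]
  refine Finset.sum_congr rfl fun w _ => ?_
  rw [mul_smul_comm, ← map_mul, dd_mul, smul_smul, ← AddChar.map_add_eq_mul, sd_mul hu w.2]
  congr 2; ring

lemma PU_dd {u : Matrix (Fin j) (Fin j) F} (hu : UT u) : PU R ψ * R (dd u) = ψ (sd u) • PU R ψ := by
  classical
  rw [PU, Finset.sum_mul, Finset.smul_sum]
  conv_rhs => rw [← Function.Bijective.sum_comp (UT_bij_right hu)]
  refine Finset.sum_congr rfl fun w _ => ?_
  rw [smul_mul_assoc, ← map_mul, dd_mul, smul_smul, ← AddChar.map_add_eq_mul, sd_mul w.2 hu]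
  congr 2; ring

lemma PU_ll (h : Matrix κ κ F) : PU R ψ * R (ll h) = R (ll h) * PU R ψ := by
  classical
  rw [PU, Finset.sum_mul, Finset.mul_sum]
  refine Finset.sum_congr rfl fun w _ => ?_
  rw [smul_mul_assoc, mul_smul_comm, ← map_mul, ← map_mul, ll_dd]

lemma PN_PU : PN R * PU R ψ = PU R ψ * PN R := by
  classical
  rw [PU, Finset.sum_mul, Finset.mul_sum]
  refine Finset.sum_congr rfl fun w _ => ?_
  rw [smul_mul_assoc, mul_smul_comm, PN_dd R w.2.isUnit]

/-- projector -/
noncomputable def PE : V →ₗ[ℂ] V := PN R * PU R ψ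

lemma nn_PE (X : Matrix κ (Fin j) F) : R (nn X) * PE R ψ = PE R ψ := by
  rw [PE, ← mul_assoc, nn_PN]
lemma PE_nn (X : Matrix κ (Fin j) F) : PE R ψ * R (nn X) = PE R ψ := by
  rw [PE, PN_PU, mul_assoc, PN_nn]
lemma dd_PE {u : Matrix (Fin j) (Fin j) F} (hu : UT u) : R (dd u) * PE R ψ = ψ (sd u) • PE R ψ := by
  rw [PE, ← mul_assoc, ← PN_dd R hu.isUnit, mul_assoc, dd_PU R ψ hu, mul_smul_comm]
lemma PE_dd {u : Matrix (Fin j) (Fin j) F} (hu : UT u) : PE R ψ * R (dd u) = ψ (sd u) • PE R ψ := by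
  rw [PE, mul_assoc, PU_dd R ψ hu, mul_smul_comm]
lemma PE_ll (h : (Matrix κ κ F)ˣ) : PE R ψ * R (ll (h : Matrix κ κ F)) = R (ll (h : Matrix κ κ F)) * PE R ψ := by
  rw [PE, mul_assoc, PU_ll, ← mul_assoc, PN_ll, mul_assoc]
lemma PE_mem (v : V) : PE R ψ v ∈ EW R ψ := by
  refine ⟨fun X => ?_, fun u hu => ?_⟩
  · rw [← Module.End.mul_apply, nn_PE]
  · rw [← Module.End.mul_apply, dd_PE R ψ hu]; rfl

lemma PE_of_mem : ∃ c : ℂ, c ≠ 0 ∧ ∀ v ∈ EW R ψ, PE R ψ v = c • v := by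
  classical
  refine ⟨(Fintype.card (Matrix κ (Fin j) F) : ℂ) * (Fintype.card {u : Matrix (Fin j) (Fin j) F // UT u} : ℂ), ?_, ?_⟩
  · have : Nonempty {u : Matrix (Fin j) (Fin j) F // UT u} := ⟨⟨1, UT_one⟩⟩
    refine mul_ne_zero ?_ ?_
    · exact_mod_cast Fintype.card_ne_zero
    · exact_mod_cast Fintype.card_ne_zero
  · intro v hv
    have h1 : PU R ψ v = (Fintype.card {u : Matrix (Fin j) (Fin j) F // UT u} : ℂ) • v := by
      rw [PU, LinearMap.sum_apply]
      rw [Finset.sum_congr rfl (g := fun _ => v)]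
      · rw [Finset.sum_const, Finset.card_univ, Nat.cast_smul_eq_nsmul]
      · intro u _
        rw [LinearMap.smul_apply, hv.2 u.1 u.2, smul_smul, ← AddChar.map_add_eq_mul]
        simp
    have h2 : PN R v = (Fintype.card (Matrix κ (Fin j) F) : ℂ) • v := by
      rw [PN, LinearMap.sum_apply]
      rw [Finset.sum_congr rfl (g := fun _ => v)]
      · rw [Finset.sum_const, Finset.card_univ, Nat.cast_smul_eq_nsmul]
      · intro u _
        exact hv.1 u
    rw [PE, Module.End.mul_apply, h1, map_smul, h2, smul_smul, mul_comm]

end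
end GowAux


namespace GowAux
open Matrix

section
variable {F : Type} [Field F] [Fintype F] [DecidableEq F] {κ : Type} [Fintype κ] [DecidableEq κ] {j : ℕ}
  {V : Type} [AddCommGroup V] [Module ℂ V]

/-- the averaged operator -/
noncomputable def TT (R : Matrix (κ ⊕ Fin j) (κ ⊕ Fin j) F →* (V →ₗ[ℂ] V)) (em e : V →ₗ[ℂ] V)
    (M : Matrix (κ ⊕ Fin j) (κ ⊕ Fin j) F) : V →ₗ[ℂ] V :=
  ∑ l : (Matrix κ κ F)ˣ, em * R (ll (l : Matrix κ κ F) * M * ll ((l⁻¹ : (Matrix κ κ F)ˣ) : Matrix κ κ F)) * e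

variable (R : Matrix (κ ⊕ Fin j) (κ ⊕ Fin j) F →* (V →ₗ[ℂ] V)) (em e : V →ₗ[ℂ] V)

lemma ll_inv_mul (l : (Matrix κ κ F)ˣ) :
    (ll ((l⁻¹ : (Matrix κ κ F)ˣ) : Matrix κ κ F) : Matrix (κ ⊕ Fin j) (κ ⊕ Fin j) F) * ll (l : Matrix κ κ F) = 1 := by
  rw [ll_mul, Units.inv_mul, ll_one]

lemma ll_mul_inv (l : (Matrix κ κ F)ˣ) :
    (ll (l : Matrix κ κ F) : Matrix (κ ⊕ Fin j) (κ ⊕ Fin j) F) * ll ((l⁻¹ : (Matrix κ κ F)ˣ) : Matrix κ κ F) = 1 := by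
  rw [ll_mul, Units.mul_inv, ll_one]

lemma ll_conj_mul (l : (Matrix κ κ F)ˣ) (M Z : Matrix (κ ⊕ Fin j) (κ ⊕ Fin j) F) :
    ll (l : Matrix κ κ F) * (M * Z) * ll ((l⁻¹ : (Matrix κ κ F)ˣ) : Matrix κ κ F) =
    (ll (l : Matrix κ κ F) * M * ll ((l⁻¹ : (Matrix κ κ F)ˣ) : Matrix κ κ F)) *
    (ll (l : Matrix κ κ F) * Z * ll ((l⁻¹ : (Matrix κ κ F)ˣ) : Matrix κ κ F)) := by
  calc _ = ll (l : Matrix κ κ F) * M * 1 * Z * ll ((l⁻¹ : (Matrix κ κ F)ˣ) : Matrix κ κ F) := by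
        rw [Matrix.mul_one]; simp only [Matrix.mul_assoc]
    _ = _ := by rw [← ll_inv_mul l]; simp only [Matrix.mul_assoc]

lemma TT_right (Z : Matrix (κ ⊕ Fin j) (κ ⊕ Fin j) F) (t : ℂ)
    (h : ∀ l : (Matrix κ κ F)ˣ, R (ll (l : Matrix κ κ F) * Z * ll ((l⁻¹ : (Matrix κ κ F)ˣ) : Matrix κ κ F)) * e = t • e)
    (M : Matrix (κ ⊕ Fin j) (κ ⊕ Fin j) F) : TT R em e (M * Z) = t • TT R em e M := by
  rw [TT, TT, Finset.smul_sum]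
  refine Finset.sum_congr rfl fun l _ => ?_
  rw [ll_conj_mul, map_mul, ← mul_assoc, mul_assoc, h, mul_smul_comm]

lemma TT_left (Z : Matrix (κ ⊕ Fin j) (κ ⊕ Fin j) F) (t : ℂ)
    (h : ∀ l : (Matrix κ κ F)ˣ, em * R (ll (l : Matrix κ κ F) * Z * ll ((l⁻¹ : (Matrix κ κ F)ˣ) : Matrix κ κ F)) = t • em)
    (M : Matrix (κ ⊕ Fin j) (κ ⊕ Fin j) F) : TT R em e (Z * M) = t • TT R em e M := by
  rw [TT, TT, Finset.smul_sum]
  refine Finset.sum_congr rfl fun l _ => ?_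
  rw [ll_conj_mul, map_mul, ← mul_assoc, h, smul_mul_assoc, smul_mul_assoc]

lemma TT_conj (h : (Matrix κ κ F)ˣ) (M : Matrix (κ ⊕ Fin j) (κ ⊕ Fin j) F) :
    TT R em e (ll (h : Matrix κ κ F) * M * ll ((h⁻¹ : (Matrix κ κ F)ˣ) : Matrix κ κ F)) = TT R em e M := by
  rw [TT, TT]
  conv_rhs => rw [← Equiv.sum_comp (Equiv.mulRight h)]
  refine Finset.sum_congr rfl fun l _ => ?_
  have : ll (l : Matrix κ κ F) * (ll (h : Matrix κ κ F) * M * ll ((h⁻¹ : (Matrix κ κ F)ˣ) : Matrix κ κ F)) * ll ((l⁻¹ : (Matrix κ κ F)ˣ) : Matrix κ κ F)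
      = ll ((l * h : (Matrix κ κ F)ˣ) : Matrix κ κ F) * M * ll (((l * h)⁻¹ : (Matrix κ κ F)ˣ) : Matrix κ κ F) := by
    rw [_root_.mul_inv_rev, Units.val_mul, Units.val_mul, ← ll_mul, ← ll_mul]
    simp only [Matrix.mul_assoc]
  rw [this]; rfl

lemma ll_conj_nn (l : (Matrix κ κ F)ˣ) (X : Matrix κ (Fin j) F) :
    ll (l : Matrix κ κ F) * nn X * ll ((l⁻¹ : (Matrix κ κ F)ˣ) : Matrix κ κ F) = nn ((l : Matrix κ κ F) * X) := by
  rw [ll_nn, Matrix.mul_assoc, ll_mul_inv, Matrix.mul_one]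

lemma ll_conj_dd (l : (Matrix κ κ F)ˣ) (u : Matrix (Fin j) (Fin j) F) :
    ll (l : Matrix κ κ F) * dd u * ll ((l⁻¹ : (Matrix κ κ F)ˣ) : Matrix κ κ F) = dd u := by
  rw [ll_dd, Matrix.mul_assoc, ll_mul_inv, Matrix.mul_one]

lemma ll_conj_t (l : (Matrix κ κ F)ˣ) (M : Matrix (κ ⊕ Fin j) (κ ⊕ Fin j) F) :
    ll (l : Matrix κ κ F) * Mᵀ * ll ((l⁻¹ : (Matrix κ κ F)ˣ) : Matrix κ κ F) =
    (ll ((gt l)⁻¹ : (Matrix κ κ F)ˣ).1 * M * ll (((gt l)⁻¹⁻¹ : (Matrix κ κ F)ˣ) : Matrix κ κ F))ᵀ := by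
  rw [Matrix.transpose_mul, Matrix.transpose_mul, ll_t, ll_t, ← gt_val, ← gt_val, inv_inv, gt_gt,
    ← gt_inv, gt_gt, Matrix.mul_assoc]

variable (ψ : AddChar F ℂ)

theorem TT_orbit (hemN : ∀ X, em * R (nn X)ᵀ = em)
    (hemU : ∀ u, UT u → em * R (dd u)ᵀ = ψ (sd u) • em)
    (hmax : ∀ J : Submodule F (Fin j → F), J ≠ ⊥ → J ≠ ⊤ → ∀ v ∈ E0 R,
      (∀ X : Matrix (Fin j) (Fin j) F, (∀ x, X *ᵥ x ∈ J) → (∀ x ∈ J, X *ᵥ x = 0) → DD R (1 + X) v = v) → v = 0) :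
    OrbitHyp ψ (fun A B C D => TT R em (PE R ψ) (fromBlocks A B C D)) where
  b1 := by
    intro A B C D X
    have := TT_right R em (PE R ψ) (nn X) 1 (fun l => by rw [ll_conj_nn, nn_PE, one_smul]) (fromBlocks A B C D)
    rw [one_smul] at this
    rw [← this]
    simp [nn, fromBlocks_multiply, add_comm]
  a1 := by
    intro A B C D Y
    have := TT_left R em (PE R ψ) (nn Yᵀ)ᵀ 1 (fun l => by
      rw [ll_conj_t, ll_conj_nn, hemN, one_smul]) (fromBlocks A B C D)
    rw [one_smul] at this
    rw [← this]
    simp [nn, fromBlocks_multiply, fromBlocks_transpose, add_comm]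
  b2 := by
    intro A B C D u hu
    have := TT_right R em (PE R ψ) (dd u) _ (fun l => by rw [ll_conj_dd, dd_PE R ψ hu]) (fromBlocks A B C D)
    rw [← this]
    simp [dd, fromBlocks_multiply]
  a2 := by
    intro A B C D u hu
    have := TT_left R em (PE R ψ) (dd u)ᵀ _ (fun l => by
      rw [ll_conj_t, ll_conj_dd, hemU u hu]) (fromBlocks A B C D)
    rw [← this]
    simp [dd, fromBlocks_multiply, fromBlocks_transpose]
  c := by
    intro A B C D h h' h1 h2
    have := TT_conj R em (PE R ψ) ⟨h, h', h1, h2⟩ (fromBlocks A B C D)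
    rw [← this]
    simp [ll, fromBlocks_multiply]
  d := by
    classical
    intro A B C D J hJ hJ' hX
    let Q := {X : Matrix (Fin j) (Fin j) F // (∀ x, X *ᵥ x ∈ J) ∧ (∀ x ∈ J, X *ᵥ x = 0)}
    have hadd : ∀ X Y : Q, (∀ x, (X.1 + Y.1) *ᵥ x ∈ J) ∧ (∀ x ∈ J, (X.1 + Y.1) *ᵥ x = 0) := by
      intro X Y
      refine ⟨fun x => ?_, fun x hx => ?_⟩
      · rw [Matrix.add_mulVec]; exact J.add_mem (X.2.1 x) (Y.2.1 x)
      · rw [Matrix.add_mulVec, X.2.2 x hx, Y.2.2 x hx, add_zero]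
    have hmul : ∀ X Y : Q, (1 + X.1) * (1 + Y.1) = 1 + (X.1 + Y.1) := by
      intro X Y
      have : X.1 * Y.1 = 0 := by
        apply Matrix.ext_of_mulVec_single
        intro i
        rw [← Matrix.mulVec_mulVec, X.2.2 _ (Y.2.1 _), Matrix.zero_mulVec]
      rw [mul_add, add_mul, add_mul, this]; simp [add_assoc]
    let S : V →ₗ[ℂ] V := ∑ X : Q, DD R (1 + X.1)
    have hS : S * PE R ψ = 0 := by
      ext v
      apply hmax J hJ hJ'
      · rw [Module.End.mul_apply, LinearMap.sum_apply]
        exact Submodule.sum_mem _ fun X _ => E0_stable R _ _ (PE_mem R ψ v).1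
      · intro X hX1 hX2
        rw [← Module.End.mul_apply, ← mul_assoc]
        congr 2
        simp only [S]
        rw [Finset.mul_sum]
        have hb : Function.Bijective (fun Y : Q => (⟨X + Y.1, hadd ⟨X, hX1, hX2⟩ Y⟩ : Q)) := by
          rw [← Finite.injective_iff_bijective]
          intro a b hab
          exact Subtype.ext (add_left_cancel (congrArg Subtype.val hab))
        conv_rhs => rw [← hb.sum_comp]
        refine Finset.sum_congr rfl fun Y _ => ?_
        rw [← map_mul, hmul ⟨X, hX1, hX2⟩ Y]
    have h1 : ∀ X : Q, TT R em (PE R ψ) (fromBlocks A B C D * dd (1 + X.1)) = TT R em (PE R ψ) (fromBlocks A B C D) := by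
      intro X
      rw [← hX X.1 X.2.1 X.2.2]
      simp [dd, fromBlocks_multiply, Matrix.mul_add]
    have h2 : ∑ X : Q, TT R em (PE R ψ) (fromBlocks A B C D * dd (1 + X.1)) = 0 := by
      simp only [TT]
      rw [Finset.sum_comm]
      refine Finset.sum_eq_zero fun l _ => ?_
      calc _ = ∑ X : Q, em * R (ll (l : Matrix κ κ F) * fromBlocks A B C D * ll ((l⁻¹ : (Matrix κ κ F)ˣ) : Matrix κ κ F)) *
            (DD R (1 + X.1) * PE R ψ) := by
              refine Finset.sum_congr rfl fun X _ => ?_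
              rw [ll_conj_mul, ll_conj_dd, map_mul]
              simp only [mul_assoc]; rfl
        _ = em * R (ll (l : Matrix κ κ F) * fromBlocks A B C D * ll ((l⁻¹ : (Matrix κ κ F)ˣ) : Matrix κ κ F)) * (S * PE R ψ) := by
              rw [← Finset.mul_sum, ← Finset.sum_mul]
        _ = 0 := by rw [hS, mul_zero]
    rw [Finset.sum_congr rfl (fun X _ => h1 X), Finset.sum_const, Finset.card_univ,
      ← Nat.cast_smul_eq_nsmul ℂ] at h2
    have : Nonempty Q := ⟨⟨0, by simp, by simp⟩⟩
    exact (smul_eq_zero.1 h2).resolve_left (by exact_mod_cast Fintype.card_ne_zero)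

theorem step [FiniteDimensional ℂ V] (hψ : ψ ≠ 1) (hj : 0 < j)
    (B : V →ₗ[ℂ] V →ₗ[ℂ] ℂ) (hB : Function.Injective B) (hskew : ∀ v u, B v u = - B u v)
    (hR : ∀ M v u, B (R M v) u = B v (R Mᵀ u))
    (hburn : ∀ x : V →ₗ[ℂ] V, ∃ c : (Matrix (κ ⊕ Fin j) (κ ⊕ Fin j) F)ˣ → ℂ, x = ∑ g, c g • R g)
    (hsym : HasSym (Matrix κ κ F)ˣ gt)
    (hE0 : ∃ v ∈ E0 R, v ≠ 0)
    (hmax : ∀ J : Submodule F (Fin j → F), J ≠ ⊥ → J ≠ ⊤ → ∀ v ∈ E0 R,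
      (∀ X : Matrix (Fin j) (Fin j) F, (∀ x, X *ᵥ x ∈ J) → (∀ x ∈ J, X *ᵥ x = 0) → DD R (1 + X) v = v) → v = 0) :
    False := by
  classical
  obtain ⟨w, hw0, hw, hwu⟩ := whittaker hψ (fun u v hv => E0_stable R u v hv) hmax hj hE0
  have hwE : w ∈ EW R ψ := ⟨hw0, hwu⟩
  have hnt : Nontrivial (EW R ψ) := ⟨⟨w, hwE⟩, 0, fun h => hw (congrArg Subtype.val h)⟩
  obtain ⟨b, hb0, hbf, hbs⟩ := hsym (EW R ψ) (rhoE R ψ)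
  -- right nondegeneracy
  have hnd : ∀ a a', (∀ v, B v a = B v a') → a = a' := by
    intro a a' h
    apply hB
    ext v
    rw [hskew, h, ← hskew]
  obtain ⟨c, hc0, hc⟩ := PE_of_mem R ψ
  -- representing forms
  have hBf : Function.Injective B.flip := fun a a' h => hnd a a' fun v => LinearMap.congr_fun h v
  let Φ : V ≃ₗ[ℂ] Module.Dual ℂ V := LinearEquiv.ofInjectiveOfFinrankEq B.flip hBf Subspace.dual_finrank_eq.symm
  have hΦ : ∀ v f, B v (Φ.symm f) = f v := by
    intro v f
    have : Φ (Φ.symm f) = f := Φ.apply_symm_apply f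
    exact LinearMap.congr_fun this v
  -- adjoint of e
  let em : V →ₗ[ℂ] V := Φ.symm.toLinearMap ∘ₗ (B ∘ₗ PE R ψ).flip
  have hem : ∀ v u, B (PE R ψ v) u = B v (em u) := by
    intro v u
    simp [em, hΦ]
  have hem' : ∀ v u, B (em v) u = B v (PE R ψ u) := by
    intro v u
    rw [hskew, ← hem, ← hskew]
  have hadj : ∀ (M : Matrix (κ ⊕ Fin j) (κ ⊕ Fin j) F) (t : ℂ), R M * PE R ψ = t • PE R ψ → em * R Mᵀ = t • em := by
    intro M t h
    ext u
    apply hnd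
    intro v
    rw [Module.End.mul_apply, ← hem, ← hR, ← Module.End.mul_apply, h, LinearMap.smul_apply, LinearMap.smul_apply,
      map_smul, LinearMap.smul_apply, map_smul, hem]
  have horb := TT_orbit R em ψ (fun X => by simpa using hadj (nn X) 1 (by rw [nn_PE, one_smul]))
    (fun u hu => hadj (dd u) _ (dd_PE R ψ hu)) hmax
  have horb' : ∀ g : (Matrix (κ ⊕ Fin j) (κ ⊕ Fin j) F)ˣ, TT R em (PE R ψ) (g : Matrix _ _ F)ᵀ = TT R em (PE R ψ) g := by
    intro g
    have := horb.main hψ g.1.toBlocks₁₁ g.1.toBlocks₁₂ g.1.toBlocks₂₁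
      g.1.toBlocks₂₂ (by rw [fromBlocks_toBlocks]; exact g.isUnit)
    simpa only [← fromBlocks_transpose, fromBlocks_toBlocks] using this
  have hTadj : ∀ M v u, B (TT R em (PE R ψ) M v) u = B v (TT R em (PE R ψ) Mᵀ u) := by
    intro M v u
    let eqv : (Matrix κ κ F)ˣ ≃ (Matrix κ κ F)ˣ :=
      { toFun := fun l => (gt l)⁻¹
        invFun := fun l => (gt l)⁻¹
        left_inv := fun l => by simp only; rw [gt_inv, gt_gt, inv_inv]
        right_inv := fun l => by simp only; rw [gt_inv, gt_gt, inv_inv] }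
    simp only [TT, LinearMap.sum_apply, map_sum]
    rw [← Equiv.sum_comp eqv]
    refine Finset.sum_congr rfl fun l _ => ?_
    rw [ll_conj_t]
    simp only [Module.End.mul_apply]
    rw [hem', hR, hem]
    rfl
  have hTself : ∀ (g : (Matrix (κ ⊕ Fin j) (κ ⊕ Fin j) F)ˣ) v u,
      B (TT R em (PE R ψ) g v) u = B v (TT R em (PE R ψ) g u) := by
    intro g v u
    rw [hTadj, horb']
  -- the form beta
  let pe : V →ₗ[ℂ] EW R ψ := (PE R ψ).codRestrict _ (PE_mem R ψ)
  let β : V →ₗ[ℂ] V →ₗ[ℂ] ℂ := b.compl₁₂ pe pe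
  let x : V →ₗ[ℂ] V := Φ.symm.toLinearMap ∘ₗ β.flip
  have hx : ∀ v u, B v (x u) = b (pe v) (pe u) := by
    intro v u
    simp [x, hΦ, β]
  have hpe : ∀ v, pe (PE R ψ v) = c • pe v := by
    intro v
    apply Subtype.ext
    exact hc _ (PE_mem R ψ v)
  have hx1 : em * x * PE R ψ = (c * c) • x := by
    ext u
    apply hnd
    intro v
    simp only [Module.End.mul_apply, LinearMap.smul_apply, map_smul]
    rw [← hem, hx, hx, hpe, hpe]
    simp [mul_assoc]
  have hpl : ∀ (h : (Matrix κ κ F)ˣ) v, pe (R (ll (h : Matrix κ κ F)) v) = rhoE R ψ h (pe v) := by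
    intro h v
    apply Subtype.ext
    change PE R ψ (R (ll (h : Matrix κ κ F)) v) = R (ll (h : Matrix κ κ F)) (PE R ψ v)
    rw [← Module.End.mul_apply, PE_ll, Module.End.mul_apply]
  have hx2 : ∀ h : (Matrix κ κ F)ˣ, R (ll (h : Matrix κ κ F)) * x = x * R (ll (h : Matrix κ κ F)) := by
    intro h
    ext u
    apply hnd
    intro v
    simp only [Module.End.mul_apply]
    have h1 : B v (R (ll (h : Matrix κ κ F)) (x u)) = B (R (ll ((gt h : (Matrix κ κ F)ˣ) : Matrix κ κ F)) v) (x u) := by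
      rw [hR, ll_t, ← gt_val, gt_gt]
    rw [h1, hx, hx, hpl, hpl, hbf, gt_gt]
  have hx3 : ∀ h : (Matrix κ κ F)ˣ, R (ll (h : Matrix κ κ F)) * x * R (ll ((h⁻¹ : (Matrix κ κ F)ˣ) : Matrix κ κ F)) = x := by
    intro h
    rw [hx2, mul_assoc, ← map_mul, ll_mul_inv, map_one, mul_one]
  obtain ⟨a, ha⟩ := hburn x
  have hx4 : ((Fintype.card (Matrix κ κ F)ˣ : ℂ) * (c * c)) • x = ∑ g, a g • TT R em (PE R ψ) g := by
    have h1 : ∀ l : (Matrix κ κ F)ˣ, em * (R (ll (l : Matrix κ κ F)) * (∑ g, a g • R (g : Matrix _ _ F)) *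
        R (ll ((l⁻¹ : (Matrix κ κ F)ˣ) : Matrix κ κ F))) * PE R ψ = (c * c) • x := by
      intro l
      rw [← ha, hx3, hx1]
    have h2 := Finset.sum_congr (rfl : (Finset.univ : Finset (Matrix κ κ F)ˣ) = Finset.univ) (fun l _ => h1 l)
    rw [Finset.sum_const, Finset.card_univ, ← Nat.cast_smul_eq_nsmul ℂ, smul_smul] at h2
    rw [← h2]
    simp only [Finset.mul_sum, Finset.sum_mul, TT, Finset.smul_sum]
    rw [Finset.sum_comm]
    refine Finset.sum_congr rfl fun g _ => Finset.sum_congr rfl fun l _ => ?_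
    simp only [mul_smul_comm, smul_mul_assoc, map_mul, mul_assoc]
  have hcard : ((Fintype.card (Matrix κ κ F)ˣ : ℂ) * (c * c)) ≠ 0 :=
    mul_ne_zero (by exact_mod_cast Fintype.card_ne_zero) (mul_ne_zero hc0 hc0)
  have hx5 : ∀ v u, B (x v) u = B v (x u) := by
    intro v u
    have h1 : B ((((Fintype.card (Matrix κ κ F)ˣ : ℂ) * (c * c)) • x) v) u = B v ((((Fintype.card (Matrix κ κ F)ˣ : ℂ) * (c * c)) • x) u) := by
      rw [hx4]
      simp only [LinearMap.sum_apply, map_sum, LinearMap.smul_apply, map_smul, hTself]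
    simp only [LinearMap.smul_apply, map_smul] at h1
    exact mul_left_cancel₀ hcard h1
  have hβ : ∀ v u, b (pe v) (pe u) = 0 := by
    intro v u
    have h1 := hx5 v u
    rw [hskew, hx, hx, hbs (pe u)] at h1
    have h2 : (2 : ℂ) * b (pe v) (pe u) = 0 := by linear_combination -h1
    simpa using h2
  have hpe2 : ∀ v : EW R ψ, pe v.1 = c • v := fun v => Subtype.ext (hc _ v.2)
  apply hb0
  ext v u
  have h1 := hβ v.1 u.1
  rw [hpe2, hpe2] at h1
  simpa [hc0] using h1

end
end GowAux


namespace GowAux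
open Matrix

section
variable {F : Type} [Field F] {ι : Type} [Fintype ι] [DecidableEq ι]
  {V : Type} [AddCommGroup V] [Module ℂ V]

open Classical in
/-- extension by zero -/
noncomputable def ext0 (ρ : Representation ℂ (Matrix ι ι F)ˣ V) : Matrix ι ι F →* (V →ₗ[ℂ] V) where
  toFun M := if h : IsUnit M then ρ h.unit else 0
  map_one' := by
    have : (isUnit_one : IsUnit (1 : Matrix ι ι F)).unit = 1 := by ext1; rfl
    simp
  map_mul' M N := by
    by_cases hM : IsUnit M
    · by_cases hN : IsUnit N
      · have hMN := hM.mul hN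
        rw [dif_pos hM, dif_pos hN, dif_pos hMN, ← map_mul]
        congr 1; ext1; rfl
      · rw [dif_neg hN, dif_neg, mul_zero]
        intro h
        rw [Matrix.isUnit_iff_isUnit_det, Matrix.det_mul] at h
        exact hN ((Matrix.isUnit_iff_isUnit_det _).2 (isUnit_of_mul_isUnit_right h))
    · rw [dif_neg hM, dif_neg, zero_mul]
      intro h
      rw [Matrix.isUnit_iff_isUnit_det, Matrix.det_mul] at h
      exact hM ((Matrix.isUnit_iff_isUnit_det _).2 (isUnit_of_mul_isUnit_left h))

lemma ext0_unit (ρ : Representation ℂ (Matrix ι ι F)ˣ V) (g : (Matrix ι ι F)ˣ) :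
    ext0 ρ (g : Matrix ι ι F) = ρ g := by
  classical
  change (if h : IsUnit (g : Matrix ι ι F) then ρ h.unit else 0) = _
  rw [dif_pos g.isUnit]
  congr 1; ext1; rfl

lemma ext0_nonunit (ρ : Representation ℂ (Matrix ι ι F)ˣ V) (M : Matrix ι ι F) (h : ¬ IsUnit M) :
    ext0 ρ M = 0 := by
  classical
  change (if h : IsUnit M then ρ h.unit else 0) = _
  rw [dif_neg h]

lemma ext0_form (ρ : Representation ℂ (Matrix ι ι F)ˣ V) (B : V →ₗ[ℂ] V →ₗ[ℂ] ℂ) (hB : IsForm ρ gt B)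
    (M : Matrix ι ι F) (v u : V) : B (ext0 ρ M v) u = B v (ext0 ρ Mᵀ u) := by
  by_cases h : IsUnit M
  · obtain ⟨g, rfl⟩ := h
    rw [← gt_val, ext0_unit, ext0_unit, hB]
  · rw [ext0_nonunit ρ M h, ext0_nonunit]
    · simp
    · intro h'
      apply h
      rw [Matrix.isUnit_iff_isUnit_det] at h' ⊢
      rwa [Matrix.det_transpose] at h'

end

section
variable {F : Type} [Field F] {ι ι' : Type} [Fintype ι] [DecidableEq ι] [Fintype ι'] [DecidableEq ι']

/-- reindexing of units -/
def gre (e : ι ≃ ι') : (Matrix ι ι F)ˣ ≃* (Matrix ι' ι' F)ˣ :=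
  Units.mapEquiv (Matrix.reindexAlgEquiv F F e).toMulEquiv

lemma gre_val (e : ι ≃ ι') (g : (Matrix ι ι F)ˣ) :
    ((gre e g : (Matrix ι' ι' F)ˣ) : Matrix ι' ι' F) = (g : Matrix ι ι F).submatrix e.symm e.symm := rfl

lemma gre_gt (e : ι ≃ ι') (g : (Matrix ι ι F)ˣ) : gre e (gt g) = gt (gre e g) := by
  ext1
  rw [gre_val, gt_val, gt_val, gre_val, Matrix.transpose_submatrix]
end

section
variable {G H : Type} [Group G] [Group H] {s : G → G} {s' : H → H} {V : Type} [AddCommGroup V] [Module ℂ V]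

/-- pulling back -/
def pull (f : G ≃* H) (ρ : Representation ℂ H V) : Representation ℂ G V := ρ.comp f.toMonoidHom

lemma pull_apply (f : G ≃* H) (ρ : Representation ℂ H V) (g : G) : pull f ρ g = ρ (f g) := rfl

lemma Irr.pull (f : G ≃* H) {ρ : Representation ℂ H V} (h : Irr ρ) : Irr (pull f ρ) := by
  refine ⟨h.1, fun W hW => h.2 W fun g w hw => ?_⟩
  have := hW (f.symm g) w hw
  rwa [pull_apply, f.apply_symm_apply] at this

lemma IsForm.pull (f : G ≃* H) (hf : ∀ g, f (s g) = s' (f g)) {ρ : Representation ℂ H V}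
    {B : V →ₗ[ℂ] V →ₗ[ℂ] ℂ} (h : IsForm ρ s' B) : IsForm (pull f ρ) s B := by
  intro g v u
  rw [pull_apply, pull_apply, hf, h]

lemma HasSym.transport (f : G ≃* H) (hf : ∀ g, f (s g) = s' (f g)) (h : HasSym G s) : HasSym H s' := by
  intro V _ _ _ _ ρ
  obtain ⟨B, h0, h1, h2⟩ := h V (GowAux.pull f ρ)
  refine ⟨B, h0, fun g v u => ?_, h2⟩
  have := h1 (f.symm g) v u
  rwa [pull_apply, pull_apply, hf, f.apply_symm_apply] at this

lemma NoSkew.transport (f : G ≃* H) (hf : ∀ g, f (s g) = s' (f g)) (h : NoSkew G s) : NoSkew H s' := by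
  intro V _ _ _ ρ hρ B hB hs
  exact h V (GowAux.pull f ρ) (hρ.pull f) B (hB.pull f hf) hs
end

section
variable {F : Type} [Field F]

lemma exists_p {j : ℕ} (J : Submodule F (Fin j → F)) (hJ : J ≠ ⊥) (hJ' : J ≠ ⊤) :
    ∃ (d j' : ℕ) (ε : Fin d ⊕ Fin j' ≃ Fin j) (p : (Matrix (Fin j) (Fin j) F)ˣ), 0 < d ∧ 0 < j' ∧ d + j' = j ∧
      (∀ x : Fin j → F, (∀ b, x (ε (Sum.inr b)) = 0) → (p : Matrix (Fin j) (Fin j) F) *ᵥ x ∈ J) ∧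
      (∀ y ∈ J, ∀ b, (((p⁻¹ : (Matrix (Fin j) (Fin j) F)ˣ) : Matrix (Fin j) (Fin j) F) *ᵥ y) (ε (Sum.inr b)) = 0) := by
  obtain ⟨J', hc⟩ := J.exists_isCompl
  have hsum := Submodule.finrank_add_eq_of_isCompl hc
  rw [Module.finrank_fin_fun] at hsum
  let ε : Fin (Module.finrank F J) ⊕ Fin (Module.finrank F J') ≃ Fin j := finSumFinEquiv.trans (finCongr hsum)
  let L : (Fin j → F) ≃ₗ[F] (Fin j → F) :=
    (LinearEquiv.funCongrLeft F F ε).trans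
      ((LinearEquiv.sumArrowLequivProdArrow _ _ F F).trans
        ((LinearEquiv.prodCongr (Module.finBasis F J).equivFun.symm (Module.finBasis F J').equivFun.symm).trans
          (Submodule.prodEquivOfIsCompl J J' hc)))
  have hL1 : ∀ x : Fin j → F, (∀ b, x (ε (Sum.inr b)) = 0) → L x ∈ J := by
    intro x hx
    have : (fun b => x (ε (Sum.inr b))) = 0 := funext hx
    have h2 : L x = ((Module.finBasis F J).equivFun.symm (fun a => x (ε (Sum.inl a))) : Fin j → F)
       + ((Module.finBasis F J').equivFun.symm (fun a => x (ε (Sum.inr a))) : Fin j → F) := rfl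
    rw [h2, this, map_zero, Submodule.coe_zero, add_zero]
    exact Subtype.coe_prop _
  have hL2 : ∀ y ∈ J, ∀ b, (L.symm y) (ε (Sum.inr b)) = 0 := by
    intro y hy
    let x : Fin j → F := fun i => Sum.elim ((Module.finBasis F J).equivFun ⟨y, hy⟩) 0 (ε.symm i)
    have h2 : L x = ((Module.finBasis F J).equivFun.symm (fun a => x (ε (Sum.inl a))) : Fin j → F)
       + ((Module.finBasis F J').equivFun.symm (fun a => x (ε (Sum.inr a))) : Fin j → F) := rfl
    have h3 : (fun a => x (ε (Sum.inl a))) = (Module.finBasis F J).equivFun ⟨y, hy⟩ := by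
      funext a; simp only [x, Equiv.symm_apply_apply, Sum.elim_inl]
    have h4 : (fun a => x (ε (Sum.inr a))) = 0 := by
      funext a; simp only [x, Equiv.symm_apply_apply, Sum.elim_inr]
    rw [h3, h4, LinearEquiv.symm_apply_apply, map_zero] at h2
    have h5 : L x = y := by rw [h2]; simp
    rw [← h5, LinearEquiv.symm_apply_apply]
    exact fun b => congrFun h4 b
  let p : (Matrix (Fin j) (Fin j) F)ˣ :=
    { val := LinearMap.toMatrix' L.toLinearMap
      inv := LinearMap.toMatrix' L.symm.toLinearMap
      val_inv := by rw [← LinearMap.toMatrix'_comp]; simp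
      inv_val := by rw [← LinearMap.toMatrix'_comp]; simp }
  refine ⟨_, _, ε, p, ?_, ?_, hsum, ?_, ?_⟩
  · rw [Nat.pos_iff_ne_zero]; exact fun h => hJ (Submodule.finrank_eq_zero.1 h)
  · rw [Nat.pos_iff_ne_zero]
    intro h
    have := Submodule.finrank_eq_zero.1 h
    subst this
    exact hJ' (by simpa using hc.sup_eq_top)
  · intro x hx
    change LinearMap.toMatrix' L.toLinearMap *ᵥ x ∈ J
    rw [← Matrix.toLin'_apply, Matrix.toLin'_toMatrix']
    exact hL1 x hx
  · intro y hy b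
    change (LinearMap.toMatrix' L.symm.toLinearMap *ᵥ y) _ = 0
    rw [← Matrix.toLin'_apply, Matrix.toLin'_toMatrix']
    exact hL2 y hy b

lemma nn_isUnit {κ : Type} [Fintype κ] [DecidableEq κ] {j : ℕ} (X : Matrix κ (Fin j) F) : IsUnit (nn X) := by
  rw [Matrix.isUnit_iff_isUnit_det, nn]; simp

variable [Fintype F] [DecidableEq F]

theorem claim (ψ : AddChar F ℂ) (hψ : ψ ≠ 1) : ∀ (j : ℕ) (κ : Type) [Fintype κ] [DecidableEq κ],
    (∀ (κ' : Type) [Fintype κ'] [DecidableEq κ'], Fintype.card κ' < Fintype.card κ + j →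
      HasSym (Matrix κ' κ' F)ˣ gt) → 0 < j →
    ∀ (V : Type) [AddCommGroup V] [Module ℂ V] [FiniteDimensional ℂ V]
      (ρ : Representation ℂ (Matrix (κ ⊕ Fin j) (κ ⊕ Fin j) F)ˣ V),
      Irr ρ → ∀ B : V →ₗ[ℂ] V →ₗ[ℂ] ℂ, IsForm ρ gt B → (∀ v u, B v u = - B u v) →
      (∃ v ∈ E0 (ext0 ρ), v ≠ 0) → B = 0 := by
  intro j
  induction j using Nat.strong_induction_on with
  | _ j ih =>
  intro κ _ _ hsym hj V _ _ _ ρ hρ B hB hskew hE0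
  by_contra hB0
  by_cases hmax : ∀ J : Submodule F (Fin j → F), J ≠ ⊥ → J ≠ ⊤ → ∀ v ∈ E0 (ext0 ρ),
      (∀ X : Matrix (Fin j) (Fin j) F, (∀ x, X *ᵥ x ∈ J) → (∀ x ∈ J, X *ᵥ x = 0) → DD (ext0 ρ) (1 + X) v = v) → v = 0
  · refine step (ext0 ρ) ψ hψ hj B (hρ.form_inj hB hB0) hskew (ext0_form ρ B hB) ?_ (hsym κ (by omega)) hE0 hmax
    intro x
    obtain ⟨c, hc⟩ := hρ.burnside x
    exact ⟨c, by simpa only [ext0_unit] using hc⟩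
  · push Not at hmax
    obtain ⟨J, hJ, hJ', v, hv, hfix, hv0⟩ := hmax
    obtain ⟨d, j', ε, p, hd, hj', hdj, hp1, hp2⟩ := exists_p J hJ hJ'
    let σ : (κ ⊕ Fin d) ⊕ Fin j' ≃ κ ⊕ Fin j := (Equiv.sumAssoc κ (Fin d) (Fin j')).trans (Equiv.sumCongr (Equiv.refl κ) ε)
    refine hB0 (ih j' (by omega) (κ ⊕ Fin d) ?_ hj' V (pull (gre σ) ρ) (hρ.pull _) B (hB.pull _ (gre_gt σ)) hskew ?_)
    · intro κ' _ _ h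
      apply hsym κ'
      rw [Fintype.card_sum, Fintype.card_fin] at h
      omega
    · set pi : Matrix (Fin j) (Fin j) F := ((p⁻¹ : (Matrix (Fin j) (Fin j) F)ˣ) : Matrix (Fin j) (Fin j) F) with hpi
      have hppi : (p : Matrix (Fin j) (Fin j) F) * pi = 1 := p.mul_inv
      have hpip : pi * (p : Matrix (Fin j) (Fin j) F) = 1 := p.inv_mul
      refine ⟨ext0 ρ (dd pi) v, ?_, ?_⟩
      · intro X'
        obtain ⟨g, hg⟩ := nn_isUnit X'
        rw [← hg, ext0_unit, pull_apply, ← ext0_unit, gre_val, hg]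
        let X : Matrix κ (Fin j) F := fun i b => Sum.elim (fun _ => 0) (fun b => X' (Sum.inl i) b) (ε.symm b)
        let Y0 : Matrix (Fin j) (Fin j) F := fun a b => Sum.elim
          (fun a => Sum.elim (fun _ => 0) (fun b => X' (Sum.inr a) b) (ε.symm b)) (fun _ => 0) (ε.symm a)
        have h1 : (nn X').submatrix σ.symm σ.symm = fromBlocks 1 X 0 (1 + Y0) := by
          have hs1 : ∀ i : κ, σ.symm (Sum.inl i) = Sum.inl (Sum.inl i) := by intro i; simp [σ]
          have hs2 : ∀ a, σ.symm (Sum.inr (ε (Sum.inl a))) = Sum.inl (Sum.inr a) := by intro i; simp [σ]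
          have hs3 : ∀ a, σ.symm (Sum.inr (ε (Sum.inr a))) = Sum.inr a := by intro i; simp [σ]
          have hX1 : ∀ i b, X i (ε (Sum.inl b)) = 0 := by
            intro i b; simp only [X, Equiv.symm_apply_apply, Sum.elim_inl]
          have hX2 : ∀ i b, X i (ε (Sum.inr b)) = X' (Sum.inl i) b := by
            intro i b; simp only [X, Equiv.symm_apply_apply, Sum.elim_inr]
          have hZ1 : ∀ a b, Y0 (ε (Sum.inl a)) (ε (Sum.inl b)) = 0 := by
            intro i b; simp only [Y0, Equiv.symm_apply_apply, Sum.elim_inl]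
          have hZ2 : ∀ a b, Y0 (ε (Sum.inl a)) (ε (Sum.inr b)) = X' (Sum.inr a) b := by
            intro i b; simp only [Y0, Equiv.symm_apply_apply, Sum.elim_inl, Sum.elim_inr]
          have hZ3 : ∀ a b, Y0 (ε (Sum.inr a)) b = 0 := by
            intro i b; simp only [Y0, Equiv.symm_apply_apply, Sum.elim_inr]
          clear_value X Y0 σ
          ext a b
          rcases a with a | a
          · rcases b with b | b
            · simp [nn, hs1, Matrix.one_apply]
            · obtain ⟨b, rfl⟩ := ε.surjective b
              rcases b with b | b
              · simp [nn, hs1, hs2, hX1, hX2, Matrix.one_apply]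
              · simp [nn, hs1, hs3, hX1, hX2]
          · obtain ⟨a, rfl⟩ := ε.surjective a
            rcases a with a | a
            · rcases b with b | b
              · simp [nn, hs1, hs2, Matrix.one_apply]
              · obtain ⟨b, rfl⟩ := ε.surjective b
                rcases b with b | b
                · simp [nn, hs2, hZ1, hZ2, hZ3, Matrix.one_apply]
                · simp [nn, hs2, hs3, hZ1, hZ2, hZ3, Matrix.one_apply]
            · rcases b with b | b
              · simp [nn, hs1, hs3]
              · obtain ⟨b, rfl⟩ := ε.surjective b
                rcases b with b | b
                · simp [nn, hs2, hs3, hZ1, hZ2, hZ3, Matrix.one_apply]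
                · simp [nn, hs3, hZ1, hZ2, hZ3, Matrix.one_apply]
        have hY1 : ∀ z b, (Y0 *ᵥ z) (ε (Sum.inr b)) = 0 := by
          intro z b
          simp [Matrix.mulVec, dotProduct, Y0]
        have hY2 : ∀ z : Fin j → F, (∀ b, z (ε (Sum.inr b)) = 0) → Y0 *ᵥ z = 0 := by
          intro z hz
          funext a
          simp only [Matrix.mulVec, dotProduct]
          refine Finset.sum_eq_zero fun b _ => ?_
          obtain ⟨b, rfl⟩ := ε.surjective b
          rcases b with b | b
          · obtain ⟨a, rfl⟩ := ε.surjective a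
            rcases a with a | a <;> simp [Y0]
          · rw [hz, mul_zero]
        have h2 : (nn X').submatrix σ.symm σ.symm * dd pi =
            dd pi * (dd (1 + (p : Matrix (Fin j) (Fin j) F) * Y0 * pi) * nn (X * pi)) := by
          rw [h1, dd, dd, nn]
          simp only [fromBlocks_multiply, Matrix.mul_add, Matrix.add_mul, Matrix.mul_one, Matrix.one_mul, Matrix.mul_zero, Matrix.zero_mul, add_zero, zero_add]
          rw [Matrix.mul_assoc (p : Matrix (Fin j) (Fin j) F), ← Matrix.mul_assoc pi (p : Matrix (Fin j) (Fin j) F), hpip, Matrix.one_mul]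
        rw [← Module.End.mul_apply, ← map_mul, h2, map_mul, map_mul, Module.End.mul_apply, Module.End.mul_apply, hv]
        congr 1
        apply hfix
        · intro x
          rw [← Matrix.mulVec_mulVec, ← Matrix.mulVec_mulVec]
          exact hp1 _ (hY1 _)
        · intro x hx
          rw [← Matrix.mulVec_mulVec, ← Matrix.mulVec_mulVec, hY2 _ (hp2 x hx), Matrix.mulVec_zero]
      · intro h
        apply hv0
        have h3 : ext0 ρ (dd (p : Matrix (Fin j) (Fin j) F)) (ext0 ρ (dd pi) v) = v := by
          rw [← Module.End.mul_apply, ← map_mul, dd_mul, hppi, dd_one, map_one]; rfl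
        rw [← h3, h, map_zero]

theorem hasSym_GL : ∀ (n : ℕ) (κ : Type) [Fintype κ] [DecidableEq κ], Fintype.card κ = n →
    HasSym (Matrix κ κ F)ˣ gt := by
  obtain ⟨ψ, hψ'⟩ := (AddChar.exists_apply_ne_zero (α := F) (a := 1)).2 one_ne_zero
  have hψ : ψ ≠ 1 := by rintro rfl; simp at hψ'
  intro n
  induction n using Nat.strong_induction_on with
  | _ n ih =>
  intro κ _ _ hκ
  have e : Fin 0 ⊕ Fin n ≃ κ := (Equiv.emptySum (Fin 0) (Fin n)).trans (Fintype.equivFinOfCardEq hκ).symm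
  suffices h : NoSkew (Matrix (Fin 0 ⊕ Fin n) (Fin 0 ⊕ Fin n) F)ˣ gt by
    refine HasSym.transport (gre e) (gre_gt e) (h.hasSym gt_one gt_mul gt_gt ?_)
    intro g
    obtain ⟨S, hS, hS'⟩ := exists_similar_transpose (g : Matrix (Fin 0 ⊕ Fin n) (Fin 0 ⊕ Fin n) F)
    obtain ⟨S, rfl⟩ := hS
    exact ⟨S, Units.ext hS'⟩
  intro V _ _ _ ρ hρ B hB hskew
  have := hρ.1
  obtain ⟨v, hv⟩ := exists_ne (0 : V)
  rcases Nat.eq_zero_or_pos n with rfl | hn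
  · have hsub : ∀ g : (Matrix (Fin 0 ⊕ Fin 0) (Fin 0 ⊕ Fin 0) F)ˣ, g = 1 := fun g => by
      ext a; exact (IsEmpty.false a).elim
    rcases hρ.2 (Submodule.span ℂ {v}) (fun g w hw => by rw [hsub g, map_one]; exact hw) with h | h
    · exact (hv (Submodule.span_singleton_eq_bot.1 h)).elim
    · have hall : ∀ w : V, ∃ t : ℂ, t • v = w := fun w =>
        Submodule.mem_span_singleton.1 (h ▸ Submodule.mem_top)
      have hvv : B v v = 0 := by
        have h2 := hskew v v
        have : (2 : ℂ) * B v v = 0 := by linear_combination h2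
        simpa using this
      ext w w'
      obtain ⟨t, rfl⟩ := hall w
      obtain ⟨t', rfl⟩ := hall w'
      simp [hvv]
  · refine claim ψ hψ n (Fin 0) ?_ hn V ρ hρ B hB hskew ⟨v, ?_, hv⟩
    · intro κ' _ _ h
      exact ih (Fintype.card κ') (by simpa using h) κ' rfl
    · intro X
      rw [Subsingleton.elim X 0, nn_zero, map_one]; rfl

end
end GowAux


namespace GowAux
open Matrix

section
variable {G : Type} [Group G] [Fintype G]

/-- a nonzero intertwiner between irreducibles identifies characters -/
lemma char_eq_of_intertwine {V W : Type} [AddCommGroup V] [Module ℂ V] [AddCommGroup W] [Module ℂ W]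
    {ρ : Representation ℂ G V} {τ : Representation ℂ G W} (hρ : Irr ρ) (hτ : Irr τ) (f : V →ₗ[ℂ] W)
    (hf : ∀ g v, f (ρ g v) = τ g (f v)) (hf0 : f ≠ 0) : ρ.character = τ.character := by
  have hk : LinearMap.ker f = ⊥ := by
    rcases hρ.2 (LinearMap.ker f) (fun g w hw => by
      rw [LinearMap.mem_ker] at hw ⊢; rw [hf, hw, map_zero]) with h | h
    · exact h
    · exact (hf0 (LinearMap.ker_eq_top.1 h)).elim
  have hr : LinearMap.range f = ⊤ := by
    rcases hτ.2 (LinearMap.range f) (fun g w hw => by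
      obtain ⟨v, rfl⟩ := hw; exact ⟨ρ g v, hf g v⟩) with h | h
    · exact (hf0 (LinearMap.range_eq_bot.1 h)).elim
    · exact h
  let e := LinearEquiv.ofBijective f ⟨LinearMap.ker_eq_bot.1 hk, LinearMap.range_eq_top.1 hr⟩
  funext g
  have : τ g = e.conj (ρ g) := by
    ext w
    obtain ⟨v, rfl⟩ := e.surjective w
    rw [LinearEquiv.conj_apply_apply, LinearEquiv.symm_apply_apply]
    exact (hf g v).symm
  rw [Representation.character, Representation.character, this, LinearMap.trace_conj']

variable {n : ℕ} {d : Fin n → ℕ}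

/-- the block representations -/
noncomputable def rb (φ : MonoidAlgebra ℂ G ≃ₐ[ℂ] ((i : Fin n) → Matrix (Fin (d i)) (Fin (d i)) ℂ))
    (i : Fin n) : Representation ℂ G (Fin (d i) → ℂ) where
  toFun g := Matrix.toLin' (φ (MonoidAlgebra.of ℂ G g) i)
  map_one' := by rw [map_one, map_one, Pi.one_apply, Matrix.toLin'_one]; rfl
  map_mul' g h := by rw [map_mul, map_mul, Pi.mul_apply, Matrix.toLin'_mul]; rfl

lemma rb_apply (φ : MonoidAlgebra ℂ G ≃ₐ[ℂ] ((i : Fin n) → Matrix (Fin (d i)) (Fin (d i)) ℂ))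
    (i : Fin n) (g : G) (v : Fin (d i) → ℂ) :
    rb φ i g v = (φ (MonoidAlgebra.of ℂ G g) i) *ᵥ v := rfl

lemma rb_alg (φ : MonoidAlgebra ℂ G ≃ₐ[ℂ] ((i : Fin n) → Matrix (Fin (d i)) (Fin (d i)) ℂ))
    (i : Fin n) (a : MonoidAlgebra ℂ G) :
    (rb φ i).asAlgebraHom a = Matrix.toLin' (φ a i) := by
  induction a using MonoidAlgebra.induction_on with
  | of g => rw [Representation.asAlgebraHom_of]; rfl
  | add x y hx hy => rw [map_add, map_add, hx, hy, Pi.add_apply, map_add]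
  | smul r x hx => rw [map_smul, map_smul, hx, Pi.smul_apply, map_smul]

lemma alg_mem {V : Type} [AddCommGroup V] [Module ℂ V] (ρ : Representation ℂ G V) (W : Submodule ℂ V)
    (hW : ∀ g, ∀ w ∈ W, ρ g w ∈ W) (a : MonoidAlgebra ℂ G) (w : V) (hw : w ∈ W) :
    ρ.asAlgebraHom a w ∈ W := by
  induction a using MonoidAlgebra.induction_on with
  | of g => rw [Representation.asAlgebraHom_of]; exact hW g w hw
  | add x y hx hy => rw [map_add]; exact W.add_mem hx hy
  | smul r x hx => rw [map_smul]; exact W.smul_mem r hx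

lemma rb_irr (φ : MonoidAlgebra ℂ G ≃ₐ[ℂ] ((i : Fin n) → Matrix (Fin (d i)) (Fin (d i)) ℂ))
    (hd : ∀ i, NeZero (d i)) (i : Fin n) : Irr (rb φ i) := by
  have := hd i
  refine ⟨inferInstance, fun W hW => ?_⟩
  by_cases h : W = ⊥
  · exact Or.inl h
  · right
    obtain ⟨w, hw, hw0⟩ := (Submodule.ne_bot_iff W).1 h
    obtain ⟨b, hb⟩ := Function.ne_iff.1 hw0
    rw [eq_top_iff]
    intro x _
    have h1 := alg_mem (rb φ i) W hW (φ.symm (Pi.single i (vecMulVec x (Pi.single b (w b)⁻¹)))) w hw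
    rw [rb_alg, AlgEquiv.apply_symm_apply, Pi.single_eq_same, Matrix.toLin'_apply, Matrix.vecMulVec_mulVec] at h1
    have hb' : w b ≠ 0 := hb
    simpa [hb'] using h1

lemma trace_alg {V W : Type} [AddCommGroup V] [Module ℂ V] [AddCommGroup W] [Module ℂ W]
    {ρ : Representation ℂ G V} {τ : Representation ℂ G W} (h : ρ.character = τ.character) (a : MonoidAlgebra ℂ G) :
    LinearMap.trace ℂ V (ρ.asAlgebraHom a) = LinearMap.trace ℂ W (τ.asAlgebraHom a) := by
  induction a using MonoidAlgebra.induction_on with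
  | of g => rw [Representation.asAlgebraHom_of, Representation.asAlgebraHom_of]; exact congrFun h g
  | add x y hx hy => rw [map_add, map_add, map_add, map_add, hx, hy]
  | smul r x hx => rw [map_smul, map_smul, map_smul, map_smul, hx]

lemma rb_inj (φ : MonoidAlgebra ℂ G ≃ₐ[ℂ] ((i : Fin n) → Matrix (Fin (d i)) (Fin (d i)) ℂ))
    (hd : ∀ i, NeZero (d i)) : Function.Injective (fun i => (rb φ i).character) := by
  intro i j hij
  by_contra hne
  have := hd i
  have h := trace_alg hij (φ.symm (Pi.single i 1))
  rw [rb_alg, rb_alg, AlgEquiv.apply_symm_apply, Pi.single_eq_same, Pi.single_eq_of_ne (Ne.symm hne)] at h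
  simp [Matrix.toLin'_one, NeZero.ne] at h

lemma irr_char (φ : MonoidAlgebra ℂ G ≃ₐ[ℂ] ((i : Fin n) → Matrix (Fin (d i)) (Fin (d i)) ℂ))
    {Q : Type} [AddCommGroup Q] [Module ℂ Q] {τ : Representation ℂ G Q}
    (hd : ∀ i, NeZero (d i)) (hτ : Irr τ) : ∃ i, (rb φ i).character = τ.character := by
  classical
  have := hτ.1
  obtain ⟨q, hq⟩ := exists_ne (0 : Q)
  have h1 : ∃ i, ∃ a : Fin (d i), τ.asAlgebraHom (φ.symm (Pi.single i (Matrix.single a a 1))) q ≠ 0 := by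
    by_contra hcon
    push Not at hcon
    apply hq
    have h2 : (1 : MonoidAlgebra ℂ G) = ∑ i, ∑ a : Fin (d i), φ.symm (Pi.single i (Matrix.single a a 1)) := by
      apply φ.injective
      rw [map_one]
      simp only [map_sum, AlgEquiv.apply_symm_apply]
      funext i
      rw [Finset.sum_apply, Finset.sum_eq_single i]
      · rw [Finset.sum_apply]
        simp only [Pi.single_eq_same, Pi.one_apply]
        exact (Matrix.sum_single_one).symm
      · intro b _ hb
        rw [Finset.sum_apply]
        exact Finset.sum_eq_zero fun a _ => Pi.single_eq_of_ne (Ne.symm hb) _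
      · simp
    have h3 : τ.asAlgebraHom 1 q = q := by rw [map_one]; rfl
    rw [h2] at h3
    rw [← h3]
    simp only [map_sum, LinearMap.sum_apply]
    exact Finset.sum_eq_zero fun i _ => Finset.sum_eq_zero fun a _ => hcon i a
  obtain ⟨i, a, ha⟩ := h1
  refine ⟨i, ?_⟩
  let f : (Fin (d i) → ℂ) →ₗ[ℂ] Q :=
    { toFun := fun w => τ.asAlgebraHom (φ.symm (Pi.single i (vecMulVec w (Pi.single a 1)))) q
      map_add' := fun w w' => by
        rw [Matrix.add_vecMulVec, Pi.single_add, map_add, map_add, LinearMap.add_apply]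
      map_smul' := fun r w => by
        rw [Matrix.smul_vecMulVec, Pi.single_smul, map_smul, map_smul, LinearMap.smul_apply]; rfl }
  apply char_eq_of_intertwine (rb_irr φ hd i) hτ f
  · intro g w
    change τ.asAlgebraHom (φ.symm (Pi.single i (vecMulVec (rb φ i g w) (Pi.single a 1)))) q =
      τ g (τ.asAlgebraHom (φ.symm (Pi.single i (vecMulVec w (Pi.single a 1)))) q)
    rw [← Representation.asAlgebraHom_of τ, ← Module.End.mul_apply, ← map_mul]
    congr 2
    apply φ.injective
    rw [map_mul, AlgEquiv.apply_symm_apply, AlgEquiv.apply_symm_apply, rb_apply]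
    funext k
    by_cases hk : k = i
    · subst hk
      rw [Pi.mul_apply, Pi.single_eq_same, Pi.single_eq_same, Matrix.mul_vecMulVec]
    · rw [Pi.mul_apply, Pi.single_eq_of_ne hk, Pi.single_eq_of_ne hk, mul_zero]
  · intro h0
    apply ha
    have h4 := LinearMap.congr_fun h0 (Pi.single a 1)
    change τ.asAlgebraHom (φ.symm (Pi.single i (vecMulVec (Pi.single a 1) (Pi.single a 1)))) q = 0 at h4
    rw [Matrix.single_eq_single_vecMulVec_single]
    exact h4

lemma irr_simple {Q : Type} [AddCommGroup Q] [Module ℂ Q] [FiniteDimensional ℂ Q] {τ : Representation ℂ G Q}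
    (hτ : Irr τ) : CategoryTheory.Simple (FDRep.of τ) := by
  classical
  rw [FDRep.simple_iff_char_is_norm_one]
  have := hτ.isIrreducible
  have hne : (Nat.card G : ℂ) ≠ 0 := by exact_mod_cast Nat.card_pos.ne'
  have hi : Invertible (Nat.card G : ℂ) := invertibleOfNonzero hne
  have h := Representation.char_orthonormal τ τ
  rw [if_pos ⟨Representation.Equiv.refl τ⟩] at h
  have h2 : ∑ g : G, τ.character g * τ.character g⁻¹ = Nat.card G := by
    field_simp at h
    simpa using h
  exact h2

lemma simple_char (V : FDRep ℂ G) [CategoryTheory.Simple V] :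
    ∃ (Q : Type) (_ : AddCommGroup Q) (_ : Module ℂ Q) (_ : FiniteDimensional ℂ Q)
      (τ : Representation ℂ G Q), Irr τ ∧ V.character = τ.character := by
  have hnt : Nontrivial V := by
    by_contra h
    rw [not_nontrivial_iff_subsingleton] at h
    apply CategoryTheory.id_nonzero V
    ext x
    exact Subsingleton.elim _ _
  have : FiniteDimensional ℂ V := inferInstance
  obtain ⟨Q, i1, i2, i3, τ, f, hτ, hf, hfg⟩ := exists_quot (V := V) V.ρ
  refine ⟨Q, i1, i2, i3, τ, hτ, ?_⟩
  have := irr_simple hτ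
  have := hτ.1
  let m : V ⟶ FDRep.of τ := ⟨CategoryTheory.InducedCategory.homMk (ModuleCat.ofHom f), fun g => by
    ext1
    ext v
    exact hfg g v⟩
  have hm : m ≠ 0 := by
    intro h
    obtain ⟨x, hx⟩ := exists_ne (0 : Q)
    obtain ⟨v, rfl⟩ := hf x
    apply hx
    have h2 : m.hom.hom.hom v = (0 : V ⟶ FDRep.of τ).hom.hom.hom v := by rw [h]
    exact h2
  have := CategoryTheory.isIso_of_hom_simple hm
  exact FDRep.char_iso (CategoryTheory.asIso m)

theorem count_left (φ : MonoidAlgebra ℂ G ≃ₐ[ℂ] ((i : Fin n) → Matrix (Fin (d i)) (Fin (d i)) ℂ))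
    (hd : ∀ i, NeZero (d i)) :
    (∑ᶠ χ ∈ {f : G → ℂ | ∃ V : FDRep ℂ G, CategoryTheory.Simple V ∧ f = FDRep.character V}, χ 1) =
      ∑ i, (d i : ℂ) := by
  have hS : {f : G → ℂ | ∃ V : FDRep ℂ G, CategoryTheory.Simple V ∧ f = FDRep.character V} =
      Set.range (fun i => (rb φ i).character) := by
    ext f
    constructor
    · rintro ⟨V, hV, rfl⟩
      obtain ⟨Q, _, _, _, τ, hτ, h⟩ := simple_char V
      obtain ⟨i, hi⟩ := irr_char φ hd hτ
      exact ⟨i, by rw [h]; exact hi⟩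
    · rintro ⟨i, rfl⟩
      exact ⟨FDRep.of (rb φ i), irr_simple (rb_irr φ hd i), rfl⟩
  rw [hS, finsum_mem_range (rb_inj φ hd), finsum_eq_sum_of_fintype]
  refine Finset.sum_congr rfl fun i _ => ?_
  rw [Representation.char_one, Module.finrank_fin_fun]

theorem count_right (φ : MonoidAlgebra ℂ G ≃ₐ[ℂ] ((i : Fin n) → Matrix (Fin (d i)) (Fin (d i)) ℂ))
    (hd : ∀ i, NeZero (d i)) (s : G → G) (hsym : HasSym G s) :
    ∑ i, (d i : ℂ) = (Nat.card {g : G // s g = g} : ℂ) := by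
  classical
  have hex : ∀ i, ∃ S : Matrix (Fin (d i)) (Fin (d i)) ℂ, ∃ S' : Matrix (Fin (d i)) (Fin (d i)) ℂ, S' * S = 1 ∧
      Sᵀ = S ∧ ∀ g, φ (MonoidAlgebra.of ℂ G (s g)) i = S' * (φ (MonoidAlgebra.of ℂ G g) i)ᵀ * S := by
    intro i
    have hirr := rb_irr φ hd i
    have := hirr.1
    obtain ⟨B, hB0, hB, hBs⟩ := hsym _ (rb φ i)
    have hBi := hirr.form_inj hB hB0
    let S := LinearMap.toMatrix₂' ℂ B
    have hBS : ∀ v u, B v u = v ⬝ᵥ (S *ᵥ u) := by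
      intro v u
      rw [← Matrix.toLinearMap₂'_apply']
      simp only [S]
      rw [Matrix.toLinearMap₂'_toMatrix']
    have hSt : Sᵀ = S := by
      ext a b
      exact hBs _ _
    have hSu : IsUnit S := by
      rw [← Matrix.mulVec_injective_iff_isUnit]
      intro u u' h
      apply hBi
      refine LinearMap.ext fun v => ?_
      rw [hBs, hBs u', hBS, hBS]
      exact congrArg _ h
    obtain ⟨Su, hSu⟩ := hSu
    refine ⟨S, ((Su⁻¹ : (Matrix (Fin (d i)) (Fin (d i)) ℂ)ˣ) : Matrix (Fin (d i)) (Fin (d i)) ℂ), ?_, hSt, ?_⟩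
    · rw [← hSu, Units.inv_mul]
    · intro g
      have h1 : (φ (MonoidAlgebra.of ℂ G g) i)ᵀ * S = S * φ (MonoidAlgebra.of ℂ G (s g)) i := by
        ext a b
        have h2 := hB g (Pi.single a 1) (Pi.single b 1)
        rw [hBS, hBS, rb_apply, rb_apply, Matrix.mulVec_mulVec, Matrix.dotProduct_mulVec,
          ← Matrix.vecMul_transpose, Matrix.vecMul_vecMul] at h2
        simpa using h2
      rw [Matrix.mul_assoc, h1, ← Matrix.mul_assoc, ← hSu, Units.inv_mul, Matrix.one_mul]
  choose S S' hS1 hS2 hS3 using hex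
  let P := (i : Fin n) → Matrix (Fin (d i)) (Fin (d i)) ℂ
  let Θ : P →ₗ[ℂ] P :=
    { toFun := fun M i => S' i * (M i)ᵀ * S i
      map_add' := fun M N => by
        funext i
        change S' i * (M i + N i)ᵀ * S i = S' i * (M i)ᵀ * S i + S' i * (N i)ᵀ * S i
        rw [Matrix.transpose_add, Matrix.mul_add, Matrix.add_mul]
      map_smul' := fun r M => by
        funext i
        change S' i * (r • M i)ᵀ * S i = r • (S' i * (M i)ᵀ * S i)
        rw [Matrix.transpose_smul, Matrix.mul_smul, Matrix.smul_mul] }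
  let bG := (MonoidAlgebra.basis G ℂ).map φ.toLinearEquiv
  have hbG : ∀ g, bG g = φ (MonoidAlgebra.of ℂ G g) := by
    intro g
    simp [bG]
  have hΘ : ∀ g, Θ (bG g) = bG (s g) := by
    intro g
    rw [hbG, hbG]
    funext i
    exact (hS3 i g).symm
  have ht1 : LinearMap.trace ℂ P Θ = (Nat.card {g : G // s g = g} : ℂ) := by
    rw [LinearMap.trace_eq_matrix_trace ℂ bG, Matrix.trace]
    simp only [Matrix.diag_apply, LinearMap.toMatrix_apply, hΘ, Module.Basis.repr_self, Finsupp.single_apply]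
    rw [Finset.sum_boole, Nat.card_eq_fintype_card, Fintype.card_subtype]
  have ht2 : LinearMap.trace ℂ P Θ = ∑ i, (d i : ℂ) := by
    let bP := Pi.basis (fun i : Fin n => Matrix.stdBasis ℂ (Fin (d i)) (Fin (d i)))
    have hrep : ∀ (m : ℕ) (M : Matrix (Fin m) (Fin m) ℂ) (ab : Fin m × Fin m), (Matrix.stdBasis ℂ (Fin m) (Fin m)).repr M ab = M ab.1 ab.2 := by
      intro m M ab
      rfl
    rw [LinearMap.trace_eq_matrix_trace ℂ bP, Matrix.trace]
    simp only [Matrix.diag_apply, LinearMap.toMatrix_apply]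
    rw [Fintype.sum_sigma]
    refine Finset.sum_congr rfl fun i _ => ?_
    have h1 : ∀ ab : Fin (d i) × Fin (d i), (bP.repr (Θ (bP ⟨i, ab⟩))) ⟨i, ab⟩ = S' i ab.1 ab.2 * S i ab.2 ab.1 := by
      rintro ⟨a, b⟩
      simp only [bP]
      rw [Pi.basis_repr, hrep, Pi.basis_apply]
      change (S' i * (Pi.single (M := fun i => Matrix (Fin (d i)) (Fin (d i)) ℂ) i (Matrix.stdBasis ℂ (Fin (d i)) (Fin (d i)) (a, b)) i)ᵀ * S i) a b = _
      rw [Pi.single_eq_same, Matrix.stdBasis_eq_single, Matrix.transpose_single]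
      have := congrFun (congrFun (hS2 i) a) b
      rw [Matrix.transpose_apply] at this
      rw [this]
      rw [Matrix.single_eq_single_vecMulVec_single, Matrix.mul_vecMulVec, Matrix.vecMulVec_mul, Matrix.vecMulVec_apply]
      simp
    simp only [h1]
    rw [Fintype.sum_prod_type]
    have h2 : (S' i * S i).trace = (d i : ℂ) := by rw [hS1]; simp
    rw [← h2, Matrix.trace]
    refine Finset.sum_congr rfl fun a _ => ?_
    rw [Matrix.diag_apply, Matrix.mul_apply]
  rw [← ht1, ht2]

end

theorem count {G : Type} [Group G] [Fintype G] (s : G → G) (hsym : HasSym G s) :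
    (∑ᶠ χ ∈ {f : G → ℂ | ∃ V : FDRep ℂ G, CategoryTheory.Simple V ∧ f = FDRep.character V}, χ 1) =
      (Nat.card {g : G // s g = g} : ℂ) := by
  have : NeZero (Nat.card G : ℂ) := ⟨by exact_mod_cast Nat.card_pos.ne'⟩
  have : FiniteDimensional ℂ (MonoidAlgebra ℂ G) := Module.Finite.of_basis (MonoidAlgebra.basis G ℂ)
  obtain ⟨n, d, hd, ⟨φ⟩⟩ := IsSemisimpleRing.exists_algEquiv_pi_matrix_of_isAlgClosed ℂ (MonoidAlgebra ℂ G)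
  rw [count_left φ hd, count_right φ hd s hsym]

end GowAux

open CategoryTheory

/-- Gow's theorem: for an odd prime power `q` (realized as the cardinality of a finite field
`F`), the sum of the degrees `χ(1)` of the irreducible complex characters of `GL_k(F_q)`
equals the number of symmetric matrices in `GL_k(F_q)`. -/
theorem gow_sum_of_character_degrees (q k : ℕ) (F : Type) [Field F] [Fintype F]
    (hF : Fintype.card F = q) (hq : Odd q) :
    (∑ᶠ χ ∈ {f : Matrix.GeneralLinearGroup (Fin k) F → ℂ |
        ∃ V : FDRep ℂ (Matrix.GeneralLinearGroup (Fin k) F), Simple V ∧ f = FDRep.character V},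
      χ 1) =
      (Nat.card {M : Matrix.GeneralLinearGroup (Fin k) F //
        (M : Matrix (Fin k) (Fin k) F).transpose = (M : Matrix (Fin k) (Fin k) F)} : ℂ) := by
  classical
  have h := GowAux.count (G := (Matrix (Fin k) (Fin k) F)ˣ) GowAux.gt (GowAux.hasSym_GL k (Fin k) (Fintype.card_fin k))
  refine h.trans ?_
  congr 1
  refine Nat.card_congr (Equiv.subtypeEquivRight fun g => ?_)
  rw [Units.ext_iff, GowAux.gt_val]
end
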